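/- arXiv:1410.7081 — 2 statements merged into one kernel-verified Lean document; each statement's English description precedes it below -/
import Mathlib

section
/- ∫₀¹ k(2-17k²+17k⁴) K(k)⁶ dk = (5715/64)ζ(7). -/
open scoped Real
open MeasureTheory

noncomputable def EllK (k : ℝ) : ℝ :=
  ∫ x in (0:ℝ)..(1:ℝ), 1 / Real.sqrt ((1 - x^2) * (1 - k^2 * x^2))

section EllipticIntegrals

open Set Filter Topology

/-- The complete elliptic integral of the first kind as a function of the parameter `m = k²`. -/
noncomputable def ellipticK (m : ℝ) : ℝ := ∫ θ in (0 : ℝ)..(π / 2), (√(1 - m * Real.sin θ ^ 2))⁻¹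

/-- The complete elliptic integral of the second kind as a function of the parameter `m = k²`. -/
noncomputable def ellipticE (m : ℝ) : ℝ := ∫ θ in (0 : ℝ)..(π / 2), √(1 - m * Real.sin θ ^ 2)

lemma sin_image_Ioo : Real.sin '' Ioo 0 (π / 2) = Ioo 0 1 := by
  ext x
  constructor
  · rintro ⟨θ, ⟨h0, h1⟩, rfl⟩
    refine ⟨Real.sin_pos_of_pos_of_lt_pi h0 (by linarith), ?_⟩
    rw [← Real.sin_pi_div_two]
    exact Real.sin_lt_sin_of_lt_of_le_pi_div_two (by linarith) le_rfl h1
  · rintro ⟨h0, h1⟩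
    exact ⟨Real.arcsin x, ⟨Real.arcsin_pos.2 h0, Real.arcsin_lt_pi_div_two.2 h1⟩,
      Real.sin_arcsin (by linarith) h1.le⟩

lemma EllK_eq_ellipticK (k : ℝ) : EllK k = ellipticK (k ^ 2) := by
  rw [EllK, ellipticK, intervalIntegral.integral_of_le zero_le_one,
    intervalIntegral.integral_of_le Real.pi_div_two_pos.le, integral_Ioc_eq_integral_Ioo,
    integral_Ioc_eq_integral_Ioo, ← sin_image_Ioo,
    integral_image_eq_integral_abs_deriv_smul measurableSet_Ioo
      (fun θ _ ↦ (Real.hasDerivAt_sin θ).hasDerivWithinAt)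
      (Real.injOn_sin.mono (Ioo_subset_Icc_self.trans (Icc_subset_Icc_left
        (by linarith [Real.pi_pos]))))]
  refine setIntegral_congr_fun measurableSet_Ioo fun θ hθ ↦ ?_
  have hc : 0 < Real.cos θ := Real.cos_pos_of_mem_Ioo ⟨by linarith [hθ.1, Real.pi_pos], hθ.2⟩
  have h : 1 - Real.sin θ ^ 2 = Real.cos θ ^ 2 := by linarith [Real.sin_sq_add_cos_sq θ]
  simp only [smul_eq_mul]
  rw [h, Real.sqrt_mul (sq_nonneg _), Real.sqrt_sq hc.le, abs_of_pos hc]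
  field_simp

lemma one_sub_mul_sin_sq_lower {m c : ℝ} (hmc : m ≤ c) (hc : 0 ≤ c) (θ : ℝ) :
    1 - c ≤ 1 - m * Real.sin θ ^ 2 := by
  nlinarith [Real.sin_sq_le_one θ, sq_nonneg (Real.sin θ)]

lemma one_sub_mul_sin_sq_pos {m : ℝ} (hm : m < 1) (θ : ℝ) : 0 < 1 - m * Real.sin θ ^ 2 := by
  rcases le_total 0 m with h | h
  · linarith [one_sub_mul_sin_sq_lower le_rfl h θ]
  · linarith [one_sub_mul_sin_sq_lower h le_rfl θ]

lemma continuous_sqrt_one_sub_mul_sin_sq (m : ℝ) :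
    Continuous fun θ ↦ √(1 - m * Real.sin θ ^ 2) := by fun_prop

lemma continuous_inv_sqrt_one_sub_mul_sin_sq {m : ℝ} (hm : m < 1) :
    Continuous fun θ ↦ (√(1 - m * Real.sin θ ^ 2))⁻¹ :=
  (continuous_sqrt_one_sub_mul_sin_sq m).inv₀
    fun θ ↦ (Real.sqrt_pos.2 (one_sub_mul_sin_sq_pos hm θ)).ne'

lemma ellipticK_pos {m : ℝ} (hm : m < 1) : 0 < ellipticK m :=
  intervalIntegral.intervalIntegral_pos_of_pos
    ((continuous_inv_sqrt_one_sub_mul_sin_sq hm).intervalIntegrable _ _)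
    (fun θ ↦ inv_pos.2 (Real.sqrt_pos.2 (one_sub_mul_sin_sq_pos hm θ))) Real.pi_div_two_pos

lemma hasDerivAt_sqrt_one_sub_mul {s m : ℝ} (h : 0 < 1 - m * s) :
    HasDerivAt (fun x ↦ √(1 - x * s)) (-s / (2 * √(1 - m * s))) m := by
  have := (((hasDerivAt_id m).mul_const s).const_sub 1).sqrt h.ne'
  simpa using this

lemma hasDerivAt_inv_sqrt_one_sub_mul {s m : ℝ} (h : 0 < 1 - m * s) :
    HasDerivAt (fun x ↦ (√(1 - x * s))⁻¹) (s / (2 * √(1 - m * s) ^ 3)) m := by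
  have hs := Real.sqrt_pos.2 h
  have := (hasDerivAt_sqrt_one_sub_mul h).inv hs.ne'
  refine this.congr_deriv ?_
  field_simp

/-- Differentiation under the integral sign on `[0, π/2]` for a jointly continuous derivative. -/
lemma hasDerivAt_integral_of_continuousOn {F F' : ℝ → ℝ → ℝ} {m c : ℝ} (hmc : m < c)
    (hF : ∀ x < c, Continuous (F x)) (hF' : ∀ x < c, Continuous (F' x))
    (hd : ∀ θ, ∀ x < c, HasDerivAt (F · θ) (F' x θ) x)
    {B : ℝ} (hB : ∀ θ, ∀ x < c, m - 1 < x → |F' x θ| ≤ B) :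
    HasDerivAt (fun x ↦ ∫ θ in (0 : ℝ)..(π / 2), F x θ) (∫ θ in (0 : ℝ)..(π / 2), F' m θ) m := by
  refine (intervalIntegral.hasDerivAt_integral_of_dominated_loc_of_deriv_le (bound := fun _ ↦ B)
    (s := Ioo (m - 1) c) (Ioo_mem_nhds (by linarith) hmc) ?_ ((hF m hmc).intervalIntegrable _ _)
    (hF' m hmc).aestronglyMeasurable ?_ (by simp) ?_).2
  · filter_upwards [Iio_mem_nhds hmc] with x hx using (hF x hx).aestronglyMeasurable
  · exact .of_forall fun θ _ x hx ↦ hB θ x hx.2 hx.1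
  · exact .of_forall fun θ _ x hx ↦ hd θ x hx.2

lemma hasDerivAt_ellipticE_integral {m : ℝ} (hm : m < 1) :
    HasDerivAt ellipticE (∫ θ in (0 : ℝ)..(π / 2),
      -Real.sin θ ^ 2 / (2 * √(1 - m * Real.sin θ ^ 2))) m := by
  obtain ⟨c, hmc, hc⟩ := exists_between (max_lt hm zero_lt_one)
  have hc0 : 0 ≤ c := (le_max_right _ _).trans hmc.le
  refine hasDerivAt_integral_of_continuousOn
    (F' := fun x θ ↦ -Real.sin θ ^ 2 / (2 * √(1 - x * Real.sin θ ^ 2)))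
    (B := 1 / (2 * √(1 - c))) ((le_max_left _ _).trans_lt hmc)
    (fun x _ ↦ continuous_sqrt_one_sub_mul_sin_sq x) (fun x hx ↦ ?_)
    (fun θ x hx ↦ hasDerivAt_sqrt_one_sub_mul (one_sub_mul_sin_sq_pos (hx.trans hc) θ))
    fun θ x hx _ ↦ ?_
  · have hp θ := (Real.sqrt_pos.2 (one_sub_mul_sin_sq_pos (hx.trans hc) θ)).ne'
    exact Continuous.div (by fun_prop) (by fun_prop) fun θ ↦ mul_ne_zero two_ne_zero (hp θ)
  · have h1 : 0 < √(1 - c) := Real.sqrt_pos.2 (by linarith)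
    have h2 : √(1 - c) ≤ √(1 - x * Real.sin θ ^ 2) :=
      Real.sqrt_le_sqrt (one_sub_mul_sin_sq_lower hx.le hc0 θ)
    rw [abs_div, abs_neg, abs_of_nonneg (sq_nonneg _), abs_of_pos (by linarith)]
    gcongr
    exact Real.sin_sq_le_one θ

lemma hasDerivAt_ellipticK_integral {m : ℝ} (hm : m < 1) :
    HasDerivAt ellipticK (∫ θ in (0 : ℝ)..(π / 2),
      Real.sin θ ^ 2 / (2 * √(1 - m * Real.sin θ ^ 2) ^ 3)) m := by
  obtain ⟨c, hmc, hc⟩ := exists_between (max_lt hm zero_lt_one)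
  have hc0 : 0 ≤ c := (le_max_right _ _).trans hmc.le
  refine hasDerivAt_integral_of_continuousOn
    (F' := fun x θ ↦ Real.sin θ ^ 2 / (2 * √(1 - x * Real.sin θ ^ 2) ^ 3))
    (B := 1 / (2 * √(1 - c) ^ 3)) ((le_max_left _ _).trans_lt hmc)
    (fun x hx ↦ continuous_inv_sqrt_one_sub_mul_sin_sq (hx.trans hc)) (fun x hx ↦ ?_)
    (fun θ x hx ↦ hasDerivAt_inv_sqrt_one_sub_mul (one_sub_mul_sin_sq_pos (hx.trans hc) θ))
    fun θ x hx _ ↦ ?_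
  · have hp θ := (Real.sqrt_pos.2 (one_sub_mul_sin_sq_pos (hx.trans hc) θ)).ne'
    exact Continuous.div (by fun_prop) (by fun_prop) fun θ ↦ mul_ne_zero two_ne_zero
      (pow_ne_zero _ (hp θ))
  · have h1 : 0 < √(1 - c) := Real.sqrt_pos.2 (by linarith)
    have h2 : √(1 - c) ≤ √(1 - x * Real.sin θ ^ 2) :=
      Real.sqrt_le_sqrt (one_sub_mul_sin_sq_lower hx.le hc0 θ)
    rw [abs_div, abs_of_nonneg (sq_nonneg _), abs_of_pos (by have := h1.trans_le h2; positivity)]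
    gcongr
    exact Real.sin_sq_le_one θ

lemma hasDerivAt_ellipticE {m : ℝ} (h0 : 0 < m) (hm : m < 1) :
    HasDerivAt ellipticE ((ellipticE m - ellipticK m) / (2 * m)) m := by
  convert hasDerivAt_ellipticE_integral hm using 1
  rw [ellipticE, ellipticK, ← intervalIntegral.integral_sub
    ((continuous_sqrt_one_sub_mul_sin_sq m).intervalIntegrable _ _)
    ((continuous_inv_sqrt_one_sub_mul_sin_sq hm).intervalIntegrable _ _),
    ← intervalIntegral.integral_div]
  refine intervalIntegral.integral_congr fun θ _ ↦ ?_
  have hp := one_sub_mul_sin_sq_pos hm θ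
  have hs := Real.sqrt_pos.2 hp
  field_simp
  rw [Real.sq_sqrt hp.le]
  ring

/-- The derivative of `sin θ cos θ / √(1 - m sin² θ)` integrates to zero. -/
lemma integral_inv_sqrt_cube {m : ℝ} (hm : m < 1) :
    (1 - m) * ∫ θ in (0 : ℝ)..(π / 2), (√(1 - m * Real.sin θ ^ 2) ^ 3)⁻¹ = ellipticE m := by
  have hp := one_sub_mul_sin_sq_pos hm
  have hs θ := Real.sqrt_pos.2 (hp θ)
  have hs' θ := (hs θ).ne'
  have hd : ∀ θ : ℝ, HasDerivAt
      (fun θ ↦ m * (Real.sin θ * Real.cos θ / √(1 - m * Real.sin θ ^ 2)))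
      (√(1 - m * Real.sin θ ^ 2) - (1 - m) * (√(1 - m * Real.sin θ ^ 2) ^ 3)⁻¹) θ := by
    intro θ
    have h1 := ((((Real.hasDerivAt_sin θ).pow 2).const_mul m).const_sub 1).sqrt (hp θ).ne'
    have h2 := ((((Real.hasDerivAt_sin θ).mul (Real.hasDerivAt_cos θ)).div h1 (hs' θ)).const_mul m)
    refine h2.congr_deriv ?_
    have hq := Real.sq_sqrt (hp θ).le
    have hcs := Real.sin_sq_add_cos_sq θ
    simp only [Pi.mul_apply, Pi.pow_apply, Nat.cast_ofNat, Nat.add_one_sub_one, pow_one]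
    set r := √(1 - m * Real.sin θ ^ 2)
    have hr : r ≠ 0 := hs' θ
    have hr4 : r ^ 4 = (1 - m * Real.sin θ ^ 2) ^ 2 := by rw [← hq]; ring
    have hc : Real.cos θ ^ 2 = 1 - Real.sin θ ^ 2 := by linarith
    field_simp
    ring_nf
    simp only [hr4, hq, hc]
    ring
  have hcont : Continuous fun θ ↦ (√(1 - m * Real.sin θ ^ 2) ^ 3)⁻¹ := by
    exact Continuous.inv₀ (by fun_prop) fun θ ↦ pow_ne_zero _ (hs' θ)
  have h := intervalIntegral.integral_eq_sub_of_hasDerivAt (a := 0) (b := π / 2)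
    (fun θ _ ↦ hd θ) (Continuous.intervalIntegrable (by fun_prop) _ _)
  rw [intervalIntegral.integral_sub
    ((continuous_sqrt_one_sub_mul_sin_sq m).intervalIntegrable _ _)
    ((hcont.const_mul (1 - m)).intervalIntegrable _ _), intervalIntegral.integral_const_mul] at h
  simp at h
  rw [ellipticE]
  linarith

lemma hasDerivAt_ellipticK {m : ℝ} (h0 : 0 < m) (hm : m < 1) :
    HasDerivAt ellipticK ((ellipticE m - (1 - m) * ellipticK m) / (2 * m * (1 - m))) m := by
  convert hasDerivAt_ellipticK_integral hm using 1
  have hm' : 0 < 1 - m := by linarith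
  have hp := one_sub_mul_sin_sq_pos hm
  have hs θ := Real.sqrt_pos.2 (hp θ)
  have hs' θ := (hs θ).ne'
  have hcont : Continuous fun θ ↦ (√(1 - m * Real.sin θ ^ 2) ^ 3)⁻¹ := by
    exact Continuous.inv₀ (by fun_prop) fun θ ↦ pow_ne_zero _ (hs' θ)
  rw [← integral_inv_sqrt_cube hm, ← mul_sub, mul_comm (2 * m), mul_div_mul_left _ _ hm'.ne',
    ellipticK, ← intervalIntegral.integral_sub (hcont.intervalIntegrable _ _)
    ((continuous_inv_sqrt_one_sub_mul_sin_sq hm).intervalIntegrable _ _),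
    ← intervalIntegral.integral_div]
  refine intervalIntegral.integral_congr fun θ _ ↦ ?_
  have := hs θ
  field_simp
  rw [Real.sq_sqrt (hp θ).le]
  ring

lemma continuous_ellipticE : Continuous ellipticE :=
  intervalIntegral.continuous_parametric_intervalIntegral_of_continuous'
    (f := fun m θ ↦ √(1 - m * Real.sin θ ^ 2)) (by fun_prop) _ _

lemma ellipticE_one : ellipticE 1 = 1 := by
  have : ellipticE 1 = ∫ θ in (0 : ℝ)..(π / 2), Real.cos θ := by
    refine intervalIntegral.integral_congr fun θ hθ ↦ ?_
    rw [uIcc_of_le Real.pi_div_two_pos.le] at hθ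
    have hc : 0 ≤ Real.cos θ := Real.cos_nonneg_of_mem_Icc ⟨by linarith [hθ.1, Real.pi_pos], hθ.2⟩
    simp only [one_mul]
    rw [show 1 - Real.sin θ ^ 2 = Real.cos θ ^ 2 by linarith [Real.sin_sq_add_cos_sq θ],
      Real.sqrt_sq hc]
  simp [this]

lemma ellipticK_zero : ellipticK 0 = π / 2 := by simp [ellipticK]

lemma ellipticK_le {m : ℝ} (h0 : 0 ≤ m) (hm : m < 1) : ellipticK m ≤ π / 2 * (√(1 - m))⁻¹ := by
  have h : ellipticK m ≤ ∫ _ in (0 : ℝ)..(π / 2), (√(1 - m))⁻¹ := by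
    refine intervalIntegral.integral_mono_on Real.pi_div_two_pos.le
      ((continuous_inv_sqrt_one_sub_mul_sin_sq hm).intervalIntegrable _ _) (by simp) fun θ _ ↦ ?_
    have h1 : 0 < √(1 - m) := Real.sqrt_pos.2 (by linarith)
    gcongr
    nlinarith [Real.sin_sq_le_one θ, sq_nonneg (Real.sin θ)]
  simpa using h

lemma abs_ellipticE_sub_ellipticK_le {m : ℝ} (h0 : 0 ≤ m) (hm : m < 1) :
    |ellipticE m - ellipticK m| ≤ m * ellipticK m := by
  have hi1 := (continuous_sqrt_one_sub_mul_sin_sq m).intervalIntegrable (μ := volume) 0 (π / 2)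
  have hi2 := (continuous_inv_sqrt_one_sub_mul_sin_sq hm).intervalIntegrable
    (μ := volume) 0 (π / 2)
  rw [abs_sub_comm, ellipticE, ellipticK, ← intervalIntegral.integral_sub hi2 hi1,
    ← intervalIntegral.integral_const_mul]
  refine (intervalIntegral.abs_integral_le_integral_abs Real.pi_div_two_pos.le).trans
    (intervalIntegral.integral_mono_on Real.pi_div_two_pos.le (hi2.sub hi1).abs
      (hi2.const_mul m) fun θ _ ↦ ?_)
  have hp := one_sub_mul_sin_sq_pos hm θ
  have hs := Real.sqrt_pos.2 hp
  have : (√(1 - m * Real.sin θ ^ 2))⁻¹ - √(1 - m * Real.sin θ ^ 2)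
      = m * Real.sin θ ^ 2 * (√(1 - m * Real.sin θ ^ 2))⁻¹ := by
    field_simp
    rw [Real.sq_sqrt hp.le]
    ring
  rw [this, abs_of_nonneg (by positivity)]
  gcongr
  nlinarith [Real.sin_sq_le_one θ]

/-- Legendre's relation between the complete elliptic integrals. -/
lemma legendre_relation {m : ℝ} (h0 : 0 < m) (hm : m < 1) :
    ellipticE (1 - m) * ellipticK m + ellipticE m * ellipticK (1 - m)
      - ellipticK m * ellipticK (1 - m) = π / 2 := by
  set W : ℝ → ℝ := fun m ↦ ellipticE (1 - m) * ellipticK m + ellipticE m * ellipticK (1 - m)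
      - ellipticK m * ellipticK (1 - m) with hW
  have hd : ∀ x ∈ Ioo (0 : ℝ) 1, HasDerivAt W 0 x := by
    rintro x ⟨hx0, hx1⟩
    have hx1' : 0 < 1 - x := by linarith
    have hK := hasDerivAt_ellipticK hx0 hx1
    have hE := hasDerivAt_ellipticE hx0 hx1
    have hs := (hasDerivAt_id x).const_sub 1
    have hK' := (hasDerivAt_ellipticK (m := 1 - x) hx1' (by linarith)).comp x hs
    have hE' := (hasDerivAt_ellipticE (m := 1 - x) hx1' (by linarith)).comp x hs
    refine (((hE'.mul hK).add (hE.mul hK')).sub (hK.mul hK')).congr_deriv ?_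
    simp only [Function.comp_apply, sub_sub_cancel]
    field_simp
    ring
  have hconst : ∀ x ∈ Ioo (0 : ℝ) 1, W x = W m := fun x hx ↦
    isOpen_Ioo.is_const_of_deriv_eq_zero isPreconnected_Ioo
      (fun z hz ↦ (hd z hz).differentiableAt.differentiableWithinAt)
      (fun z hz ↦ (hd z hz).deriv) hx ⟨h0, hm⟩
  have hlim : Tendsto W (𝓝[>] 0) (𝓝 (π / 2)) := by
    have hK0 : Tendsto ellipticK (𝓝[>] 0) (𝓝 (π / 2)) := by
      rw [← ellipticK_zero]
      exact (hasDerivAt_ellipticK_integral zero_lt_one).continuousAt.tendsto.mono_left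
        nhdsWithin_le_nhds
    have hE1 : Tendsto (fun m ↦ ellipticE (1 - m)) (𝓝[>] 0) (𝓝 1) := by
      have : ContinuousAt (fun m ↦ ellipticE (1 - m)) 0 :=
        (continuous_ellipticE.comp (by fun_prop)).continuousAt
      simpa [ContinuousAt, ellipticE_one] using this.tendsto.mono_left nhdsWithin_le_nhds
    have hr : Tendsto (fun m ↦ (ellipticE m - ellipticK m) * ellipticK (1 - m)) (𝓝[>] 0)
        (𝓝 0) := by
      have hb : Tendsto (fun m ↦ √m * ellipticK m * (π / 2)) (𝓝[>] 0) (𝓝 0) := by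
        have h1 : Tendsto (fun m ↦ √m) (𝓝[>] 0) (𝓝 0) := by
          simpa using (Real.continuous_sqrt.tendsto 0).mono_left nhdsWithin_le_nhds
        simpa using (h1.mul hK0).mul_const (π / 2)
      refine squeeze_zero_norm' ?_ hb
      filter_upwards [Ioo_mem_nhdsGT zero_lt_one] with x hx
      have h1 := abs_ellipticE_sub_ellipticK_le hx.1.le hx.2
      have h2 := ellipticK_le (m := 1 - x) (by linarith [hx.2]) (by linarith [hx.1])
      rw [sub_sub_cancel] at h2
      have h3 := ellipticK_pos (m := 1 - x) (by linarith [hx.1])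
      have h4 := ellipticK_pos hx.2
      rw [norm_mul, Real.norm_eq_abs, Real.norm_eq_abs, abs_of_pos h3]
      have hsx := Real.sqrt_pos.2 hx.1
      calc _ ≤ x * ellipticK x * (π / 2 * (√x)⁻¹) :=
            mul_le_mul h1 h2 h3.le (mul_nonneg hx.1.le h4.le)
        _ = _ := by
            field_simp
            rw [Real.sq_sqrt hx.1.le]
    have h := (hE1.mul hK0).add hr
    simp only [one_mul, add_zero] at h
    exact h.congr fun x ↦ by simp only [hW]; ring
  refine tendsto_nhds_unique (tendsto_const_nhds.congr' ?_) hlim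
  filter_upwards [Ioo_mem_nhdsGT zero_lt_one] with x hx using (hconst x hx).symm

/-- The ratio `K(1 - m) / K(m)` of the elliptic quarter periods. -/
noncomputable def periodRatio (m : ℝ) : ℝ := ellipticK (1 - m) / ellipticK m

lemma hasDerivAt_periodRatio {m : ℝ} (h0 : 0 < m) (hm : m < 1) :
    HasDerivAt periodRatio (-(π / (4 * (m * (1 - m)) * ellipticK m ^ 2))) m := by
  have hm' : 0 < 1 - m := by linarith
  have hs := (hasDerivAt_id m).const_sub 1
  have hK' := (hasDerivAt_ellipticK (m := 1 - m) hm' (by linarith)).comp m hs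
  have hKp := ellipticK_pos hm
  refine (hK'.div (hasDerivAt_ellipticK h0 hm) hKp.ne').congr_deriv ?_
  have hL := legendre_relation h0 hm
  simp only [Function.comp_apply, sub_sub_cancel]
  rw [show π = 2 * (π / 2) by ring, ← hL]
  field_simp
  ring

lemma strictAntiOn_periodRatio : StrictAntiOn periodRatio (Ioo 0 1) := by
  refine strictAntiOn_of_deriv_neg (convex_Ioo 0 1)
    (fun x hx ↦ (hasDerivAt_periodRatio hx.1 hx.2).continuousAt.continuousWithinAt) fun x hx ↦ ?_
  rw [interior_Ioo] at hx
  rw [(hasDerivAt_periodRatio hx.1 hx.2).deriv]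
  have h1 := ellipticK_pos hx.2
  have h2 : 0 < 1 - x := by linarith [hx.2]
  have h3 := hx.1
  have := Real.pi_pos
  rw [neg_lt_zero]
  positivity

end EllipticIntegrals

section WeierstrassP

open Set Filter Topology

namespace PeriodPair

variable (L : PeriodPair)

lemma tendsto_norm_weierstrassP {l : ℂ} (hl : l ∈ L.lattice) :
    Tendsto (fun z ↦ ‖L.weierstrassP z‖) (𝓝[≠] l) atTop := by
  rw [tendsto_norm_atTop_iff_cobounded,
    tendsto_cobounded_iff_meromorphicOrderAt_neg (L.meromorphic_weierstrassP l),
    L.order_weierstrassP l hl]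
  decide

lemma isOpen_compl_lattice : IsOpen (L.latticeᶜ : Set ℂ) := L.isClosed_lattice.isOpen_compl

lemma isPreconnected_compl_lattice : IsPreconnected (L.latticeᶜ : Set ℂ) :=
  have : Countable L.lattice := L.latticeEquivProd.injective.countable
  ((Set.countable_coe_iff.1 this).isConnected_compl_of_one_lt_rank
    (by simp [Complex.rank_real_complex])).isPreconnected

lemma hasDerivAt_weierstrassP {z : ℂ} (hz : z ∉ L.lattice) :
    HasDerivAt L.weierstrassP (L.derivWeierstrassP z) z := by
  rw [← L.deriv_weierstrassP]
  exact (L.differentiableOn_weierstrassP.differentiableAt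
    (L.isOpen_compl_lattice.mem_nhds hz)).hasDerivAt

lemma not_eqOn_derivWeierstrassP_zero : ¬ ∀ z ∉ L.lattice, L.derivWeierstrassP z = 0 := by
  intro h
  have h0 : (0 : ℂ) ∈ L.lattice := zero_mem _
  have hcompl : ∀ᶠ z in 𝓝[≠] (0 : ℂ), z ∉ L.lattice := by
    filter_upwards [nhdsWithin_le_nhds (L.compl_lattice_sdiff_singleton_mem_nhds 0),
      self_mem_nhdsWithin] with z hz hz0 hzL
    exact hz ⟨hzL, hz0⟩
  have hlarge := (L.tendsto_norm_weierstrassP h0).eventually_gt_atTop (1 + ‖L.g₂‖ + ‖L.g₃‖)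
  obtain ⟨z, hz, hzl⟩ := (hcompl.and hlarge).exists
  have hrel := L.derivWeierstrassP_sq z hz
  rw [h z hz] at hrel
  set p := L.weierstrassP z
  have h1 : 4 * p ^ 3 = L.g₂ * p + L.g₃ := by linear_combination -hrel
  have h2 : 4 * ‖p‖ ^ 3 ≤ ‖L.g₂‖ * ‖p‖ + ‖L.g₃‖ := by
    calc 4 * ‖p‖ ^ 3 = ‖4 * p ^ 3‖ := by simp
      _ ≤ _ := by rw [h1]; exact (norm_add_le _ _).trans (by simp)
  have hg2 := norm_nonneg L.g₂
  have hg3 := norm_nonneg L.g₃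
  have hp1 : 1 < ‖p‖ := by linarith
  have h3 : (1 + ‖L.g₂‖ + ‖L.g₃‖) * ‖p‖ ≤ ‖p‖ ^ 3 := by
    have := mul_le_mul_of_nonneg_right hzl.le (norm_nonneg p)
    nlinarith [mul_pos (norm_pos_iff.2 (norm_pos_iff.1 (by linarith : 0 < ‖p‖)))
      (by linarith : 0 < ‖p‖)]
  nlinarith

/-- The second-order differential equation `℘'' = 6 ℘² - g₂ / 2`. -/
lemma hasDerivAt_derivWeierstrassP {z : ℂ} (hz : z ∉ L.lattice) :
    HasDerivAt L.derivWeierstrassP (6 * L.weierstrassP z ^ 2 - L.g₂ / 2) z := by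
  have hd : ∀ w ∉ L.lattice, HasDerivAt L.derivWeierstrassP (deriv L.derivWeierstrassP w) w :=
    fun w hw ↦ (L.differentiableOn_derivWeierstrassP.differentiableAt
      (L.isOpen_compl_lattice.mem_nhds hw)).hasDerivAt
  set F : ℂ → ℂ := fun w ↦ deriv L.derivWeierstrassP w - (6 * L.weierstrassP w ^ 2 - L.g₂ / 2)
    with hF
  have han : AnalyticOnNhd ℂ F L.latticeᶜ := by
    have h1 := L.analyticOnNhd_derivWeierstrassP.deriv
    have h2 := L.analyticOnNhd_weierstrassP
    exact h1.sub ((analyticOnNhd_const.mul (h2.pow 2)).sub analyticOnNhd_const)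
  have hmul : ∀ w ∈ (L.latticeᶜ : Set ℂ), L.derivWeierstrassP w * F w = 0 := by
    intro w hw
    have h1 := (hd w hw).pow 2
    have hp := L.hasDerivAt_weierstrassP hw
    have h2 := (((hp.pow 3).const_mul 4).sub (hp.const_mul L.g₂)).sub_const L.g₃
    have h3 : L.derivWeierstrassP ^ 2 =ᶠ[𝓝 w]
        fun z ↦ 4 * L.weierstrassP z ^ 3 - L.g₂ * L.weierstrassP z - L.g₃ := by
      filter_upwards [L.isOpen_compl_lattice.mem_nhds hw] with z hz
      exact L.derivWeierstrassP_sq z hz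
    have h4 := h1.unique (h2.congr_of_eventuallyEq h3)
    simp only [hF]
    simp at h4
    linear_combination h4 / 2
  have hzero : ∀ w ∈ (L.latticeᶜ : Set ℂ), F w = 0 := by
    refine ((L.analyticOnNhd_derivWeierstrassP.eq_zero_or_eq_zero_of_mul_eq_zero han
      hmul L.isPreconnected_compl_lattice).resolve_left fun h ↦ ?_)
    exact L.not_eqOn_derivWeierstrassP_zero h
  have := hd z hz
  rwa [show deriv L.derivWeierstrassP z = 6 * L.weierstrassP z ^ 2 - L.g₂ / 2 from
    sub_eq_zero.1 (hzero z hz)] at this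

lemma iteratedDeriv_weierstrassP_succ {n : ℕ} {G G' : ℂ → ℂ}
    (h : ∀ z ∉ L.lattice, iteratedDeriv n L.weierstrassP z = G z)
    (hG : ∀ z ∉ L.lattice, HasDerivAt G (G' z) z) :
    ∀ z ∉ L.lattice, iteratedDeriv (n + 1) L.weierstrassP z = G' z := by
  intro z hz
  have : iteratedDeriv n L.weierstrassP =ᶠ[𝓝 z] G := by
    filter_upwards [L.isOpen_compl_lattice.mem_nhds hz] with w hw using h w hw
  rw [iteratedDeriv_succ, this.deriv_eq, (hG z hz).deriv]

lemma iteratedDeriv_six_weierstrassP {z : ℂ} (hz : z ∉ L.lattice) :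
    iteratedDeriv 6 L.weierstrassP z = 720 * L.weierstrassP z * L.derivWeierstrassP z ^ 2 +
      (360 * L.weierstrassP z ^ 2 - 18 * L.g₂) * (6 * L.weierstrassP z ^ 2 - L.g₂ / 2) := by
  have hP {z : ℂ} (hz : z ∉ L.lattice) := L.hasDerivAt_weierstrassP hz
  have hQ {z : ℂ} (hz : z ∉ L.lattice) := L.hasDerivAt_derivWeierstrassP hz
  have h1 := L.iteratedDeriv_weierstrassP_succ (n := 0) (G := L.weierstrassP)
    (G' := L.derivWeierstrassP) (by simp) fun z hz ↦ hP hz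
  have h2 := L.iteratedDeriv_weierstrassP_succ h1 fun z hz ↦ hQ hz
  have h3 := L.iteratedDeriv_weierstrassP_succ h2
    (G' := fun z ↦ 12 * L.weierstrassP z * L.derivWeierstrassP z) fun z hz ↦ by
      refine ((((hP hz).pow 2).const_mul 6).sub_const (L.g₂ / 2)).congr_deriv ?_
      simp; ring
  have h4 := L.iteratedDeriv_weierstrassP_succ h3
    (G' := fun z ↦ 12 * L.derivWeierstrassP z ^ 2
      + 12 * L.weierstrassP z * (6 * L.weierstrassP z ^ 2 - L.g₂ / 2)) fun z hz ↦ by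
      refine (((hP hz).const_mul 12).mul (hQ hz)).congr_deriv ?_
      ring
  have h5 := L.iteratedDeriv_weierstrassP_succ h4
    (G' := fun z ↦ (360 * L.weierstrassP z ^ 2 - 18 * L.g₂) * L.derivWeierstrassP z)
    fun z hz ↦ by
      refine ((((hQ hz).pow 2).const_mul 12).add (((hP hz).const_mul 12).mul
        ((((hP hz).pow 2).const_mul 6).sub_const (L.g₂ / 2)))).congr_deriv ?_
      simp; ring
  have h6 := L.iteratedDeriv_weierstrassP_succ h5
    (G' := fun z ↦ 720 * L.weierstrassP z * L.derivWeierstrassP z ^ 2 +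
      (360 * L.weierstrassP z ^ 2 - 18 * L.g₂) * (6 * L.weierstrassP z ^ 2 - L.g₂ / 2))
    fun z hz ↦ by
      refine (((((hP hz).pow 2).const_mul 360).sub_const (18 * L.g₂)).mul (hQ hz)).congr_deriv ?_
      simp; ring
  exact h6 z hz

lemma iteratedDeriv_weierstrassP_eq_sumInvPow {z : ℂ} (hz : z ∉ L.lattice) {n : ℕ} (hn : n ≠ 0) :
    iteratedDeriv n L.weierstrassP z = (n + 1).factorial * L.sumInvPow z (n + 2) := by
  obtain ⟨r, hr0, hr⟩ := Metric.nhds_basis_closedBall.mem_iff.1 (L.isOpen_compl_lattice.mem_nhds hz)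
  lift r to NNReal using hr0.le
  have h := (L.hasFPowerSeriesOnBall_weierstrassP z r (by exact_mod_cast hr0) hr).hasFPowerSeriesAt
  have h2 := (L.analyticOnNhd_weierstrassP z hz).hasFPowerSeriesAt.eq_formalMultilinearSeries h
  have h3 := congrArg (fun p ↦ p.coeff n) h2
  simp only [FormalMultilinearSeries.coeff_ofScalars, weierstrassPSeries, hn, if_false] at h3
  rw [div_eq_iff (by exact_mod_cast n.factorial_ne_zero)] at h3
  rw [h3, Nat.factorial_succ]
  push_cast
  ring

end PeriodPair

/-- Uniqueness of solutions of an autonomous `C¹` ordinary differential equation. -/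
lemma eqOn_Ico_of_hasDerivAt_autonomous {E : Type*} [NormedAddCommGroup E] [NormedSpace ℝ E]
    {V : E → E} (hV : ContDiff ℝ 1 V) {f g : ℝ → E} {T : ℝ}
    (hf : ∀ t ∈ Ico 0 T, HasDerivAt f (V (f t)) t)
    (hg : ∀ t ∈ Ico 0 T, HasDerivAt g (V (g t)) t)
    (h0 : f 0 = g 0) : EqOn f g (Ico 0 T) := by
  intro t ht
  have hsub : Icc 0 t ⊆ Ico 0 T := fun x hx ↦ ⟨hx.1, hx.2.trans_lt ht.2⟩
  have hfc : ContinuousOn f (Icc 0 t) := fun x hx ↦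
    (hf x (hsub hx)).continuousAt.continuousWithinAt
  have hgc : ContinuousOn g (Icc 0 t) := fun x hx ↦
    (hg x (hsub hx)).continuousAt.continuousWithinAt
  have hs : IsCompact (f '' Icc 0 t ∪ g '' Icc 0 t) :=
    (isCompact_Icc.image_of_continuousOn hfc).union (isCompact_Icc.image_of_continuousOn hgc)
  obtain ⟨K, hK⟩ := hV.locallyLipschitz.locallyLipschitzOn.exists_lipschitzOnWith_of_compact hs
  exact ODE_solution_unique_of_mem_Icc_right (v := fun _ x ↦ V x)
    (s := fun _ ↦ f '' Icc 0 t ∪ g '' Icc 0 t) (fun _ _ ↦ hK) hfc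
    (fun x hx ↦ (hf x (hsub (Ico_subset_Icc_self hx))).hasDerivWithinAt)
    (fun x hx ↦ .inl (mem_image_of_mem f (Ico_subset_Icc_self hx))) hgc
    (fun x hx ↦ (hg x (hsub (Ico_subset_Icc_self hx))).hasDerivWithinAt)
    (fun x hx ↦ .inr (mem_image_of_mem g (Ico_subset_Icc_self hx))) h0 ⟨ht.1, le_rfl⟩

namespace PeriodPair

variable (L : PeriodPair)

lemma contDiff_weierstrass_system (d : ℂ) :
    ContDiff ℝ 1 fun x : ℂ × ℂ ↦ d • (x.2, 6 * x.1 ^ 2 - L.g₂ / 2) := by fun_prop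

lemma hasDerivAt_weierstrassP_line {z d : ℂ} {t : ℝ} (h : z + t * d ∉ L.lattice) :
    HasDerivAt (fun s : ℝ ↦ (L.weierstrassP (z + s * d), L.derivWeierstrassP (z + s * d)))
      (d • (L.derivWeierstrassP (z + t * d), 6 * L.weierstrassP (z + t * d) ^ 2 - L.g₂ / 2)) t := by
  have hl : HasDerivAt (fun s : ℝ ↦ z + s * d) d t := by
    simpa using ((hasDerivAt_id t).ofReal_comp.mul_const d).const_add z
  have h1 := (L.hasDerivAt_weierstrassP h).comp t hl
  have h2 := (L.hasDerivAt_derivWeierstrassP h).comp t hl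
  refine (h1.prodMk h2).congr_deriv ?_
  simp [mul_comm]

lemma tendsto_norm_weierstrassP_line {z d : ℂ} {T : ℝ} (hd : d ≠ 0) (h : z + T * d ∈ L.lattice) :
    Tendsto (fun t : ℝ ↦ ‖L.weierstrassP (z + t * d)‖) (𝓝[<] T) atTop := by
  refine (L.tendsto_norm_weierstrassP h).comp (tendsto_nhdsWithin_iff.2 ⟨?_, ?_⟩)
  · have : Continuous fun t : ℝ ↦ z + t * d := by fun_prop
    exact (this.tendsto T).mono_left nhdsWithin_le_nhds
  · filter_upwards [self_mem_nhdsWithin] with t (ht : t < T)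
    simpa [hd] using ht.ne

/-- If `℘` and `℘'` agree at `z` and `w`, then parallel lines from these points hit poles of `℘`
simultaneously. -/
lemma add_mem_lattice_of_eq {z w d : ℂ} {T : ℝ} (hT : 0 < T) (hd : d ≠ 0)
    (hz : ∀ t ∈ Ico 0 T, z + t * d ∉ L.lattice) (hw : ∀ t ∈ Ico 0 T, w + t * d ∉ L.lattice)
    (h0 : L.weierstrassP z = L.weierstrassP w) (h1 : L.derivWeierstrassP z = L.derivWeierstrassP w)
    (hTz : z + T * d ∈ L.lattice) : w + T * d ∈ L.lattice := by
  by_contra hTw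
  have heq := eqOn_Ico_of_hasDerivAt_autonomous (L.contDiff_weierstrass_system d)
    (fun t ht ↦ L.hasDerivAt_weierstrassP_line (hz t ht))
    (fun t ht ↦ L.hasDerivAt_weierstrassP_line (hw t ht)) (by simp [h0, h1])
  have hlim : Tendsto (fun t : ℝ ↦ ‖L.weierstrassP (w + t * d)‖) (𝓝[<] T)
      (𝓝 ‖L.weierstrassP (w + T * d)‖) :=
    ((L.hasDerivAt_weierstrassP_line hTw).continuousAt.fst.norm.tendsto).mono_left
      nhdsWithin_le_nhds
  refine not_tendsto_nhds_of_tendsto_atTop ((L.tendsto_norm_weierstrassP_line hd hTz).congr' ?_)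
    _ hlim
  filter_upwards [Ioo_mem_nhdsLT hT] with t ht
  exact congrArg (fun x : ℂ × ℂ ↦ ‖x.1‖) (heq ⟨ht.1.le, ht.2⟩)

end PeriodPair

end WeierstrassP

section RectangularLattice

open Set Filter Topology ComplexConjugate

/-- The period pair `(2a, 2bi)` of a rectangular lattice. -/
noncomputable def rectPair {a b : ℝ} (ha : 0 < a) (hb : 0 < b) : PeriodPair where
  ω₁ := 2 * a
  ω₂ := 2 * b * Complex.I
  indep := by
    refine LinearIndependent.pair_iff.2 fun s t h ↦ ?_
    have hre := congrArg Complex.re h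
    have him := congrArg Complex.im h
    simp at hre him
    exact ⟨hre.resolve_right ha.ne', him.resolve_right hb.ne'⟩

variable {a b : ℝ} (ha : 0 < a) (hb : 0 < b)

lemma mem_rectPair_lattice {z : ℂ} :
    z ∈ (rectPair ha hb).lattice ↔ ∃ m n : ℤ, z.re = m * (2 * a) ∧ z.im = n * (2 * b) := by
  rw [PeriodPair.mem_lattice]
  refine exists₂_congr fun m n ↦ ⟨?_, fun ⟨h1, h2⟩ ↦ ?_⟩
  · rintro rfl
    simp [rectPair]
  · apply Complex.ext <;> simp [rectPair, h1, h2]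

lemma notMem_rectPair_lattice_of_re {z : ℂ} (h0 : 0 < z.re) (h1 : z.re < 2 * a) :
    z ∉ (rectPair ha hb).lattice := by
  rw [mem_rectPair_lattice]
  rintro ⟨m, n, hm, -⟩
  rw [hm] at h0 h1
  have h2 : (0 : ℝ) < m := pos_of_mul_pos_left h0 (by linarith)
  have h3 : (m : ℝ) < 1 := by nlinarith
  norm_cast at h2 h3
  omega

lemma notMem_rectPair_lattice_of_im {z : ℂ} (h0 : 0 < z.im) (h1 : z.im < 2 * b) :
    z ∉ (rectPair ha hb).lattice := by
  rw [mem_rectPair_lattice]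
  rintro ⟨m, n, -, hm⟩
  rw [hm] at h0 h1
  have h2 : (0 : ℝ) < n := pos_of_mul_pos_left h0 (by linarith)
  have h3 : (n : ℝ) < 1 := by nlinarith
  norm_cast at h2 h3
  omega

lemma tsum_rectPair_lattice (f : ℂ → ℂ) :
    ∑' l : (rectPair ha hb).lattice, f l
      = ∑' x : ℤ × ℤ, f (x.1 * (2 * a) + x.2 * (2 * b * Complex.I)) := by
  rw [← (rectPair ha hb).latticeEquivProd.symm.toEquiv.tsum_eq]
  refine tsum_congr fun x ↦ congrArg f ?_
  exact (rectPair ha hb).latticeEquiv_symm_apply x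

lemma weierstrassP_conj (z : ℂ) :
    (rectPair ha hb).weierstrassP (conj z) = conj ((rectPair ha hb).weierstrassP z) := by
  simp only [PeriodPair.weierstrassP]
  rw [tsum_rectPair_lattice ha hb fun l ↦ 1 / (conj z - l) ^ 2 - 1 / l ^ 2,
    tsum_rectPair_lattice ha hb fun l ↦ 1 / (z - l) ^ 2 - 1 / l ^ 2, Complex.conj_tsum,
    ← ((Equiv.refl ℤ).prodCongr (Equiv.neg ℤ)).tsum_eq]
  refine tsum_congr fun x ↦ ?_
  simp [map_ofNat]

lemma derivWeierstrassP_conj (z : ℂ) :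
    (rectPair ha hb).derivWeierstrassP (conj z) = conj ((rectPair ha hb).derivWeierstrassP z) := by
  simp only [PeriodPair.derivWeierstrassP]
  rw [tsum_rectPair_lattice ha hb fun l ↦ 2 / (conj z - l) ^ 3,
    tsum_rectPair_lattice ha hb fun l ↦ 2 / (z - l) ^ 3, map_neg, Complex.conj_tsum,
    ← ((Equiv.refl ℤ).prodCongr (Equiv.neg ℤ)).tsum_eq]
  refine congrArg _ (tsum_congr fun x ↦ ?_)
  simp [map_ofNat]

/-- Rotation by a right angle exchanges the sides of a rectangular lattice. -/
lemma weierstrassP_rotate (z : ℂ) :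
    (rectPair hb ha).weierstrassP z = -(rectPair ha hb).weierstrassP (Complex.I * z) := by
  simp only [PeriodPair.weierstrassP]
  rw [tsum_rectPair_lattice hb ha fun l ↦ 1 / (z - l) ^ 2 - 1 / l ^ 2,
    tsum_rectPair_lattice ha hb fun l ↦ 1 / (Complex.I * z - l) ^ 2 - 1 / l ^ 2, ← tsum_neg,
    ← ((Equiv.prodComm ℤ ℤ).trans ((Equiv.refl ℤ).prodCongr (Equiv.neg ℤ))).tsum_eq]
  refine tsum_congr fun x ↦ ?_
  have h (w v : ℂ) (hv : v = Complex.I * w) : 1 / w ^ 2 = -(1 / v ^ 2) := by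
    rw [hv, mul_pow, Complex.I_sq]
    simp [div_neg]
  simp only [Equiv.trans_apply, Equiv.prodComm_apply, Equiv.prodCongr_apply, Prod.map,
    Prod.fst_swap, Prod.snd_swap, Equiv.neg_apply, Equiv.refl_apply, Int.cast_neg]
  have hl : x.1 * (2 * a) + x.2 * (2 * b * Complex.I)
      = Complex.I * (x.2 * (2 * b) + -x.1 * (2 * a * Complex.I)) := by
    linear_combination (x.1 * (2 * a) : ℂ) * Complex.I_sq
  rw [h _ _ rfl, h _ _ hl, mul_sub, ← hl]
  ring

/-- The value of `℘` at the real half period `a`. -/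
noncomputable def e₁ : ℝ := ((rectPair ha hb).weierstrassP a).re

/-- The value of `℘` at the half period `a + bi`. -/
noncomputable def e₂ : ℝ := ((rectPair ha hb).weierstrassP (a + b * Complex.I)).re

/-- The value of `℘` at the imaginary half period `bi`. -/
noncomputable def e₃ : ℝ := ((rectPair ha hb).weierstrassP (b * Complex.I)).re

lemma weierstrassP_ofReal (x : ℝ) :
    (rectPair ha hb).weierstrassP x = ((rectPair ha hb).weierstrassP x).re := by
  rw [eq_comm, ← Complex.conj_eq_iff_re, ← weierstrassP_conj, Complex.conj_ofReal]

lemma derivWeierstrassP_ofReal (x : ℝ) :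
    (rectPair ha hb).derivWeierstrassP x = ((rectPair ha hb).derivWeierstrassP x).re := by
  rw [eq_comm, ← Complex.conj_eq_iff_re, ← derivWeierstrassP_conj, Complex.conj_ofReal]

lemma weierstrassP_e₁ : (rectPair ha hb).weierstrassP a = e₁ ha hb := weierstrassP_ofReal ha hb a

lemma weierstrassP_e₃ : (rectPair ha hb).weierstrassP (b * Complex.I) = e₃ ha hb := by
  rw [eq_comm, e₃, ← Complex.conj_eq_iff_re, ← weierstrassP_conj, map_mul, Complex.conj_ofReal,
    Complex.conj_I, mul_neg, PeriodPair.weierstrassP_neg]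

lemma weierstrassP_e₂ : (rectPair ha hb).weierstrassP (a + b * Complex.I) = e₂ ha hb := by
  rw [eq_comm, e₂, ← Complex.conj_eq_iff_re, ← weierstrassP_conj]
  have h : (2 * b * Complex.I : ℂ) ∈ (rectPair ha hb).lattice :=
    (rectPair ha hb).ω₂_mem_lattice
  rw [← (rectPair ha hb).weierstrassP_add_coe _ ⟨_, h⟩]
  congr 1
  simp
  ring

lemma e₁_swap : e₁ hb ha = -e₃ ha hb := by
  rw [e₁, e₃, weierstrassP_rotate ha hb, mul_comm, Complex.neg_re]

lemma e₃_swap : e₃ hb ha = -e₁ ha hb := by rw [e₁_swap hb ha, neg_neg]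

lemma e₂_swap : e₂ hb ha = -e₂ ha hb := by
  have h : (2 * a : ℂ) ∈ (rectPair ha hb).lattice := (rectPair ha hb).ω₁_mem_lattice
  rw [e₂, e₂, weierstrassP_rotate ha hb, Complex.neg_re,
    ← (rectPair ha hb).weierstrassP_add_coe _ ⟨_, h⟩]
  congr 3
  linear_combination (a : ℂ) * Complex.I_sq

lemma PeriodPair.derivWeierstrassP_eq_zero_of_two_mul_mem (L : PeriodPair) {z : ℂ}
    (h : 2 * z ∈ L.lattice) : L.derivWeierstrassP z = 0 := by
  have h1 := L.derivWeierstrassP_add_coe (-z) ⟨_, h⟩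
  rw [show -z + 2 * z = z by ring, L.derivWeierstrassP_neg] at h1
  exact CharZero.eq_neg_self_iff.1 h1

lemma two_mul_a_mem : (2 * a : ℂ) ∈ (rectPair ha hb).lattice := (rectPair ha hb).ω₁_mem_lattice

lemma two_mul_bI_mem : (2 * (b * Complex.I) : ℂ) ∈ (rectPair ha hb).lattice := by
  rw [← mul_assoc]
  exact (rectPair ha hb).ω₂_mem_lattice

lemma two_mul_a_add_bI_mem : (2 * (a + b * Complex.I) : ℂ) ∈ (rectPair ha hb).lattice := by
  rw [mul_add]
  exact add_mem (two_mul_a_mem ha hb) (two_mul_bI_mem ha hb)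

lemma e₁_ne_e₂ : e₁ ha hb ≠ e₂ ha hb := by
  intro h
  refine notMem_rectPair_lattice_of_im ha hb (z := a + b * Complex.I + (1 : ℝ) * a) ?_ ?_
    ((rectPair ha hb).add_mem_lattice_of_eq (z := a) zero_lt_one (by simpa using ha.ne') ?_ ?_
      ?_ ?_ ?_)
  · simpa using hb
  · simp; linarith
  · intro t ht
    exact notMem_rectPair_lattice_of_re ha hb (by simp; nlinarith [ht.1])
      (by simp; nlinarith [ht.2])
  · intro t ht
    exact notMem_rectPair_lattice_of_im ha hb (by simpa using hb) (by simp; linarith)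
  · rw [weierstrassP_e₁, weierstrassP_e₂, h]
  · rw [PeriodPair.derivWeierstrassP_eq_zero_of_two_mul_mem _ (two_mul_a_mem ha hb),
      PeriodPair.derivWeierstrassP_eq_zero_of_two_mul_mem _ (two_mul_a_add_bI_mem ha hb)]
  · simpa [two_mul] using two_mul_a_mem ha hb

lemma e₁_ne_e₃ : e₁ ha hb ≠ e₃ ha hb := by
  intro h
  refine notMem_rectPair_lattice_of_im ha hb (z := b * Complex.I + (1 : ℝ) * a) ?_ ?_
    ((rectPair ha hb).add_mem_lattice_of_eq (z := a) zero_lt_one (by simpa using ha.ne') ?_ ?_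
      ?_ ?_ ?_)
  · simpa using hb
  · simp; linarith
  · intro t ht
    exact notMem_rectPair_lattice_of_re ha hb (by simp; nlinarith [ht.1])
      (by simp; nlinarith [ht.2])
  · intro t ht
    exact notMem_rectPair_lattice_of_im ha hb (by simpa using hb) (by simp; linarith)
  · rw [weierstrassP_e₁, weierstrassP_e₃, h]
  · rw [PeriodPair.derivWeierstrassP_eq_zero_of_two_mul_mem _ (two_mul_a_mem ha hb),
      PeriodPair.derivWeierstrassP_eq_zero_of_two_mul_mem _ (two_mul_bI_mem ha hb)]
  · simpa [two_mul] using two_mul_a_mem ha hb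

lemma e₂_ne_e₃ : e₂ ha hb ≠ e₃ ha hb := by
  have := e₁_ne_e₂ hb ha
  rw [e₁_swap ha hb, e₂_swap ha hb] at this
  exact fun h ↦ this (by rw [h])

lemma a_notMem : (a : ℂ) ∉ (rectPair ha hb).lattice :=
  notMem_rectPair_lattice_of_re ha hb (by simpa using ha) (by simp; linarith)

lemma bI_notMem : (b * Complex.I : ℂ) ∉ (rectPair ha hb).lattice :=
  notMem_rectPair_lattice_of_im ha hb (by simpa using hb) (by simp; linarith)

lemma a_add_bI_notMem : (a + b * Complex.I : ℂ) ∉ (rectPair ha hb).lattice :=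
  notMem_rectPair_lattice_of_im ha hb (by simpa using hb) (by simp; linarith)

/-- The Weierstrass invariants in terms of the half-period values. -/
lemma rectPair_invariants : e₁ ha hb + e₂ ha hb + e₃ ha hb = 0 ∧
    (rectPair ha hb).g₂ = -(4 * (e₁ ha hb * e₂ ha hb + e₁ ha hb * e₃ ha hb + e₂ ha hb * e₃ ha hb)) ∧
    (rectPair ha hb).g₃ = 4 * (e₁ ha hb * e₂ ha hb * e₃ ha hb) := by
  have h1 := (rectPair ha hb).derivWeierstrassP_sq _ (a_notMem ha hb)
  have h2 := (rectPair ha hb).derivWeierstrassP_sq _ (a_add_bI_notMem ha hb)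
  have h3 := (rectPair ha hb).derivWeierstrassP_sq _ (bI_notMem ha hb)
  rw [PeriodPair.derivWeierstrassP_eq_zero_of_two_mul_mem _ (two_mul_a_mem ha hb),
    weierstrassP_e₁] at h1
  rw [PeriodPair.derivWeierstrassP_eq_zero_of_two_mul_mem _ (two_mul_a_add_bI_mem ha hb),
    weierstrassP_e₂] at h2
  rw [PeriodPair.derivWeierstrassP_eq_zero_of_two_mul_mem _ (two_mul_bI_mem ha hb),
    weierstrassP_e₃] at h3
  have h12 : (e₁ ha hb - e₂ ha hb : ℂ) ≠ 0 := sub_ne_zero.2 (by exact_mod_cast e₁_ne_e₂ ha hb)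
  have h13 : (e₁ ha hb - e₃ ha hb : ℂ) ≠ 0 := sub_ne_zero.2 (by exact_mod_cast e₁_ne_e₃ ha hb)
  have h23 : (e₂ ha hb - e₃ ha hb : ℂ) ≠ 0 := sub_ne_zero.2 (by exact_mod_cast e₂_ne_e₃ ha hb)
  set x : ℂ := ((e₁ ha hb : ℝ) : ℂ) with hx
  set y : ℂ := ((e₂ ha hb : ℝ) : ℂ) with hy
  set z : ℂ := ((e₃ ha hb : ℝ) : ℂ) with hz
  have h4 : 4 * (x ^ 2 + x * y + y ^ 2) = (rectPair ha hb).g₂ :=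
    mul_left_cancel₀ h12 (by linear_combination h2 - h1)
  have h5 : 4 * (x ^ 2 + x * z + z ^ 2) = (rectPair ha hb).g₂ :=
    mul_left_cancel₀ h13 (by linear_combination h3 - h1)
  have h6 : x + y + z = 0 := mul_left_cancel₀ h23 (by linear_combination (h4 - h5) / 4)
  have h7 : z = -x - y := by linear_combination h6
  refine ⟨by rw [hx, hy, hz] at h6; exact_mod_cast h6, ?_, ?_⟩
  · rw [← h4, h7]; ring
  · rw [h7]; linear_combination h1 + x * h4

/-- The restriction of `℘` to the real axis. -/
noncomputable def realP (x : ℝ) : ℝ := ((rectPair ha hb).weierstrassP x).re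

/-- The restriction of `℘'` to the real axis. -/
noncomputable def realP' (x : ℝ) : ℝ := ((rectPair ha hb).derivWeierstrassP x).re

lemma ofReal_notMem {x : ℝ} (h0 : 0 < x) (h1 : x < 2 * a) :
    (x : ℂ) ∉ (rectPair ha hb).lattice :=
  notMem_rectPair_lattice_of_re ha hb (by simpa) (by simpa)

lemma hasDerivAt_realP {x : ℝ} (h0 : 0 < x) (h1 : x < 2 * a) :
    HasDerivAt (realP ha hb) (realP' ha hb x) x :=
  ((rectPair ha hb).hasDerivAt_weierstrassP (ofReal_notMem ha hb h0 h1)).real_of_complex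

lemma continuousAt_realP' {x : ℝ} (h0 : 0 < x) (h1 : x < 2 * a) :
    ContinuousAt (realP' ha hb) x :=
  ((rectPair ha hb).hasDerivAt_derivWeierstrassP
    (ofReal_notMem ha hb h0 h1)).real_of_complex.continuousAt

lemma realP'_sq {x : ℝ} (h0 : 0 < x) (h1 : x < 2 * a) :
    realP' ha hb x ^ 2 = 4 * (realP ha hb x - e₁ ha hb) * (realP ha hb x - e₂ ha hb) *
      (realP ha hb x - e₃ ha hb) := by
  have h := (rectPair ha hb).derivWeierstrassP_sq _ (ofReal_notMem ha hb h0 h1)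
  obtain ⟨h3, h4, h5⟩ := rectPair_invariants ha hb
  rw [derivWeierstrassP_ofReal, weierstrassP_ofReal, h4, h5] at h
  norm_cast at h
  simp only [realP, realP']
  linear_combination h + 4 * ((rectPair ha hb).weierstrassP x).re ^ 2 * h3

lemma realP'_ne_zero {x : ℝ} (h0 : 0 < x) (h1 : x < a) : realP' ha hb x ≠ 0 := by
  intro h
  have h' : (rectPair ha hb).derivWeierstrassP x = 0 := by
    rw [derivWeierstrassP_ofReal]
    exact_mod_cast h
  refine ofReal_notMem ha hb (x := 2 * x) (by linarith) (by linarith) ?_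
  have := (rectPair ha hb).add_mem_lattice_of_eq (z := x) (w := -x) (d := -x) zero_lt_one
    (by simpa using h0.ne') ?_ ?_ ((rectPair ha hb).weierstrassP_neg _).symm
    (by rw [(rectPair ha hb).derivWeierstrassP_neg, h', neg_zero]) (by simp)
  · rw [← neg_mem_iff]
    convert this using 1
    push_cast
    ring
  · intro t ht
    exact notMem_rectPair_lattice_of_re ha hb (by simp; nlinarith [ht.2])
      (by simp; nlinarith [ht.1])
  · intro t ht
    rw [← neg_mem_iff]
    exact notMem_rectPair_lattice_of_re ha hb (by simp; nlinarith [ht.1])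
      (by simp; nlinarith [ht.2])

lemma tendsto_realP_atTop : Tendsto (realP ha hb) (𝓝[>] 0) atTop := by
  set L := rectPair ha hb
  have hE : Tendsto (fun x : ℝ ↦ (L.weierstrassPExcept 0 x).re) (𝓝[>] 0)
      (𝓝 (L.weierstrassPExcept 0 0).re) := by
    have h : ContinuousAt (L.weierstrassPExcept 0) ((0 : ℝ) : ℂ) := by
      simpa using (L.analyticAt_weierstrassPExcept 0).continuousAt
    have h2 := (Complex.continuous_re.continuousAt.comp (h.comp
      Complex.continuous_ofReal.continuousAt)).tendsto.mono_left
      (nhdsWithin_le_nhds (s := Ioi (0 : ℝ)))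
    simpa [Function.comp_def] using h2
  have hx : Tendsto (fun x : ℝ ↦ (x ^ 2)⁻¹) (𝓝[>] 0) atTop := by
    refine Tendsto.inv_tendsto_nhdsGT_zero (tendsto_nhdsWithin_iff.2 ⟨?_, ?_⟩)
    · have : Tendsto (fun x : ℝ ↦ x ^ 2) (𝓝 0) (𝓝 (0 ^ 2)) := (continuous_pow 2).tendsto 0
      simpa using this.mono_left nhdsWithin_le_nhds
    · filter_upwards [self_mem_nhdsWithin] with x (hx : 0 < x)
      exact pow_pos hx 2
  refine (hE.add_atTop hx).congr fun x ↦ ?_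
  have h := L.weierstrassPExcept_add ⟨0, zero_mem _⟩ x
  simp only [sub_zero] at h
  have h0 : (1 / (x : ℂ) ^ 2).re = (x ^ 2)⁻¹ := by
    rw [← one_div]
    norm_cast
  rw [realP, ← h, Complex.add_re, Complex.sub_re, h0]
  simp

lemma realP'_neg {x : ℝ} (h0 : 0 < x) (h1 : x < a) : realP' ha hb x < 0 := by
  by_contra! hx
  have hc : ContinuousOn (realP' ha hb) (Ioo 0 a) := fun y hy ↦
    (continuousAt_realP' ha hb hy.1 (by linarith [hy.2])).continuousWithinAt
  have hpos : ∀ y ∈ Ioo 0 a, 0 < realP' ha hb y := by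
    intro y hy
    by_contra! hy'
    obtain ⟨z, hz, hz0⟩ := isPreconnected_Ioo.intermediate_value hy ⟨h0, h1⟩ hc ⟨hy', hx⟩
    exact realP'_ne_zero ha hb hz.1 hz.2 hz0
  have hmono : StrictMonoOn (realP ha hb) (Ioo 0 a) := by
    refine strictMonoOn_of_deriv_pos (convex_Ioo 0 a) (fun y hy ↦
      (hasDerivAt_realP ha hb hy.1 (by linarith [hy.2])).continuousAt.continuousWithinAt)
      fun y hy ↦ ?_
    rw [interior_Ioo] at hy
    rw [(hasDerivAt_realP ha hb hy.1 (by linarith [hy.2])).deriv]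
    exact hpos y hy
  obtain ⟨y, hy, hyx⟩ := (((tendsto_realP_atTop ha hb).eventually_gt_atTop (realP ha hb x)).and
    (Ioo_mem_nhdsGT h0)).exists
  exact (hmono ⟨hyx.1, hyx.2.trans h1⟩ ⟨h0, h1⟩ hyx.2).not_gt hy

lemma strictAntiOn_realP : StrictAntiOn (realP ha hb) (Ioc 0 a) := by
  refine strictAntiOn_of_deriv_neg (convex_Ioc 0 a) (fun y hy ↦
    (hasDerivAt_realP ha hb hy.1 (by linarith [hy.2])).continuousAt.continuousWithinAt)
    fun y hy ↦ ?_
  rw [interior_Ioc] at hy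
  rw [(hasDerivAt_realP ha hb hy.1 (by linarith [hy.2])).deriv]
  exact realP'_neg ha hb hy.1 hy.2

lemma e₁_lt_realP {x : ℝ} (h0 : 0 < x) (h1 : x < a) : e₁ ha hb < realP ha hb x :=
  strictAntiOn_realP ha hb ⟨h0, h1.le⟩ ⟨ha, le_rfl⟩ h1

lemma exists_realP_eq {t : ℝ} (ht : e₁ ha hb < t) : ∃ x ∈ Ioo 0 a, realP ha hb x = t := by
  obtain ⟨y, hy, hya⟩ := (((tendsto_realP_atTop ha hb).eventually_gt_atTop t).and
    (Ioo_mem_nhdsGT ha)).exists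
  have hc : ContinuousOn (realP ha hb) (Icc y a) := fun z hz ↦
    (hasDerivAt_realP ha hb (hya.1.trans_le hz.1)
      (by linarith [hz.2])).continuousAt.continuousWithinAt
  obtain ⟨x, hx, hxt⟩ := intermediate_value_Ioo' hya.2.le hc ⟨ht, hy⟩
  exact ⟨x, ⟨hya.1.trans hx.1, hx.2⟩, hxt⟩

lemma le_e₁_of_root {t : ℝ} (ht : t = e₂ ha hb ∨ t = e₃ ha hb) : t ≤ e₁ ha hb := by
  by_contra! h
  obtain ⟨x, hx, rfl⟩ := exists_realP_eq ha hb h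
  refine (realP'_neg ha hb hx.1 hx.2).ne (pow_eq_zero_iff two_ne_zero |>.1 ?_)
  rw [realP'_sq ha hb hx.1 (by linarith [hx.2])]
  rcases ht with h | h <;> simp [h]

lemma e₂_lt_e₁ : e₂ ha hb < e₁ ha hb :=
  (le_e₁_of_root ha hb (.inl rfl)).lt_of_ne (e₁_ne_e₂ ha hb).symm

lemma e₃_lt_e₂ : e₃ ha hb < e₂ ha hb := by
  have := e₂_lt_e₁ hb ha
  rw [e₁_swap ha hb, e₂_swap ha hb] at this
  linarith

lemma e₃_lt_e₁ : e₃ ha hb < e₁ ha hb := (e₃_lt_e₂ ha hb).trans (e₂_lt_e₁ ha hb)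

/-- The parameter `m = k²` of the elliptic curve attached to a rectangular lattice. -/
noncomputable def modulus : ℝ := (e₂ ha hb - e₃ ha hb) / (e₁ ha hb - e₃ ha hb)

lemma modulus_pos : 0 < modulus ha hb :=
  div_pos (sub_pos.2 (e₃_lt_e₂ ha hb)) (sub_pos.2 (e₃_lt_e₁ ha hb))

lemma modulus_swap : modulus hb ha = 1 - modulus ha hb := by
  have h := sub_pos.2 (e₃_lt_e₁ ha hb)
  rw [modulus, modulus, e₁_swap, e₂_swap ha hb, e₃_swap, eq_sub_iff_add_eq,
    show -e₃ ha hb - -e₁ ha hb = e₁ ha hb - e₃ ha hb by ring, ← add_div,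
    div_eq_one_iff_eq h.ne']
  ring

lemma modulus_lt_one : modulus ha hb < 1 := by
  have := modulus_pos hb ha
  rw [modulus_swap ha hb] at this
  linarith

/-- The substitution `s = √((e₁ - e₃) / (℘ - e₃))`, that is `s = sn`. -/
noncomputable def realSn (x : ℝ) : ℝ := √((e₁ ha hb - e₃ ha hb) / (realP ha hb x - e₃ ha hb))

lemma realSn_sq {x : ℝ} (h0 : 0 < x) (h1 : x < a) :
    realSn ha hb x ^ 2 = (e₁ ha hb - e₃ ha hb) / (realP ha hb x - e₃ ha hb) :=
  Real.sq_sqrt (div_pos (sub_pos.2 (e₃_lt_e₁ ha hb))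
    (by linarith [e₃_lt_e₁ ha hb, e₁_lt_realP ha hb h0 h1])).le

lemma realSn_image : realSn ha hb '' Ioo 0 a = Ioo 0 1 := by
  have hu := sub_pos.2 (e₃_lt_e₁ ha hb)
  ext s
  constructor
  · rintro ⟨x, hx, rfl⟩
    have h := e₁_lt_realP ha hb hx.1 hx.2
    have hd : 0 < realP ha hb x - e₃ ha hb := by linarith
    refine ⟨Real.sqrt_pos.2 (div_pos hu hd), ?_⟩
    rw [realSn, Real.sqrt_lt' one_pos, one_pow, div_lt_one hd]
    linarith
  · rintro ⟨h0, h1⟩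
    have hs : 0 < s ^ 2 := pow_pos h0 2
    have hs1 : s ^ 2 < 1 := by nlinarith
    obtain ⟨x, hx, hxt⟩ := exists_realP_eq ha hb
      (t := e₃ ha hb + (e₁ ha hb - e₃ ha hb) / s ^ 2) (by
        have := (lt_div_iff₀ hs).2 (mul_lt_of_lt_one_right hu hs1)
        linarith)
    refine ⟨x, hx, ?_⟩
    rw [realSn, hxt, add_sub_cancel_left, div_div_cancel₀ hu.ne', Real.sqrt_sq h0.le]

lemma realSn_injOn : InjOn (realSn ha hb) (Ioo 0 a) := by
  intro x hx y hy h
  have hu := sub_pos.2 (e₃_lt_e₁ ha hb)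
  refine (strictAntiOn_realP ha hb).injOn ⟨hx.1, hx.2.le⟩ ⟨hy.1, hy.2.le⟩ ?_
  have h2 : realSn ha hb x ^ 2 = realSn ha hb y ^ 2 := by rw [h]
  rw [realSn_sq ha hb hx.1 hx.2, realSn_sq ha hb hy.1 hy.2, div_eq_mul_inv, div_eq_mul_inv,
    mul_right_inj' hu.ne', inv_inj] at h2
  linarith

lemma hasDerivAt_realSn {x : ℝ} (h0 : 0 < x) (h1 : x < a) :
    ∃ d, HasDerivAt (realSn ha hb) d x ∧ |d| = √(e₁ ha hb - e₃ ha hb) *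
      √((1 - realSn ha hb x ^ 2) * (1 - modulus ha hb * realSn ha hb x ^ 2)) := by
  have hu := sub_pos.2 (e₃_lt_e₁ ha hb)
  have hd : 0 < realP ha hb x - e₃ ha hb := by
    linarith [e₃_lt_e₁ ha hb, e₁_lt_realP ha hb h0 h1]
  have h2 : x < 2 * a := by linarith
  have hS : realSn ha hb = fun y ↦
      √((e₁ ha hb - e₃ ha hb) * (realP ha hb y - e₃ ha hb)⁻¹) := by
    ext y
    rw [realSn, div_eq_mul_inv]
  have hq : (e₁ ha hb - e₃ ha hb) * (realP ha hb x - e₃ ha hb)⁻¹ ≠ 0 := by positivity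
  have hD : HasDerivAt (realSn ha hb) ((e₁ ha hb - e₃ ha hb) *
      (-realP' ha hb x / (realP ha hb x - e₃ ha hb) ^ 2) / (2 * realSn ha hb x)) x := by
    rw [hS]
    exact ((((hasDerivAt_realP ha hb h0 h2).sub_const (e₃ ha hb)).fun_inv hd.ne').const_mul
      (e₁ ha hb - e₃ ha hb)).sqrt hq
  refine ⟨_, hD, ?_⟩
  rw [← Real.sqrt_mul hu.le, ← Real.sqrt_sq_eq_abs]
  congr 1
  rw [div_pow, mul_pow, div_pow, neg_sq, mul_pow, realSn_sq ha hb h0 h1,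
    realP'_sq ha hb h0 h2, modulus]
  field_simp
  ring

lemma ellipticK_modulus : ellipticK (modulus ha hb) = a * √(e₁ ha hb - e₃ ha hb) := by
  have hu := sub_pos.2 (e₃_lt_e₁ ha hb)
  have hD (x : ℝ) : ∃ d, x ∈ Ioo 0 a → HasDerivAt (realSn ha hb) d x ∧
      |d| = √(e₁ ha hb - e₃ ha hb) *
        √((1 - realSn ha hb x ^ 2) * (1 - modulus ha hb * realSn ha hb x ^ 2)) := by
    by_cases hx : x ∈ Ioo 0 a
    · obtain ⟨d, hd⟩ := hasDerivAt_realSn ha hb hx.1 hx.2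
      exact ⟨d, fun _ ↦ hd⟩
    · exact ⟨0, fun h ↦ absurd h hx⟩
  choose d hd using hD
  rw [← Real.sq_sqrt (modulus_pos ha hb).le, ← EllK_eq_ellipticK, EllK,
    intervalIntegral.integral_of_le zero_le_one, integral_Ioc_eq_integral_Ioo,
    Real.sq_sqrt (modulus_pos ha hb).le, ← realSn_image ha hb,
    integral_image_eq_integral_abs_deriv_smul measurableSet_Ioo
      (fun x hx ↦ (hd x hx).1.hasDerivWithinAt) (realSn_injOn ha hb)]
  rw [setIntegral_congr_fun (g := fun _ ↦ √(e₁ ha hb - e₃ ha hb)) measurableSet_Ioo]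
  · simp [ha.le]
  · intro x hx
    have hs : realSn ha hb x ∈ Ioo 0 1 := realSn_image ha hb ▸ mem_image_of_mem _ hx
    have hs1 : realSn ha hb x ^ 2 < 1 := by nlinarith [hs.1, hs.2]
    have hs2 : modulus ha hb * realSn ha hb x ^ 2 < 1 := by
      nlinarith [modulus_pos ha hb, modulus_lt_one ha hb, sq_nonneg (realSn ha hb x)]
    have hQ : 0 < √((1 - realSn ha hb x ^ 2) * (1 - modulus ha hb * realSn ha hb x ^ 2)) :=
      Real.sqrt_pos.2 (mul_pos (sub_pos.2 hs1) (sub_pos.2 hs2))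
    simp only [smul_eq_mul, (hd x hx).2]
    rw [mul_one_div, mul_div_cancel_right₀ _ hQ.ne']

lemma periodRatio_modulus : periodRatio (modulus ha hb) = b / a := by
  have hu := Real.sqrt_pos.2 (sub_pos.2 (e₃_lt_e₁ ha hb))
  rw [periodRatio, ← modulus_swap ha hb, ellipticK_modulus, ellipticK_modulus, e₁_swap ha hb,
    e₃_swap ha hb,
    show -e₃ ha hb - -e₁ ha hb = e₁ ha hb - e₃ ha hb by ring]
  field_simp

end RectangularLattice

/-- The lattice sum `∑ ((2p+1) + (2q+1)iy)⁻⁸`. -/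
noncomputable def oddLatticeSum (y : ℝ) : ℂ :=
  ∑' x : ℤ × ℤ, (((2 * x.1 + 1) + (2 * x.2 + 1) * (y * Complex.I) : ℂ) ^ 8)⁻¹

lemma hasSum_oddLatticeSum {y : ℝ} (hy : 0 < y) :
    HasSum (fun x : ℤ × ℤ ↦ (((2 * x.1 + 1) + (2 * x.2 + 1) * (y * Complex.I) : ℂ) ^ 8)⁻¹)
      ((rectPair one_pos hy).sumInvPow ((1 : ℝ) + y * Complex.I) 8) := by
  have h := (rectPair one_pos hy).hasSum_sumInvPow ((1 : ℝ) + y * Complex.I)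
    (show 2 < 8 by norm_num)
  rw [← ((Equiv.addRight (1 : ℤ)).prodCongr (Equiv.addRight (1 : ℤ)) |>.trans
    (rectPair one_pos hy).latticeEquivProd.symm.toEquiv).hasSum_iff] at h
  refine h.congr_fun fun x ↦ ?_
  have hx := (rectPair one_pos hy).latticeEquiv_symm_apply (x.1 + 1, x.2 + 1)
  simp only [Function.comp_apply, Equiv.trans_apply, Equiv.prodCongr_apply, Prod.map,
    Equiv.coe_addRight]
  erw [hx]
  simp only [rectPair]
  push_cast
  congr 2
  ring

lemma sumInvPow_rectPair_one {y : ℝ} (hy : 0 < y) :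
    (rectPair one_pos hy).sumInvPow ((1 : ℝ) + y * Complex.I) 8 = oddLatticeSum y :=
  (hasSum_oddLatticeSum hy).tsum_eq.symm

lemma oddLatticeSum_periodRatio {m : ℝ} (hm : m ∈ Set.Ioo 0 1) :
    5040 * oddLatticeSum (periodRatio m) =
      ((-16 * (m * (1 - m)) * (2 - 17 * (m * (1 - m))) * ellipticK m ^ 8 : ℝ) : ℂ) := by
  have hy : 0 < periodRatio m :=
    div_pos (ellipticK_pos (by linarith [hm.1])) (ellipticK_pos hm.2)
  generalize hy' : periodRatio m = y at hy
  have h1 : m = modulus one_pos hy := by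
    refine strictAntiOn_periodRatio.injOn hm ⟨modulus_pos _ _, modulus_lt_one _ _⟩ ?_
    rw [hy', periodRatio_modulus, div_one]
  have hu := sub_pos.2 (e₃_lt_e₁ one_pos hy)
  have hK : ellipticK m ^ 8 = (e₁ one_pos hy - e₃ one_pos hy) ^ 4 := by
    rw [h1, ellipticK_modulus, one_mul, show 8 = 2 * 4 from rfl, pow_mul, Real.sq_sqrt hu.le]
  have hz := a_add_bI_notMem one_pos hy
  have h6 := (rectPair one_pos hy).iteratedDeriv_six_weierstrassP hz
  rw [(rectPair one_pos hy).iteratedDeriv_weierstrassP_eq_sumInvPow hz (by norm_num),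
    sumInvPow_rectPair_one, weierstrassP_e₂,
    PeriodPair.derivWeierstrassP_eq_zero_of_two_mul_mem _ (two_mul_a_add_bI_mem one_pos hy)] at h6
  obtain ⟨h3, h4, -⟩ := rectPair_invariants one_pos hy
  have h7 : 5040 * oddLatticeSum y = ((6 + 1).factorial : ℂ) * oddLatticeSum y := by
    norm_num [Nat.factorial]
  rw [h7, h6, h4, hK, h1, modulus]
  have hu' : ((e₁ one_pos hy : ℝ) : ℂ) - (e₃ one_pos hy : ℝ) ≠ 0 := by exact_mod_cast hu.ne'
  have h8 : ((e₂ one_pos hy : ℝ) : ℂ) = -(e₁ one_pos hy : ℝ) - (e₃ one_pos hy : ℝ) := by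
    rw [eq_neg_of_add_eq_zero_left (by linear_combination h3 :
      e₂ one_pos hy + (e₁ one_pos hy + e₃ one_pos hy) = 0)]
    push_cast
    ring
  push_cast
  rw [h8]
  field_simp
  ring

section Logistic

open Set Filter Topology Polynomial Asymptotics

/-- The polynomials expressing the derivatives of the logistic function through itself. -/
noncomputable def logisticPoly : ℕ → ℝ[X]
  | 0 => X
  | k + 1 => X * (1 - X) * derivative (logisticPoly k)

lemma X_dvd_logisticPoly (k : ℕ) : X ∣ logisticPoly k := by
  cases k with
  | zero => exact dvd_rfl
  | succ k => exact (dvd_mul_right _ _).mul_right _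

/-- The logistic function with rate `-π`. -/
noncomputable def fermi (y : ℝ) : ℝ := (Real.exp (π * y) + 1)⁻¹

lemma hasDerivAt_fermi (y : ℝ) : HasDerivAt fermi (-π * (fermi y * (1 - fermi y))) y := by
  have h0 : Real.exp (π * y) + 1 ≠ 0 := by positivity
  have h := ((((hasDerivAt_id y).const_mul π).exp).add_const 1).fun_inv h0
  refine h.congr_deriv ?_
  simp only [fermi, id]
  field_simp
  ring

lemma hasDerivAt_logisticPoly_fermi (k : ℕ) (y : ℝ) :
    HasDerivAt (fun y ↦ (logisticPoly k).eval (fermi y))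
      (-π * (logisticPoly (k + 1)).eval (fermi y)) y := by
  refine (((logisticPoly k).hasDerivAt (fermi y)).comp y (hasDerivAt_fermi y)).congr_deriv ?_
  simp [logisticPoly]
  ring

lemma continuous_logisticPoly_fermi (k : ℕ) :
    Continuous fun y ↦ (logisticPoly k).eval (fermi y) :=
  continuous_iff_continuousAt.2 fun y ↦ (hasDerivAt_logisticPoly_fermi k y).continuousAt

lemma pow_mul_logisticPoly_fermi_isBigO (j k : ℕ) :
    (fun y ↦ y ^ j * (logisticPoly k).eval (fermi y)) =O[atTop] fun y ↦ Real.exp (-1 * y) := by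
  obtain ⟨q, hq⟩ := X_dvd_logisticPoly k
  have h1 : fermi =O[atTop] fun y ↦ Real.exp (-2 * y) := by
    refine IsBigO.of_bound 1 ?_
    filter_upwards [eventually_ge_atTop 0] with y hy
    rw [one_mul, Real.norm_of_nonneg (by rw [fermi]; positivity),
      Real.norm_of_nonneg (Real.exp_pos _).le, fermi, neg_mul, Real.exp_neg]
    gcongr
    have : Real.exp (2 * y) ≤ Real.exp (π * y) := by
      gcongr
      linarith [Real.pi_gt_three]
    linarith
  have h2 : (fun y ↦ q.eval (fermi y)) =O[atTop] fun _ ↦ (1 : ℝ) := by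
    have h0 : Tendsto (fun y : ℝ ↦ Real.exp (-2 * y)) atTop (𝓝 0) :=
      Real.tendsto_exp_atBot.comp (tendsto_id.const_mul_atTop_of_neg (by norm_num))
    exact ((q.continuous.tendsto 0).comp (h1.trans_tendsto h0)).isBigO_one ℝ
  have h3 := ((isLittleO_pow_exp_pos_mul_atTop j one_pos).isBigO.mul h1).mul h2
  refine (h3.congr_left fun y ↦ ?_).congr_right fun y ↦ ?_
  · simp [hq, mul_assoc]
  · rw [mul_one, ← Real.exp_add]
    ring_nf

lemma tendsto_pow_mul_logisticPoly_fermi (j k : ℕ) :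
    Tendsto (fun y ↦ y ^ j * (logisticPoly k).eval (fermi y)) atTop (𝓝 0) :=
  (pow_mul_logisticPoly_fermi_isBigO j k).trans_tendsto
    (Real.tendsto_exp_atBot.comp (tendsto_id.const_mul_atTop_of_neg (by norm_num)))

lemma integrableOn_pow_mul_logisticPoly_fermi (j k : ℕ) :
    IntegrableOn (fun y ↦ y ^ j * (logisticPoly k).eval (fermi y)) (Ioi 0) :=
  integrable_of_isBigO_exp_neg one_pos
    ((continuous_pow j).mul (continuous_logisticPoly_fermi k)).continuousOn
    (pow_mul_logisticPoly_fermi_isBigO j k)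

lemma integral_logisticPoly_one_fermi :
    ∫ y in Ioi (0 : ℝ), (logisticPoly 1).eval (fermi y) = 1 / (2 * π) := by
  have hi : IntegrableOn (fun y ↦ -π * (logisticPoly (0 + 1)).eval (fermi y)) (Ioi 0) := by
    simpa [IntegrableOn] using (integrableOn_pow_mul_logisticPoly_fermi 0 1).const_mul (-π)
  have h := integral_Ioi_of_hasDerivAt_of_tendsto (a := 0) (m := 0)
    (continuous_logisticPoly_fermi 0).continuousWithinAt
    (fun y _ ↦ hasDerivAt_logisticPoly_fermi 0 y) hi
    (by simpa using tendsto_pow_mul_logisticPoly_fermi 0 0)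
  rw [integral_const_mul] at h
  have h0 : (logisticPoly 0).eval (fermi 0) = 1 / 2 := by norm_num [logisticPoly, fermi]
  rw [h0] at h
  field_simp
  linear_combination -2 * h

lemma integral_pow_succ_mul_logisticPoly_fermi (j k : ℕ) :
    ∫ y in Ioi (0 : ℝ), y ^ (j + 1) * (logisticPoly (k + 1)).eval (fermi y) =
      (j + 1) / π * ∫ y in Ioi (0 : ℝ), y ^ j * (logisticPoly k).eval (fermi y) := by
  have hd (y : ℝ) : HasDerivAt (fun y ↦ y ^ (j + 1) * (logisticPoly k).eval (fermi y))
      ((j + 1) * (y ^ j * (logisticPoly k).eval (fermi y)) -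
        π * (y ^ (j + 1) * (logisticPoly (k + 1)).eval (fermi y))) y := by
    refine ((hasDerivAt_pow (j + 1) y).mul (hasDerivAt_logisticPoly_fermi k y)).congr_deriv ?_
    simp
    ring
  have hi1 := (integrableOn_pow_mul_logisticPoly_fermi j k).const_mul ((j : ℝ) + 1)
  have hi2 := (integrableOn_pow_mul_logisticPoly_fermi (j + 1) (k + 1)).const_mul π
  have h := integral_Ioi_of_hasDerivAt_of_tendsto (a := 0) (m := 0)
    (hd 0).continuousAt.continuousWithinAt (fun y _ ↦ hd y) (hi1.sub hi2)
    (tendsto_pow_mul_logisticPoly_fermi (j + 1) k)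
  rw [integral_sub hi1 hi2, integral_const_mul, integral_const_mul] at h
  simp at h
  field_simp
  linarith

lemma integral_pow_six_mul_logisticPoly_fermi :
    ∫ y in Ioi (0 : ℝ), y ^ 6 * (logisticPoly 7).eval (fermi y) = 360 / π ^ 7 := by
  simp only [integral_pow_succ_mul_logisticPoly_fermi, pow_zero, one_mul,
    integral_logisticPoly_one_fermi]
  field_simp
  norm_num

end Logistic

section Cotangent

open Complex Set Polynomial

open UpperHalfPlane hiding I

/-- The function `e^{2πiz} / (e^{2πiz} - 1)`. -/
noncomputable def expRatio (z : ℂ) : ℂ := cexp (2 * π * I * z) / (cexp (2 * π * I * z) - 1)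

lemma exp_two_pi_I_mul_sub_one_ne_zero {z : ℂ} (hz : z ∈ upperHalfPlaneSet) :
    cexp (2 * π * I * z) - 1 ≠ 0 := by
  intro h
  have := UpperHalfPlane.norm_exp_two_pi_I_lt_one ⟨z, hz⟩
  rw [show cexp (2 * π * I * (⟨z, hz⟩ : UpperHalfPlane)) = 1 from sub_eq_zero.1 h] at this
  simp at this

lemma hasDerivAt_expRatio {z : ℂ} (hz : z ∈ upperHalfPlaneSet) :
    HasDerivAt expRatio (2 * π * I * (expRatio z * (1 - expRatio z))) z := by
  have h0 := exp_two_pi_I_mul_sub_one_ne_zero hz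
  have h := ((hasDerivAt_id z).const_mul (2 * π * I)).cexp
  refine (h.fun_div (h.sub_const 1) h0).congr_deriv ?_
  simp only [expRatio, id]
  field_simp

lemma pi_mul_cot_eq_expRatio {z : ℂ} (hz : z ∈ upperHalfPlaneSet) :
    π * cot (π * z) = -π * I + 2 * π * I * expRatio z := by
  have h0 := exp_two_pi_I_mul_sub_one_ne_zero hz
  have h1 : 1 - cexp (2 * π * I * z) ≠ 0 := fun h ↦ h0 (by linear_combination -h)
  rw [cot_pi_eq_exp_ratio, expRatio, mul_comm I (1 - _), ← div_div, div_I,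
    ← neg_sub 1 (cexp _), div_neg]
  generalize cexp (2 * π * I * z) = w at h1
  field_simp
  ring

lemma iteratedDerivWithin_cot_eq_logisticPoly (k : ℕ) :
    EqOn (iteratedDerivWithin (k + 1) (fun z : ℂ ↦ π * cot (π * z)) upperHalfPlaneSet)
      (fun z ↦ (2 * π * I) ^ (k + 2) * aeval (expRatio z) (logisticPoly (k + 1)))
      upperHalfPlaneSet := by
  have hU : UniqueDiffOn ℂ upperHalfPlaneSet := isOpen_upperHalfPlaneSet.uniqueDiffOn
  induction k with
  | zero =>
    intro z hz
    rw [iteratedDerivWithin_one, derivWithin_congr (fun w hw ↦ pi_mul_cot_eq_expRatio hw)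
      (pi_mul_cot_eq_expRatio hz), (((hasDerivAt_expRatio hz).const_mul (2 * π * I)).const_add
      (-π * I)).hasDerivWithinAt.derivWithin (hU z hz)]
    simp [logisticPoly]
    ring
  | succ k ih =>
    intro z hz
    have h := (((logisticPoly (k + 1)).hasDerivAt_aeval (expRatio z)).comp z
      (hasDerivAt_expRatio hz)).const_mul ((2 * π * I) ^ (k + 2))
    rw [iteratedDerivWithin_succ, derivWithin_congr ih (ih hz)]
    refine (h.hasDerivWithinAt.derivWithin (hU z hz)).trans ?_
    rw [show logisticPoly (k + 1 + 1) = X * (1 - X) * derivative (logisticPoly (k + 1)) from rfl]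
    simp
    ring

lemma expRatio_half (y : ℝ) : expRatio ((1 + y * I) / 2) = fermi y := by
  have h : cexp (2 * π * I * ((1 + y * I) / 2)) = -((Real.exp (π * y) : ℝ) : ℂ)⁻¹ := by
    rw [show 2 * π * I * ((1 + y * I) / 2) = π * I + -((π * y : ℝ) : ℂ) by
      push_cast
      linear_combination (π * y : ℂ) * I_sq, Complex.exp_add, exp_pi_mul_I, Complex.exp_neg,
      Complex.ofReal_exp]
    ring
  have h1 := Real.exp_pos (π * y)
  rw [expRatio, h, fermi]
  norm_cast
  have h2 : -1 - Real.exp (π * y) ≠ 0 := by linarith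
  field_simp
  ring

lemma tsum_odd_add_pow_eight {y : ℝ} (hy : 0 < y) :
    ∑' p : ℤ, ((2 * p + 1 + y * I) ^ 8)⁻¹ =
      ((-(π ^ 8 / 5040) * (logisticPoly 7).eval (fermi y) : ℝ) : ℂ) := by
  have hz : (1 + y * I) / 2 ∈ upperHalfPlaneSet := by
    simpa [upperHalfPlaneSet] using hy
  have h1 := iteratedDerivWithin_cot_eq_logisticPoly 6 hz
  rw [iteratedDerivWithin_cot_pi_mul_eq_mul_tsum_div_pow (by norm_num) hz] at h1
  have h2 (p : ℤ) : 1 / ((1 + y * I) / 2 + p) ^ (6 + 1 + 1) =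
      256 * ((2 * p + 1 + y * I) ^ 8)⁻¹ := by
    rw [show (1 + y * I) / 2 + p = (2 * p + 1 + y * I) / 2 by ring, div_pow]
    norm_num
    ring
  simp only [h2, tsum_mul_left, expRatio_half] at h1
  have h3 := Polynomial.aeval_algebraMap_apply ℂ (fermi y) (logisticPoly 7)
  simp only [coe_algebraMap, coe_aeval_eq_eval] at h3
  rw [h3] at h1
  push_cast
  norm_num [Nat.factorial, mul_pow, show I ^ 8 = 1 by rw [show 8 = 4 * 2 from rfl, pow_mul]; simp]
    at h1
  linear_combination (-1 / (5040 * 256)) * h1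

end Cotangent

lemma oddLatticeSum_eq_tsum_logisticPoly {y : ℝ} (hy : 0 < y) :
    oddLatticeSum y =
      ((-(π ^ 8 / 2520) * ∑' q : ℕ, (logisticPoly 7).eval (fermi ((2 * q + 1) * y)) : ℝ) : ℂ) := by
  have hs := (hasSum_oddLatticeSum hy).summable.prod_symm
  obtain ⟨F, hF⟩ : ∃ F : ℤ → ℂ, ∀ q, F q =
    ∑' p : ℤ, (((2 * p + 1) + (2 * q + 1) * (y * Complex.I) : ℂ) ^ 8)⁻¹ := ⟨_, fun _ ↦ rfl⟩
  have hp : Summable F := hs.prod.congr fun q ↦ (hF q).symm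
  have hq (q : ℕ) : F q =
      ((-(π ^ 8 / 5040) * (logisticPoly 7).eval (fermi ((2 * q + 1) * y)) : ℝ) : ℂ) := by
    rw [hF, ← tsum_odd_add_pow_eight (by positivity)]
    refine tsum_congr fun p ↦ congrArg (fun z : ℂ ↦ (z ^ 8)⁻¹) ?_
    push_cast
    ring
  have hq' (q : ℕ) : F (-(q + 1)) =
      ((-(π ^ 8 / 5040) * (logisticPoly 7).eval (fermi ((2 * q + 1) * y)) : ℝ) : ℂ) := by
    rw [← hq q, hF, hF, ← (Equiv.subLeft (-1 : ℤ)).tsum_eq]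
    refine tsum_congr fun p ↦ ?_
    rw [← Even.neg_pow (by decide : Even 8)]
    refine congrArg (fun z : ℂ ↦ (z ^ 8)⁻¹) ?_
    rw [Equiv.subLeft_apply]
    push_cast
    ring
  rw [oddLatticeSum, ← (Equiv.prodComm ℤ ℤ).tsum_eq]
  refine hs.tsum_prod.trans ((tsum_congr fun q ↦ (hF q).symm).trans ?_)
  rw [tsum_of_nat_of_neg_add_one (hp.comp_injective Nat.cast_injective)
    (hp.comp_injective (i := fun n : ℕ ↦ (-(n + 1) : ℤ)) fun a b h ↦ by simpa using h)]
  simp only [hq, hq', ← Complex.ofReal_tsum, tsum_mul_left]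
  push_cast
  ring

lemma integral_tsum_logisticPoly_fermi :
    ∫ y in Set.Ioi (0 : ℝ), y ^ 6 * ∑' q : ℕ, (logisticPoly 7).eval (fermi ((2 * q + 1) * y)) =
      360 / π ^ 7 * ∑' q : ℕ, 1 / (2 * q + 1 : ℝ) ^ 7 := by
  have hc (q : ℕ) : (0 : ℝ) < 2 * q + 1 := by positivity
  have hscale (g : ℝ → ℝ) (q : ℕ) : ∫ y in Set.Ioi (0 : ℝ), y ^ 6 * g ((2 * q + 1) * y) =
      (∫ y in Set.Ioi (0 : ℝ), y ^ 6 * g y) * (1 / (2 * q + 1 : ℝ) ^ 7) := by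
    have h := integral_comp_mul_left_Ioi (fun y ↦ y ^ 6 * g y) 0 (hc q)
    rw [mul_zero, smul_eq_mul] at h
    simp only [mul_pow, mul_assoc, integral_const_mul] at h
    have := (hc q).ne'
    field_simp at h ⊢
    linear_combination h
  have hsum : Summable fun q : ℕ ↦ 1 / (2 * q + 1 : ℝ) ^ 7 := by
    have h := (Real.summable_one_div_nat_pow.2 (by norm_num : 1 < 7)).comp_injective
      (i := fun q : ℕ ↦ 2 * q + 1) fun a b h ↦ by simpa using h
    simpa [Function.comp_def] using h
  have hint (q : ℕ) : IntegrableOn (fun y : ℝ ↦ y ^ 6 *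
      (logisticPoly 7).eval (fermi ((2 * q + 1) * y))) (Set.Ioi 0) := by
    have h := (integrableOn_Ioi_comp_mul_left_iff
      (fun y ↦ y ^ 6 * (logisticPoly 7).eval (fermi y)) 0 (hc q)).2
      (by simpa using integrableOn_pow_mul_logisticPoly_fermi 6 7)
    refine (h.const_mul (((2 * q + 1 : ℝ) ^ 6)⁻¹)).congr (.of_forall fun y ↦ ?_)
    have := (hc q).ne'
    field_simp
  simp only [← tsum_mul_left]
  rw [← (hasSum_integral_of_summable_integral_norm hint ?_).tsum_eq]
  · simp only [hscale fun y ↦ (logisticPoly 7).eval (fermi y),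
      integral_pow_six_mul_logisticPoly_fermi]
  · have h (q : ℕ) (y : ℝ) : ‖y ^ 6 * (logisticPoly 7).eval (fermi ((2 * q + 1) * y))‖ =
        y ^ 6 * |(logisticPoly 7).eval (fermi ((2 * q + 1) * y))| := by
      rw [norm_mul, Real.norm_of_nonneg (Even.pow_nonneg (by decide) y), Real.norm_eq_abs]
    simp only [h, hscale fun y ↦ |(logisticPoly 7).eval (fermi y)|]
    exact hsum.mul_left _

lemma tsum_odd_pow_seven :
    ((∑' q : ℕ, 1 / (2 * q + 1 : ℝ) ^ 7 : ℝ) : ℂ) = 127 / 128 * riemannZeta 7 := by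
  have hs := Real.summable_one_div_nat_pow.2 (by norm_num : 1 < 7)
  have h := tsum_even_add_odd (f := fun n : ℕ ↦ 1 / (n : ℝ) ^ 7)
    (hs.comp_injective (i := fun q : ℕ ↦ 2 * q) fun a b h ↦ by simpa using h)
    (hs.comp_injective (i := fun q : ℕ ↦ 2 * q + 1) fun a b h ↦ by simpa using h)
  have he (k : ℕ) : 1 / ((2 * k : ℕ) : ℝ) ^ 7 = 1 / 128 * (1 / (k : ℝ) ^ 7) := by
    push_cast
    ring
  simp only [he, tsum_mul_left] at h
  have hz : riemannZeta 7 = ((∑' n : ℕ, 1 / (n : ℝ) ^ 7 : ℝ) : ℂ) := by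
    have := zeta_nat_eq_tsum_of_gt_one (by norm_num : 1 < 7)
    push_cast at this ⊢
    exact this
  push_cast at h
  rw [hz, show ∑' q : ℕ, 1 / (2 * q + 1 : ℝ) ^ 7 = 127 / 128 * ∑' n : ℕ, 1 / (n : ℝ) ^ 7 by
    linear_combination h]
  push_cast
  ring

section Substitution

open Set Filter Topology

lemma mul_ellipticK_pow_eight {m : ℝ} (hm : m ∈ Ioo 0 1) :
    (m * (1 - m)) * (2 - 17 * (m * (1 - m))) * ellipticK m ^ 8 =
      π ^ 8 / 8 * ∑' q : ℕ, (logisticPoly 7).eval (fermi ((2 * q + 1) * periodRatio m)) := by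
  have hy : 0 < periodRatio m :=
    div_pos (ellipticK_pos (by linarith [hm.1])) (ellipticK_pos hm.2)
  have h := oddLatticeSum_periodRatio hm
  rw [oddLatticeSum_eq_tsum_logisticPoly hy] at h
  have h' := Complex.ofReal_injective ((Complex.ofReal_mul 5040 _).trans h)
  linear_combination 1 / 16 * h'

lemma periodRatio_image : periodRatio '' Ioo 0 1 = Ioi 0 := by
  ext y
  constructor
  · rintro ⟨m, hm, rfl⟩
    exact div_pos (ellipticK_pos (by linarith [hm.1])) (ellipticK_pos hm.2)
  · intro (hy : 0 < y)
    exact ⟨modulus one_pos hy, ⟨modulus_pos _ _, modulus_lt_one _ _⟩, by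
      rw [periodRatio_modulus, div_one]⟩

lemma integral_mul_ellipticK_pow_six :
    ∫ m in Ioo (0 : ℝ) 1, (2 - 17 * (m * (1 - m))) * ellipticK (1 - m) ^ 6 =
      4 / π * (π ^ 8 / 8 * ∫ y in Ioi (0 : ℝ), y ^ 6 *
        ∑' q : ℕ, (logisticPoly 7).eval (fermi ((2 * q + 1) * y))) := by
  rw [← periodRatio_image, integral_image_eq_integral_abs_deriv_smul measurableSet_Ioo
    (fun m hm ↦ (hasDerivAt_periodRatio hm.1 hm.2).hasDerivWithinAt)
    strictAntiOn_periodRatio.injOn, ← integral_const_mul, ← integral_const_mul]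
  refine setIntegral_congr_fun measurableSet_Ioo fun m hm ↦ ?_
  have hK := ellipticK_pos hm.2
  have hm1 : 0 < 1 - m := sub_pos.2 hm.2
  have hm0 := hm.1
  have h := mul_ellipticK_pow_eight hm
  simp only [smul_eq_mul]
  rw [abs_neg, abs_of_pos (by positivity), mul_left_comm (π ^ 8 / 8), mul_left_comm (π ^ 8 / 8),
    ← h, periodRatio]
  field_simp

lemma integral_EllK_pow_six :
    ∫ k in (0 : ℝ)..1, k * (2 - 17 * k ^ 2 + 17 * k ^ 4) * EllK k ^ 6 =
      1 / 2 * ∫ m in Ioo (0 : ℝ) 1, (2 - 17 * (m * (1 - m))) * ellipticK (1 - m) ^ 6 := by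
  have himg : (fun k : ℝ ↦ 1 - k ^ 2) '' Ioo 0 1 = Ioo 0 1 := by
    ext m
    constructor
    · rintro ⟨k, hk, rfl⟩
      constructor <;> simp only <;> nlinarith [hk.1, hk.2]
    · intro hm
      refine ⟨√(1 - m), ⟨Real.sqrt_pos.2 (by linarith [hm.2]), ?_⟩, ?_⟩
      · rw [Real.sqrt_lt' one_pos]
        linarith [hm.1]
      · simp only
        rw [Real.sq_sqrt (by linarith [hm.2])]
        ring
  have hinj : InjOn (fun k : ℝ ↦ 1 - k ^ 2) (Ioo 0 1) := fun x hx y hy h ↦ by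
    have : x ^ 2 = y ^ 2 := by simpa using h
    exact (pow_left_inj₀ hx.1.le hy.1.le two_ne_zero).1 this
  rw [← himg, integral_image_eq_integral_abs_deriv_smul measurableSet_Ioo
    (fun k _ ↦ ((hasDerivAt_pow 2 k).const_sub 1).hasDerivWithinAt) hinj,
    intervalIntegral.integral_of_le zero_le_one, integral_Ioc_eq_integral_Ioo,
    ← integral_const_mul]
  refine setIntegral_congr_fun measurableSet_Ioo fun k hk ↦ ?_
  have h : |-((2 : ℕ) * k ^ (2 - 1))| = 2 * k := by
    rw [abs_neg, abs_of_nonneg (by have := hk.1; positivity)]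
    norm_num
  simp only [h, smul_eq_mul, EllK_eq_ellipticK, sub_sub_cancel]
  ring

end Substitution

theorem stmt_17 :
    ((∫ k in (0:ℝ)..(1:ℝ), k * (2 - 17 * k^2 + 17 * k^4) * (EllK k)^6 : ℝ) : ℂ)
      = 5715/64 * riemannZeta 7 := by
  rw [integral_EllK_pow_six, integral_mul_ellipticK_pow_six, integral_tsum_logisticPoly_fermi]
  have h : 1 / 2 * (4 / π * (π ^ 8 / 8 * (360 / π ^ 7 * ∑' q : ℕ, 1 / (2 * q + 1 : ℝ) ^ 7))) =
      90 * ∑' q : ℕ, 1 / (2 * q + 1 : ℝ) ^ 7 := by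
    field_simp
    ring
  rw [h, Complex.ofReal_mul, tsum_odd_pow_seven]
  push_cast
  ring
end

section
/- ∫₀¹ k(4+k²-k⁴) K'(k)⁷ dk = 3Γ(1/4)¹⁶/(2¹²·5·π⁴). -/
open scoped Real
open MeasureTheory

noncomputable def EllE (k : ℝ) : ℝ :=
  ∫ x in (0:ℝ)..(1:ℝ), Real.sqrt ((1 - k^2 * x^2) / (1 - x^2))

noncomputable def EllK' (k : ℝ) : ℝ := EllK (Real.sqrt (1 - k^2))

open Filter Topology

/-- The series `∑ c n e^{-π n² y}` over the integers. -/
noncomputable def thetaSeries (c : ℤ → ℝ) (y : ℝ) : ℝ :=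
  ∑' n : ℤ, c n * Real.exp (-π * y * n ^ 2)

/-- Coefficients for which the theta series converges absolutely on the half-line. -/
def ThetaSummable (c : ℤ → ℝ) : Prop :=
  ∀ y : ℝ, 0 < y → Summable fun n : ℤ => |c n| * Real.exp (-π * y * n ^ 2)

lemma ThetaSummable.summable {c : ℤ → ℝ} (hc : ThetaSummable c) {y : ℝ} (hy : 0 < y) :
    Summable fun n : ℤ => c n * Real.exp (-π * y * n ^ 2) := by
  refine Summable.of_norm ?_
  simpa [abs_mul] using hc y hy

lemma thetaSummable_one : ThetaSummable fun _ => 1 := by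
  intro y hy
  have := summable_pow_mul_jacobiTheta₂_term_bound 0 hy 0
  refine this.congr fun n => ?_
  simp only [pow_zero, one_mul, abs_one, mul_zero, zero_mul, sub_zero, mul_assoc]

lemma thetaSummable_of_abs_le {c d : ℤ → ℝ} (hd : ThetaSummable d) (h : ∀ n, |c n| ≤ |d n|) :
    ThetaSummable c := fun y hy =>
  Summable.of_nonneg_of_le (fun n => by positivity)
    (fun n => mul_le_mul_of_nonneg_right (h n) (Real.exp_nonneg _)) (hd y hy)

lemma ThetaSummable.sq_mul {c : ℤ → ℝ} (hc : ThetaSummable c) :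
    ThetaSummable fun n => -π * n ^ 2 * c n := by
  intro y hy
  refine Summable.of_nonneg_of_le (fun n => by positivity) (fun n => ?_)
    ((hc (y / 2) (by positivity)).mul_left (2 / y))
  have h1 : π * (y / 2) * (n : ℝ) ^ 2 ≤ Real.exp (π * (y / 2) * (n : ℝ) ^ 2) := by
    linarith [Real.add_one_le_exp (π * (y / 2) * (n : ℝ) ^ 2)]
  have h2 : Real.exp (-π * y * n ^ 2)
      = Real.exp (-π * (y / 2) * n ^ 2) * Real.exp (-(π * (y / 2) * n ^ 2)) := by
    rw [← Real.exp_add]; ring_nf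
  have h3 : π * (n : ℝ) ^ 2 * Real.exp (-(π * (y / 2) * n ^ 2)) ≤ 2 / y := by
    rw [Real.exp_neg, ← div_eq_mul_inv, div_le_iff₀ (Real.exp_pos _)]
    calc π * (n : ℝ) ^ 2 = 2 / y * (π * (y / 2) * (n : ℝ) ^ 2) := by field_simp
      _ ≤ _ := by gcongr
  have h4 : |-π * (n : ℝ) ^ 2 * c n| = π * (n : ℝ) ^ 2 * |c n| := by
    rw [abs_mul, abs_mul, abs_neg, abs_of_pos Real.pi_pos, abs_of_nonneg (sq_nonneg (n : ℝ))]
  rw [h4, h2]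
  calc π * (n : ℝ) ^ 2 * |c n| * (Real.exp (-π * (y / 2) * n ^ 2)
        * Real.exp (-(π * (y / 2) * n ^ 2)))
      = (π * (n : ℝ) ^ 2 * Real.exp (-(π * (y / 2) * n ^ 2)))
        * (|c n| * Real.exp (-π * (y / 2) * n ^ 2)) := by ring
    _ ≤ _ := by gcongr

lemma hasDerivAt_thetaSeries {c : ℤ → ℝ} (hc : ThetaSummable c) {y : ℝ} (hy : 0 < y) :
    HasDerivAt (thetaSeries c) (thetaSeries (fun n => -π * n ^ 2 * c n) y) y := by
  have hy2 : 0 < y / 2 := by positivity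
  refine hasDerivAt_tsum_of_isPreconnected (t := Set.Ioi (y / 2)) (y₀ := y)
    (g := fun n z => c n * Real.exp (-π * z * n ^ 2))
    (g' := fun n z => -π * n ^ 2 * c n * Real.exp (-π * z * n ^ 2)) (hc.sq_mul _ hy2) isOpen_Ioi
    isPreconnected_Ioi ?_ ?_ (by simp [hy]) (hc.summable hy) (by simp [hy])
  · intro n z _
    have h : HasDerivAt (fun z : ℝ => -π * z * (n : ℝ) ^ 2) (-π * 1 * (n : ℝ) ^ 2) z :=
      ((hasDerivAt_id z).const_mul (-π)).mul_const _
    have h2 := h.exp.const_mul (c n)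
    rwa [show c n * (Real.exp (-π * z * (n : ℝ) ^ 2) * (-π * 1 * (n : ℝ) ^ 2))
      = -π * n ^ 2 * c n * Real.exp (-π * z * n ^ 2) by ring] at h2
  · intro n z hz
    rw [norm_mul, Real.norm_eq_abs, Real.norm_eq_abs, Real.abs_exp]
    refine mul_le_mul_of_nonneg_left (Real.exp_le_exp.2 ?_) (abs_nonneg _)
    have : y / 2 ≤ z := le_of_lt hz
    have h2 : 0 ≤ π * (n : ℝ) ^ 2 := by positivity
    nlinarith

lemma thetaSeries_mul_exp {c : ℤ → ℝ} (y : ℝ) :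
    thetaSeries c y * Real.exp (π * y)
      = ∑' n : ℤ, c n * Real.exp (-π * y * ((n : ℝ) ^ 2 - 1)) := by
  rw [thetaSeries, ← tsum_mul_right]
  refine tsum_congr fun n => ?_
  rw [mul_assoc, ← Real.exp_add]
  ring_nf

lemma int_sq_sub_one_nonneg {n : ℤ} (hn : n ≠ 0) : (0 : ℝ) ≤ (n : ℝ) ^ 2 - 1 := by
  have h : 1 ≤ n ^ 2 := by nlinarith [Int.one_le_abs hn, sq_abs n]
  have : (1 : ℝ) ≤ (n : ℝ) ^ 2 := by exact_mod_cast h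
  linarith

lemma norm_term_le {c : ℤ → ℝ} (h0 : c 0 = 0) {y : ℝ} (hy : 1 ≤ y) (n : ℤ) :
    ‖c n * Real.exp (-π * y * ((n : ℝ) ^ 2 - 1))‖
      ≤ Real.exp π * (|c n| * Real.exp (-π * 1 * (n : ℝ) ^ 2)) := by
  rw [norm_mul, Real.norm_eq_abs, Real.norm_eq_abs, Real.abs_exp]
  by_cases hn : n = 0
  · simp [hn, h0]
  have h1 := int_sq_sub_one_nonneg hn
  have : Real.exp (-π * y * ((n : ℝ) ^ 2 - 1)) ≤ Real.exp (π + -π * 1 * (n : ℝ) ^ 2) := by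
    refine Real.exp_le_exp.2 ?_
    have : 0 ≤ π * ((n : ℝ) ^ 2 - 1) := by positivity
    nlinarith
  rw [Real.exp_add] at this
  nlinarith [abs_nonneg (c n)]

lemma tendsto_thetaSeries_mul_exp {c : ℤ → ℝ} (hc : ThetaSummable c) (h0 : c 0 = 0) :
    Tendsto (fun y => thetaSeries c y * Real.exp (π * y)) atTop (𝓝 (c 1 + c (-1))) := by
  simp_rw [thetaSeries_mul_exp]
  have hs : ∑' n : ℤ, (if n = 1 ∨ n = -1 then c n else 0) = c 1 + c (-1) := by
    rw [tsum_eq_sum (s := {1, -1})]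
    · simp
    · intro n hn
      simp only [Finset.mem_insert, Finset.mem_singleton] at hn
      simp [hn]
  rw [← hs]
  refine tendsto_tsum_of_dominated_convergence
    (bound := fun n => Real.exp π * (|c n| * Real.exp (-π * 1 * (n : ℝ) ^ 2)))
    ((hc 1 one_pos).mul_left _) ?_ ?_
  · intro n
    split_ifs with h
    · have : (n : ℝ) ^ 2 - 1 = 0 := by rcases h with rfl | rfl <;> norm_num
      simp [this]
    · by_cases hn : n = 0
      · simp [hn, h0]
      have h2 : 0 < (n : ℝ) ^ 2 - 1 := by
        refine lt_of_le_of_ne (int_sq_sub_one_nonneg hn) fun h3 => h ?_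
        have h4 : (n : ℝ) ^ 2 = 1 := by linarith
        have h5 : n ^ 2 = 1 := by exact_mod_cast h4
        simpa using h5
      rw [show (0 : ℝ) = c n * 0 by simp]
      refine Tendsto.const_mul _ (Real.tendsto_exp_atBot.comp ?_)
      have : (fun y : ℝ => -π * y * ((n : ℝ) ^ 2 - 1)) = fun y => -(π * ((n : ℝ) ^ 2 - 1)) * y := by
        ext y; ring
      rw [this]
      exact tendsto_id.const_mul_atTop_of_neg (by have := Real.pi_pos; nlinarith)
  · filter_upwards [eventually_ge_atTop 1] with y hy n
    exact norm_term_le h0 hy n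

/-- The theta constant `θ₃` on the imaginary axis. -/
noncomputable def th (y : ℝ) : ℝ := thetaSeries (fun _ => 1) y

/-- The theta constant `θ₄` on the imaginary axis. -/
noncomputable def ph (y : ℝ) : ℝ := thetaSeries (fun n => (-1) ^ n) y

lemma thetaSummable_neg_one_zpow : ThetaSummable fun n => (-1) ^ n :=
  thetaSummable_of_abs_le thetaSummable_one fun n => by simp [abs_zpow]

lemma th_functional {y : ℝ} (hy : 0 < y) : th y ^ 2 = y⁻¹ * th y⁻¹ ^ 2 := by
  have := Real.tsum_exp_neg_mul_int_sq hy
  have h2 : th y = 1 / y ^ (1 / 2 : ℝ) * th y⁻¹ := by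
    simp only [th, thetaSeries, one_mul]
    rw [this]
    simp [div_eq_mul_inv]
  rw [h2, mul_pow, ← Real.sqrt_eq_rpow, div_pow, Real.sq_sqrt hy.le, one_pow, one_div]

lemma tsum_even_eq (f : ℤ × ℤ → ℝ) (hf : ∀ p : ℤ × ℤ, ¬ Even (p.1 + p.2) → f p = 0) :
    ∑' p, f p = ∑' p : ℤ × ℤ, f (p.1 + p.2, p.1 - p.2) := by
  have hinj : Function.Injective fun p : ℤ × ℤ => (p.1 + p.2, p.1 - p.2) := by
    rintro ⟨a, b⟩ ⟨c, d⟩ h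
    simp only [Prod.mk.injEq] at h ⊢
    omega
  refine (hinj.tsum_eq (f := f) ?_).symm
  rintro ⟨a, b⟩ hp
  have h : Even (a + b) := by
    by_contra h
    exact hp (hf (a, b) h)
  obtain ⟨r, hr⟩ := h
  exact ⟨(r, a - r), by simp only [Prod.mk.injEq]; omega⟩

lemma ThetaSummable.mul_eq {c d : ℤ → ℝ} (hc : ThetaSummable c) (hd : ThetaSummable d)
    {y : ℝ} (hy : 0 < y) : thetaSeries c y * thetaSeries d y
      = ∑' p : ℤ × ℤ, c p.1 * d p.2 * Real.exp (-π * y * ((p.1 : ℝ) ^ 2 + (p.2 : ℝ) ^ 2)) := by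
  rw [thetaSeries, thetaSeries, tsum_mul_tsum_of_summable_norm (hc.summable hy).norm
    (hd.summable hy).norm]
  refine tsum_congr fun p => ?_
  rw [mul_add, Real.exp_add]; ring

lemma ThetaSummable.summable_mul {c d : ℤ → ℝ} (hc : ThetaSummable c) (hd : ThetaSummable d)
    {y : ℝ} (hy : 0 < y) : Summable fun p : ℤ × ℤ =>
      c p.1 * d p.2 * Real.exp (-π * y * ((p.1 : ℝ) ^ 2 + (p.2 : ℝ) ^ 2)) := by
  refine (summable_mul_of_summable_norm (hc.summable hy).norm (hd.summable hy).norm).congr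
    fun p => ?_
  rw [mul_add, Real.exp_add]; ring

lemma th_sq_add_ph_sq {y : ℝ} (hy : 0 < y) : th y ^ 2 + ph y ^ 2 = 2 * th (2 * y) ^ 2 := by
  have h1 := thetaSummable_one
  have h2 := thetaSummable_neg_one_zpow
  rw [sq, sq, sq, th, ph, th, h1.mul_eq h1 hy, h2.mul_eq h2 hy, h1.mul_eq h1 (by positivity),
    ← (h1.summable_mul h1 hy).tsum_add (h2.summable_mul h2 hy), tsum_even_eq, ← tsum_mul_left]
  · refine tsum_congr fun p => ?_
    have : ((-1 : ℝ) ^ (p.1 + p.2)) * (-1) ^ (p.1 - p.2) = 1 := by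
      rw [← zpow_add₀ (by norm_num)]
      exact Even.neg_one_zpow ⟨p.1, by ring⟩
    simp only [this]
    push_cast
    ring_nf
  · intro p hp
    have : ((-1 : ℝ) ^ p.1) * (-1) ^ p.2 = -1 := by
      rw [← zpow_add₀ (by norm_num)]
      exact Odd.neg_one_zpow (Int.not_even_iff_odd.1 hp)
    rw [this]; ring

lemma th_mul_ph {y : ℝ} (hy : 0 < y) : th y * ph y = ph (2 * y) ^ 2 := by
  have h1 := thetaSummable_one
  have h2 := thetaSummable_neg_one_zpow
  have e : 2 * (th y * ph y) = th y * ph y + ph y * th y := by ring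
  have key : 2 * (th y * ph y) = 2 * ph (2 * y) ^ 2 := by
    rw [e, sq, th, ph, ph, h1.mul_eq h2 hy, h2.mul_eq h1 hy, h2.mul_eq h2 (by positivity),
      ← (h1.summable_mul h2 hy).tsum_add (h2.summable_mul h1 hy), tsum_even_eq, ← tsum_mul_left]
    · refine tsum_congr fun p => ?_
      have h3 : ((-1 : ℝ) ^ (p.1 - p.2)) = (-1) ^ p.1 * (-1) ^ p.2 := by
        rw [zpow_sub₀ (by norm_num)]
        rcases Int.even_or_odd p.2 with h | h <;>
          simp [h.neg_one_zpow, div_neg]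
      have h4 : ((-1 : ℝ) ^ (p.1 + p.2)) = (-1) ^ p.1 * (-1) ^ p.2 := zpow_add₀ (by norm_num) _ _
      simp only [h3, h4]
      push_cast
      ring_nf
    · intro p hp
      have : ((-1 : ℝ) ^ p.1) + (-1) ^ p.2 = 0 := by
        rcases Int.even_or_odd p.1 with h | h <;> rcases Int.even_or_odd p.2 with h' | h'
        · exact absurd (h.add h') hp
        · simp [h.neg_one_zpow, h'.neg_one_zpow]
        · simp [h.neg_one_zpow, h'.neg_one_zpow]
        · exact absurd (h.add_odd h') hp
      rw [← add_mul, one_mul, mul_one, add_comm ((-1 : ℝ) ^ p.2), this, zero_mul]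
  linarith

lemma one_le_th {y : ℝ} (hy : 0 < y) : 1 ≤ th y := by
  have := (thetaSummable_one.summable hy).le_tsum 0 fun n _ => by positivity
  simpa [th, thetaSeries] using this

lemma th_pos {y : ℝ} (hy : 0 < y) : 0 < th y := one_pos.trans_le (one_le_th hy)

lemma thetaSeries_sub_coeff_zero {c : ℤ → ℝ} (hc : ThetaSummable c) {y : ℝ} (hy : 0 < y) :
    thetaSeries c y - c 0 = thetaSeries (Function.update c 0 0) y := by
  rw [thetaSeries, (hc.summable hy).tsum_eq_add_tsum_ite 0]
  simp only [Int.cast_zero, ne_eq, OfNat.ofNat_ne_zero, not_false_eq_true, zero_pow, mul_zero,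
    Real.exp_zero, mul_one, add_sub_cancel_left, thetaSeries]
  refine tsum_congr fun n => ?_
  by_cases hn : n = 0
  · simp [hn]
  · simp [hn]

lemma tendsto_exp_neg_pi_mul : Tendsto (fun y : ℝ => Real.exp (-(π * y))) atTop (𝓝 0) :=
  Real.tendsto_exp_neg_atTop_nhds_zero.comp (tendsto_id.const_mul_atTop Real.pi_pos)

lemma tendsto_thetaSeries {c : ℤ → ℝ} (hc : ThetaSummable c) :
    Tendsto (thetaSeries c) atTop (𝓝 (c 0)) := by
  have hu : ThetaSummable (Function.update c 0 0) := thetaSummable_of_abs_le hc fun n => by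
    by_cases hn : n = 0 <;> simp [hn]
  have h := (tendsto_thetaSeries_mul_exp hu (by simp)).mul tendsto_exp_neg_pi_mul
  have h2 := (h.add_const (c 0))
  simp only [mul_zero, zero_add] at h2
  refine h2.congr' ?_
  filter_upwards [eventually_gt_atTop 0] with y hy
  rw [← thetaSeries_sub_coeff_zero hc hy, mul_assoc, ← Real.exp_add]
  simp

lemma tendsto_ph : Tendsto ph atTop (𝓝 1) := by
  have h := tendsto_thetaSeries thetaSummable_neg_one_zpow
  rwa [zpow_zero] at h

/-- The iterated derivatives of `th`. -/
noncomputable def thD (j : ℕ) (y : ℝ) : ℝ := thetaSeries (fun n => (-π * n ^ 2) ^ j) y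

lemma thD_zero : thD 0 = th := by
  ext y; simp [thD, th]

lemma thetaSummable_pow (j : ℕ) : ThetaSummable fun n => (-π * n ^ 2) ^ j := by
  induction j with
  | zero => simpa using thetaSummable_one
  | succ j ih => simpa only [pow_succ'] using ih.sq_mul

lemma hasDerivAt_thD (j : ℕ) {y : ℝ} (hy : 0 < y) : HasDerivAt (thD j) (thD (j + 1) y) y := by
  have := hasDerivAt_thetaSeries (thetaSummable_pow j) hy
  simp only [← pow_succ'] at this
  exact this

lemma hasDerivAt_th {y : ℝ} (hy : 0 < y) : HasDerivAt th (thD 1 y) y := by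
  have := hasDerivAt_thD 0 hy
  rwa [thD_zero] at this

/-- The derivative of `ph`. -/
noncomputable def ph1 (y : ℝ) : ℝ := thetaSeries (fun n => -π * n ^ 2 * (-1) ^ n) y

lemma hasDerivAt_ph {y : ℝ} (hy : 0 < y) : HasDerivAt ph (ph1 y) y :=
  hasDerivAt_thetaSeries thetaSummable_neg_one_zpow hy

lemma tendsto_th : Tendsto th atTop (𝓝 1) := tendsto_thetaSeries thetaSummable_one

lemma tendsto_thD_mul_exp (j : ℕ) :
    Tendsto (fun y => thD (j + 1) y * Real.exp (π * y)) atTop (𝓝 (2 * (-π) ^ (j + 1))) := by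
  have h := tendsto_thetaSeries_mul_exp (thetaSummable_pow (j + 1)) (by simp)
  have e : (-π * ((1 : ℤ) : ℝ) ^ 2) ^ (j + 1) + (-π * ((-1 : ℤ) : ℝ) ^ 2) ^ (j + 1)
      = 2 * (-π) ^ (j + 1) := by
    push_cast
    ring
  rwa [e] at h

lemma tendsto_thD (j : ℕ) : Tendsto (thD (j + 1)) atTop (𝓝 0) := by
  have h := tendsto_thetaSeries (thetaSummable_pow (j + 1))
  have e : (-π * ((0 : ℤ) : ℝ) ^ 2) ^ (j + 1) = 0 := by simp
  rwa [e] at h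

lemma tendsto_ph1_mul_exp :
    Tendsto (fun y => ph1 y * Real.exp (π * y)) atTop (𝓝 (2 * π)) := by
  have h := tendsto_thetaSeries_mul_exp thetaSummable_neg_one_zpow.sq_mul (by simp)
  have e : -π * ((1 : ℤ) : ℝ) ^ 2 * (-1) ^ (1 : ℤ) + -π * ((-1 : ℤ) : ℝ) ^ 2 * (-1) ^ (-1 : ℤ)
      = 2 * π := by
    rw [zpow_neg]
    norm_num
    ring
  rwa [e] at h

lemma th_sub_ph {y : ℝ} (hy : 0 < y) :
    th y - ph y = thetaSeries (fun n => 1 - (-1) ^ n) y := by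
  rw [th, ph, thetaSeries, thetaSeries, thetaSeries, ← (thetaSummable_one.summable hy).tsum_sub
    (thetaSummable_neg_one_zpow.summable hy)]
  simp_rw [sub_mul]

lemma thetaSummable_one_sub : ThetaSummable fun n => 1 - (-1) ^ n := by
  intro y hy
  refine Summable.of_nonneg_of_le (fun n => by positivity) (fun n => ?_)
    ((thetaSummable_one y hy).mul_left 2)
  rw [← mul_assoc]
  gcongr
  rcases Int.even_or_odd n with h | h <;> norm_num [h.neg_one_zpow]

lemma tendsto_th_sub_ph_mul_exp :
    Tendsto (fun y => (th y - ph y) * Real.exp (π * y)) atTop (𝓝 4) := by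
  have := tendsto_thetaSeries_mul_exp thetaSummable_one_sub (by simp)
  norm_num at this
  refine this.congr' ?_
  filter_upwards [eventually_gt_atTop 0] with y hy
  rw [th_sub_ph hy]

lemma ph_lt_th {y : ℝ} (hy : 0 < y) : ph y < th y := by
  rw [← sub_pos, th_sub_ph hy]
  refine (thetaSummable_one_sub.summable hy).tsum_pos (fun n => ?_) 1 ?_
  · rcases Int.even_or_odd n with h | h <;> simp [h.neg_one_zpow]; positivity
  · norm_num; positivity

lemma ph_nonneg {y : ℝ} (hy : 0 < y) : 0 ≤ ph y := by
  have := th_mul_ph hy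
  have h2 := th_pos hy
  by_contra! h
  nlinarith [sq_nonneg (ph (2 * y))]

lemma tendsto_two_pow_mul {y : ℝ} (hy : 0 < y) :
    Tendsto (fun n : ℕ => (2 : ℝ) ^ n * y) atTop atTop :=
  (tendsto_pow_atTop_atTop_of_one_lt one_lt_two).atTop_mul_const hy

lemma ph_pos {y : ℝ} (hy : 0 < y) : 0 < ph y := by
  refine lt_of_le_of_ne (ph_nonneg hy) fun h => ?_
  have key : ∀ n : ℕ, ph ((2 : ℝ) ^ n * y) = 0 := by
    intro n
    induction n with
    | zero => simp [← h]
    | succ n ih =>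
      have := th_mul_ph (y := (2 : ℝ) ^ n * y) (by positivity)
      rw [ih, mul_zero, ← mul_assoc, ← pow_succ'] at this
      exact pow_eq_zero_iff two_ne_zero |>.1 this.symm
  have h2 := tendsto_ph.comp (tendsto_two_pow_mul hy)
  have h3 : (ph ∘ fun n : ℕ => (2 : ℝ) ^ n * y) = fun _ => 0 := funext key
  rw [h3] at h2
  exact zero_ne_one (tendsto_nhds_unique tendsto_const_nhds h2)

/-- The quotient `θ₄ / θ₃`, a square root of the complementary modulus. -/
noncomputable def sq4 (y : ℝ) : ℝ := ph y / th y

/-- The complementary modulus `θ₄² / θ₃²`. -/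
noncomputable def kp (y : ℝ) : ℝ := sq4 y ^ 2

lemma sq4_pos {y : ℝ} (hy : 0 < y) : 0 < sq4 y := div_pos (ph_pos hy) (th_pos hy)

lemma sq4_lt_one {y : ℝ} (hy : 0 < y) : sq4 y < 1 := (div_lt_one (th_pos hy)).2 (ph_lt_th hy)

lemma kp_pos {y : ℝ} (hy : 0 < y) : 0 < kp y := pow_pos (sq4_pos hy) 2

lemma kp_lt_one {y : ℝ} (hy : 0 < y) : kp y < 1 :=
  pow_lt_one₀ (sq4_pos hy).le (sq4_lt_one hy) two_ne_zero

lemma th_two_mul_sq {y : ℝ} (hy : 0 < y) : th (2 * y) ^ 2 = th y ^ 2 * (1 + kp y) / 2 := by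
  have := th_sq_add_ph_sq hy
  have h := th_pos hy
  rw [kp, sq4]
  field_simp
  linarith

lemma kp_two_mul_sq4 {y : ℝ} (hy : 0 < y) : kp (2 * y) = 2 * sq4 y / (1 + sq4 y ^ 2) := by
  have h := th_pos hy
  have h1 := th_two_mul_sq hy
  have h2 := th_mul_ph hy
  have h3 := sq4_pos hy
  have h4 : ph (2 * y) ^ 2 = th y ^ 2 * sq4 y := by rw [← h2, sq4]; field_simp
  have h5 := th_pos (y := 2 * y) (by positivity)
  conv_lhs => rw [kp, sq4, div_pow, h4, h1, kp]
  field_simp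

lemma hasDerivAt_sq4 {y : ℝ} (hy : 0 < y) : HasDerivAt sq4 (deriv sq4 y) y :=
  ((hasDerivAt_ph hy).div (hasDerivAt_th hy) (th_pos hy).ne').differentiableAt.hasDerivAt

lemma deriv_sq4 {y : ℝ} (hy : 0 < y) :
    deriv sq4 y = (ph1 y * th y - ph y * thD 1 y) / th y ^ 2 :=
  ((hasDerivAt_ph hy).div (hasDerivAt_th hy) (th_pos hy).ne').deriv

lemma hasDerivAt_comp_two_mul {f : ℝ → ℝ} {f' y : ℝ} (h : HasDerivAt f f' (2 * y)) :
    HasDerivAt (fun z => f (2 * z)) (2 * f') y := by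
  have h2 : HasDerivAt (fun z : ℝ => 2 * z) 2 y := by
    simpa using (hasDerivAt_id y).const_mul (2 : ℝ)
  exact (h.comp y h2).congr_deriv (mul_comm _ _)

lemma deriv_sq4_two_mul {y : ℝ} (hy : 0 < y) :
    2 * (2 * sq4 (2 * y) * deriv sq4 (2 * y))
      = 2 * deriv sq4 y * (1 - sq4 y ^ 2) / (1 + sq4 y ^ 2) ^ 2 := by
  have h1 : HasDerivAt (fun z => sq4 (2 * z) ^ 2)
      (2 * (2 * sq4 (2 * y) * deriv sq4 (2 * y))) y := by
    have := (hasDerivAt_sq4 (y := 2 * y) (by positivity)).pow 2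
    refine hasDerivAt_comp_two_mul (f := fun z => sq4 z ^ 2) ?_
    exact this.congr_deriv (by simp)
  have hs := hasDerivAt_sq4 hy
  have h2 : HasDerivAt (fun z => 2 * sq4 z / (1 + sq4 z ^ 2))
      ((2 * deriv sq4 y * (1 + sq4 y ^ 2) - 2 * sq4 y * (2 * sq4 y * deriv sq4 y))
        / (1 + sq4 y ^ 2) ^ 2) y := by
    have h3 := (hs.const_mul 2).div ((hs.pow 2).const_add 1)
      (by simp only [Pi.pow_apply]; positivity)
    exact h3.congr_deriv (by simp)
  have h4 : (fun z => sq4 (2 * z) ^ 2) =ᶠ[𝓝 y] fun z => 2 * sq4 z / (1 + sq4 z ^ 2) := by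
    filter_upwards [lt_mem_nhds hy] with z hz
    exact kp_two_mul_sq4 hz
  rw [h1.unique (h2.congr_of_eventuallyEq h4)]
  congr 1
  ring

lemma deriv_sq4_eq {y : ℝ} (hy : 0 < y) :
    deriv sq4 y = π / 4 * sq4 y * (1 - sq4 y ^ 4) * th y ^ 4 := by
  set R : ℝ → ℝ := fun y => deriv sq4 y / (sq4 y * (1 - sq4 y ^ 4) * th y ^ 4) with hR
  have hs4 : ∀ {z : ℝ}, 0 < z → 0 < 1 - sq4 z ^ 2 := fun {z} hz => by
    linarith [pow_lt_one₀ (sq4_pos hz).le (sq4_lt_one hz) two_ne_zero]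
  have hstep : ∀ z : ℝ, 0 < z → R (2 * z) = R z := by
    intro z hz
    have h1 := deriv_sq4_two_mul hz
    have h2 := kp_two_mul_sq4 hz
    have h3 := th_two_mul_sq hz
    have hz2 : 0 < 2 * z := by positivity
    have p1 := sq4_pos hz
    have p2 := sq4_pos hz2
    have p3 := hs4 hz
    have p4 := hs4 hz2
    have p5 := th_pos hz
    have p6 := th_pos hz2
    rw [kp] at h2 h3
    have e1 : R (2 * z) = (2 * (2 * sq4 (2 * z) * deriv sq4 (2 * z))) /
        (4 * sq4 (2 * z) ^ 2 * (1 - (sq4 (2 * z) ^ 2) ^ 2) * (th (2 * z) ^ 2) ^ 2) := by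
      have : (1 - (sq4 (2 * z) ^ 2) ^ 2) = (1 - sq4 (2 * z) ^ 4) := by ring
      rw [this]
      have : 0 < 1 - sq4 (2 * z) ^ 4 := by nlinarith [sq_nonneg (sq4 (2 * z))]
      simp only [hR]
      field_simp
      ring
    have q1 : 1 - (2 * sq4 z / (1 + sq4 z ^ 2)) ^ 2
        = (1 - sq4 z ^ 2) ^ 2 / (1 + sq4 z ^ 2) ^ 2 := by
      field_simp; ring
    have q2 : 1 - sq4 z ^ 4 = (1 - sq4 z ^ 2) * (1 + sq4 z ^ 2) := by ring
    rw [e1, h1, h2, h3, q1]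
    simp only [hR]
    rw [q2]
    field_simp
    norm_num [mul_comm]
  have hlim : Tendsto R atTop (𝓝 (π / 4)) := by
    have l1 : Tendsto (fun y => (ph1 y * Real.exp (π * y)) * th y
        - ph y * (thD 1 y * Real.exp (π * y))) atTop (𝓝 (2 * π * 1 - 1 * (2 * (-π) ^ (0 + 1)))) :=
      (tendsto_ph1_mul_exp.mul tendsto_th).sub (tendsto_ph.mul (tendsto_thD_mul_exp 0))
    have l2 : Tendsto (fun y => ph y * (((th y - ph y) * Real.exp (π * y)) * (th y + ph y)
        * (th y ^ 2 + ph y ^ 2)) * th y) atTop (𝓝 (1 * (4 * (1 + 1) * (1 ^ 2 + 1 ^ 2)) * 1)) :=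
      (tendsto_ph.mul ((tendsto_th_sub_ph_mul_exp.mul (tendsto_th.add tendsto_ph)).mul
        ((tendsto_th.pow 2).add (tendsto_ph.pow 2)))).mul tendsto_th
    have l3 := l1.div l2 (by norm_num)
    have e : (2 * π * 1 - 1 * (2 * (-π) ^ (0 + 1))) / (1 * (4 * (1 + 1) * (1 ^ 2 + 1 ^ 2)) * 1)
        = π / 4 := by ring
    rw [e] at l3
    refine l3.congr' ?_
    filter_upwards [eventually_gt_atTop 0] with z hz
    have p1 := ph_pos hz
    have p5 := th_pos hz
    have p6 := ph_lt_th hz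
    have p7 : 0 < th z - ph z := sub_pos.2 p6
    have q : 1 - (ph z / th z) ^ 4 = (th z - ph z) * (th z + ph z) * (th z ^ 2 + ph z ^ 2)
        / th z ^ 4 := by field_simp; ring
    simp only [hR, Pi.div_apply]
    rw [deriv_sq4 hz, sq4, q]
    field_simp
  have hconst : R y = π / 4 := by
    have h : ∀ n : ℕ, R ((2 : ℝ) ^ n * y) = R y := by
      intro n
      induction n with
      | zero => simp
      | succ n ih => rw [pow_succ', mul_assoc, hstep _ (by positivity), ih]
    have h2 := hlim.comp (tendsto_two_pow_mul hy)
    have h3 : (R ∘ fun n : ℕ => (2 : ℝ) ^ n * y) = fun _ => R y := funext h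
    rw [h3] at h2
    exact tendsto_nhds_unique tendsto_const_nhds h2
  have p1 := sq4_pos hy
  have p2 := th_pos hy
  have p3 : 0 < 1 - sq4 y ^ 4 := by
    linarith [pow_lt_one₀ (sq4_pos hy).le (sq4_lt_one hy) four_ne_zero]
  simp only [hR] at hconst
  rw [div_eq_iff (by positivity)] at hconst
  rw [hconst]; ring

lemma hasDerivAt_kp {y : ℝ} (hy : 0 < y) :
    HasDerivAt kp (π / 2 * kp y * (1 - kp y ^ 2) * th y ^ 4) y := by
  have := (hasDerivAt_sq4 hy).pow 2
  rw [deriv_sq4_eq hy] at this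
  refine HasDerivAt.congr_deriv this ?_
  rw [kp]
  push_cast
  ring

/-- The reciprocal of `θ₃²`. -/
noncomputable def thInv (y : ℝ) : ℝ := (th y ^ 2)⁻¹

/-- The derivative of `thInv`. -/
noncomputable def thInv1 (y : ℝ) : ℝ := -2 * thD 1 y / th y ^ 3

/-- The second derivative of `thInv`. -/
noncomputable def thInv2 (y : ℝ) : ℝ := -2 * thD 2 y / th y ^ 3 + 6 * thD 1 y ^ 2 / th y ^ 4

lemma thInv_pos {y : ℝ} (hy : 0 < y) : 0 < thInv y := by
  have := th_pos hy
  rw [thInv]; positivity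

lemma hasDerivAt_thInv {y : ℝ} (hy : 0 < y) : HasDerivAt thInv (thInv1 y) y := by
  have h := th_pos hy
  refine (((hasDerivAt_th hy).pow 2).inv (by simp only [Pi.pow_apply]; positivity)).congr_deriv ?_
  simp only [Pi.pow_apply, thInv1]
  field_simp
  norm_num
  ring

lemma hasDerivAt_thInv1 {y : ℝ} (hy : 0 < y) : HasDerivAt thInv1 (thInv2 y) y := by
  have h := th_pos hy
  refine (((hasDerivAt_thD 1 hy).const_mul (-2)).div ((hasDerivAt_th hy).pow 3)
    (by simp only [Pi.pow_apply]; positivity)).congr_deriv ?_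
  simp only [Pi.pow_apply, thInv2]
  field_simp
  norm_num
  ring

/-- The invariant `k²(1 - k²)`. -/
noncomputable def xInv (y : ℝ) : ℝ := kp y ^ 2 * (1 - kp y ^ 2)

lemma thInv_two_mul {y : ℝ} (hy : 0 < y) : thInv (2 * y) = 2 * thInv y / (1 + kp y) := by
  have h := th_pos hy
  have h2 := kp_pos hy
  rw [thInv, thInv, th_two_mul_sq hy]
  field_simp

lemma hasDerivAt_kp' {y : ℝ} (hy : 0 < y) :
    HasDerivAt kp (π / 2 * kp y * (1 - kp y ^ 2) / thInv y ^ 2) y := by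
  have h := th_pos hy
  refine (hasDerivAt_kp hy).congr_deriv ?_
  rw [thInv]
  field_simp

lemma thInv1_two_mul {y : ℝ} (hy : 0 < y) : thInv1 (2 * y)
    = thInv1 y / (1 + kp y) - π / 2 * (kp y * (1 - kp y) / ((1 + kp y) * thInv y)) := by
  have p1 := kp_pos hy
  have p2 := thInv_pos hy
  have h1 := hasDerivAt_comp_two_mul (hasDerivAt_thInv (y := 2 * y) (by positivity))
  have h2 := ((hasDerivAt_thInv hy).const_mul 2).div ((hasDerivAt_kp' hy).const_add 1)
    (by positivity)
  have h4 : (fun z => thInv (2 * z)) =ᶠ[𝓝 y] fun z => 2 * thInv z / (1 + kp z) := by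
    filter_upwards [lt_mem_nhds hy] with z hz
    exact thInv_two_mul hz
  have h5 := h1.unique (h2.congr_of_eventuallyEq h4)
  have h6 : thInv1 (2 * y) = (2 * thInv1 (2 * y)) / 2 := by ring
  rw [h6, h5]
  field_simp
  ring

lemma thInv2_two_mul {y : ℝ} (hy : 0 < y) : 2 * thInv2 (2 * y)
    = thInv2 y / (1 + kp y)
      - π ^ 2 / 4 * (kp y * (1 - kp y) * (1 - 2 * kp y - kp y ^ 2) / ((1 + kp y) * thInv y ^ 3)) := by
  have p1 := kp_pos hy
  have p2 := thInv_pos hy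
  have h1 := hasDerivAt_comp_two_mul (hasDerivAt_thInv1 (y := 2 * y) (by positivity))
  have hk := hasDerivAt_kp' hy
  have hw := hasDerivAt_thInv hy
  have h2 := ((hasDerivAt_thInv1 hy).div (hk.const_add 1) (by positivity)).sub
    (((hk.mul (hk.const_sub 1)).div ((hk.const_add 1).mul hw) (by
      simp only [Pi.mul_apply]; positivity)).const_mul (π / 2))
  have h4 : (fun z => thInv1 (2 * z)) =ᶠ[𝓝 y] fun z =>
      thInv1 z / (1 + kp z) - π / 2 * (kp z * (1 - kp z) / ((1 + kp z) * thInv z)) := by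
    filter_upwards [lt_mem_nhds hy] with z hz
    exact thInv1_two_mul hz
  rw [h1.unique (h2.congr_of_eventuallyEq h4)]
  simp only [Pi.mul_apply]
  field_simp
  ring

/-- The defect in the differential equation satisfied by `thInv`. -/
noncomputable def odeDefect (y : ℝ) : ℝ := thInv2 y + π ^ 2 / 4 * xInv y / thInv y ^ 3

lemma xInv_two_mul {y : ℝ} (hy : 0 < y) :
    xInv (2 * y) = 4 * kp y * (1 - kp y) ^ 2 / (1 + kp y) ^ 4 := by
  have p := sq4_pos hy
  rw [xInv, kp_two_mul_sq4 hy, kp]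
  field_simp
  ring

lemma odeDefect_two_mul {y : ℝ} (hy : 0 < y) :
    odeDefect y = 2 * (1 + kp y) * odeDefect (2 * y) := by
  have p1 := kp_pos hy
  have p2 := thInv_pos hy
  have h : 2 * (1 + kp y) * odeDefect (2 * y) = (1 + kp y) * (2 * thInv2 (2 * y))
      + 2 * (1 + kp y) * (π ^ 2 / 4 * xInv (2 * y) / thInv (2 * y) ^ 3) := by
    rw [odeDefect]; ring
  rw [h, thInv2_two_mul hy, xInv_two_mul hy, thInv_two_mul hy, odeDefect, xInv]
  field_simp
  ring

lemma tendsto_odeDefect_mul_exp :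
    ∃ L, Tendsto (fun y => odeDefect y * Real.exp (π * y)) atTop (𝓝 L) := by
  have t1 := tendsto_thD_mul_exp 0
  have t2 := tendsto_thD_mul_exp 1
  have l1 := ((t2.const_mul (-2)).div (tendsto_th.pow 3) (by norm_num)).add
    (((t1.mul (tendsto_thD 0)).const_mul 6).div (tendsto_th.pow 4) (by norm_num))
  have l2 := (((tendsto_ph.pow 4).mul ((tendsto_th_sub_ph_mul_exp.mul
    (tendsto_th.add tendsto_ph)).mul ((tendsto_th.pow 2).add (tendsto_ph.pow 2)))).div
    (tendsto_th.pow 2) (by norm_num)).const_mul (π ^ 2 / 4)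
  refine ⟨_, (l1.add l2).congr' ?_⟩
  filter_upwards [eventually_gt_atTop 0] with y hy
  have p := th_pos hy
  simp only [odeDefect, thInv2, xInv, thInv, kp, sq4, Pi.div_apply, zero_add, Nat.reduceAdd]
  field_simp
  ring

lemma odeDefect_eq_zero {y : ℝ} (hy : 0 < y) : odeDefect y = 0 := by
  obtain ⟨L, hL⟩ := tendsto_odeDefect_mul_exp
  have hlim : Tendsto (fun y => y ^ 2 * |odeDefect y|) atTop (𝓝 0) := by
    have h1 := (Real.tendsto_pow_mul_exp_neg_atTop_nhds_zero 2).mul (hL.abs)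
    have h2 : Tendsto (fun y : ℝ => Real.exp (-((π - 1) * y))) atTop (𝓝 0) :=
      Real.tendsto_exp_neg_atTop_nhds_zero.comp
        (tendsto_id.const_mul_atTop (by linarith [Real.pi_gt_three]))
    have h3 := h1.mul h2
    simp only [zero_mul, mul_zero] at h3
    refine h3.congr fun z => ?_
    rw [abs_mul, Real.abs_exp]
    have e : Real.exp (-z) * Real.exp (π * z) * Real.exp (-((π - 1) * z)) = 1 := by
      rw [← Real.exp_add, ← Real.exp_add,
        show -z + π * z + -((π - 1) * z) = 0 by ring, Real.exp_zero]
    linear_combination (z ^ 2 * |odeDefect z|) * e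
  have hmono : ∀ n : ℕ, y ^ 2 * |odeDefect y|
      ≤ ((2 : ℝ) ^ n * y) ^ 2 * |odeDefect ((2 : ℝ) ^ n * y)| := by
    intro n
    induction n with
    | zero => simp
    | succ n ih =>
      have hz : 0 < (2 : ℝ) ^ n * y := by positivity
      refine ih.trans ?_
      rw [show (2 : ℝ) ^ (n + 1) * y = 2 * ((2 : ℝ) ^ n * y) by ring]
      set z := (2 : ℝ) ^ n * y
      have p1 := kp_pos hz
      have p2 := kp_lt_one hz
      rw [odeDefect_two_mul hz, abs_mul, abs_of_pos (by positivity)]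
      have : 0 ≤ z ^ 2 * |odeDefect (2 * z)| := by positivity
      nlinarith
  have h := ge_of_tendsto' (hlim.comp (tendsto_two_pow_mul hy)) hmono
  have h2 : 0 < y ^ 2 := by positivity
  have h3 : |odeDefect y| ≤ 0 := by
    by_contra! hc
    nlinarith
  exact abs_eq_zero.1 (le_antisymm h3 (abs_nonneg _))

lemma thInv2_eq {y : ℝ} (hy : 0 < y) : thInv2 y = -(π ^ 2 / 4 * xInv y / thInv y ^ 3) := by
  have := odeDefect_eq_zero hy
  rw [odeDefect] at this
  linarith

lemma thInv_functional {y : ℝ} (hy : 0 < y) : thInv y = y * thInv y⁻¹ := by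
  rw [thInv, thInv, th_functional hy, mul_inv, inv_inv]

lemma xInv_inv {y : ℝ} (hy : 0 < y) : xInv y⁻¹ = xInv y := by
  have hy' : 0 < y⁻¹ := by positivity
  have hinv : ∀ {z : ℝ}, 0 < z → HasDerivAt (fun z : ℝ => z⁻¹) (-(z ^ 2)⁻¹) z := fun hz =>
    hasDerivAt_inv hz.ne'
  have h1 : ∀ z : ℝ, 0 < z → thInv1 z = thInv z⁻¹ - z⁻¹ * thInv1 z⁻¹ := by
    intro z hz
    have hz' : 0 < z⁻¹ := by positivity
    have h := (hasDerivAt_id z).mul ((hasDerivAt_thInv hz').comp z (hinv hz))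
    have h4 : thInv =ᶠ[𝓝 z] id * (thInv ∘ fun z => z⁻¹) := by
      filter_upwards [lt_mem_nhds hz] with u hu
      exact thInv_functional hu
    rw [(hasDerivAt_thInv hz).unique (h.congr_of_eventuallyEq h4)]
    simp only [id, Function.comp]
    field_simp
    ring
  have h2 : thInv2 y = thInv2 y⁻¹ / y ^ 3 := by
    have h := ((hasDerivAt_thInv hy').comp y (hinv hy)).sub
      ((hinv hy).mul ((hasDerivAt_thInv1 hy').comp y (hinv hy)))
    have h4 : thInv1 =ᶠ[𝓝 y] (thInv ∘ fun z => z⁻¹)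
        - ((fun z => z⁻¹) * (thInv1 ∘ fun z => z⁻¹)) := by
      filter_upwards [lt_mem_nhds hy] with u hu
      exact h1 u hu
    rw [(hasDerivAt_thInv1 hy).unique (h.congr_of_eventuallyEq h4)]
    simp only [Function.comp]
    field_simp
    ring
  rw [thInv2_eq hy, thInv2_eq hy', thInv_functional hy] at h2
  have p := thInv_pos hy'
  have hπ := Real.pi_pos
  generalize thInv y⁻¹ = a at h2 p
  generalize xInv y⁻¹ = b at h2 ⊢
  field_simp at h2
  linarith

/-- The weight nine combination of theta derivatives, a multiple of the fourth Rankin–Cohen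
bracket of `θ₃` with itself. -/
noncomputable def thBracket (y : ℝ) : ℝ :=
  2 * th y * thD 4 y - 56 * thD 1 y * thD 3 y + 70 * thD 2 y ^ 2

lemma hasDerivAt_xInv {y : ℝ} (hy : 0 < y) :
    HasDerivAt xInv (π * xInv y * (1 - 2 * kp y ^ 2) * th y ^ 4) y := by
  have hk := hasDerivAt_kp hy
  refine ((hk.pow 2).mul ((hk.pow 2).const_sub 1)).congr_deriv ?_
  simp only [Pi.pow_apply, xInv]
  push_cast
  ring

lemma thD_two_eq {y : ℝ} (hy : 0 < y) :
    thD 2 y = 3 * thD 1 y ^ 2 / th y + π ^ 2 / 8 * xInv y * th y ^ 9 := by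
  have p := th_pos hy
  have h := thInv2_eq hy
  rw [thInv2, thInv] at h
  field_simp at h ⊢
  linarith

lemma thD_three_eq {y : ℝ} (hy : 0 < y) :
    thD 3 y = 6 * thD 1 y * thD 2 y / th y - 3 * thD 1 y ^ 3 / th y ^ 2
      + π ^ 2 / 8 * (π * xInv y * (1 - 2 * kp y ^ 2) * th y ^ 13
        + 9 * xInv y * th y ^ 8 * thD 1 y) := by
  have p := th_pos hy
  have h := ((((hasDerivAt_thD 1 hy).pow 2).const_mul 3).div (hasDerivAt_th hy) p.ne').add
    (((hasDerivAt_xInv hy).const_mul (π ^ 2 / 8)).mul ((hasDerivAt_th hy).pow 9))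
  have h4 : thD 2 =ᶠ[𝓝 y] ((fun z => 3 * (thD 1 ^ 2) z) / th)
      + (fun z => π ^ 2 / 8 * xInv z) * th ^ 9 := by
    filter_upwards [lt_mem_nhds hy] with u hu
    exact thD_two_eq hu
  rw [(hasDerivAt_thD 2 hy).unique (h.congr_of_eventuallyEq h4)]
  simp only [Pi.pow_apply]
  field_simp
  push_cast
  ring

lemma thD_four_eq {y : ℝ} (hy : 0 < y) :
    thD 4 y = 6 * (thD 2 y ^ 2 + thD 1 y * thD 3 y) / th y - 15 * thD 1 y ^ 2 * thD 2 y / th y ^ 2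
      + 6 * thD 1 y ^ 4 / th y ^ 3
      + π ^ 2 / 8 * (π ^ 2 * xInv y * (1 - 2 * kp y ^ 2) ^ 2 * th y ^ 17
        - 2 * π ^ 2 * xInv y ^ 2 * th y ^ 17
        + 22 * π * xInv y * (1 - 2 * kp y ^ 2) * th y ^ 12 * thD 1 y
        + 72 * xInv y * th y ^ 7 * thD 1 y ^ 2 + 9 * xInv y * th y ^ 8 * thD 2 y) := by
  have p := th_pos hy
  have ht := hasDerivAt_th hy
  have h1 := hasDerivAt_thD 1 hy
  have hx := hasDerivAt_xInv hy
  have h := (((((h1.const_mul 6).mul (hasDerivAt_thD 2 hy)).div ht p.ne').sub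
    (((h1.pow 3).const_mul 3).div (ht.pow 2) (by simp only [Pi.pow_apply]; positivity))).add
    ((((((hx.const_mul π).mul ((((hasDerivAt_kp hy).pow 2).const_mul 2).const_sub 1)).mul
      (ht.pow 13)).add (((hx.const_mul 9).mul (ht.pow 8)).mul h1))).const_mul (π ^ 2 / 8)))
  have h4 : thD 3 =ᶠ[𝓝 y] fun u => 6 * thD 1 u * thD 2 u / th u - 3 * thD 1 u ^ 3 / th u ^ 2
      + π ^ 2 / 8 * (π * xInv u * (1 - 2 * kp u ^ 2) * th u ^ 13
        + 9 * xInv u * th u ^ 8 * thD 1 u) := by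
    filter_upwards [lt_mem_nhds hy] with u hu
    exact thD_three_eq hu
  rw [(hasDerivAt_thD 3 hy).unique (h.congr_of_eventuallyEq h4)]
  simp only [Pi.pow_apply, Pi.mul_apply, xInv]
  field_simp
  push_cast
  ring

lemma thBracket_eq {y : ℝ} (hy : 0 < y) :
    thBracket y = π ^ 4 / 16 * xInv y * (4 + xInv y) * th y ^ 18 := by
  have p := th_pos hy
  rw [thBracket, thD_four_eq hy, thD_three_eq hy, thD_two_eq hy, xInv]
  field_simp
  ring

lemma thBracket_inv {y : ℝ} (hy : 0 < y) : thBracket y⁻¹ = y ^ 9 * thBracket y := by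
  rw [thBracket_eq hy, thBracket_eq (by positivity), xInv_inv hy]
  have h : th y ^ 18 = (th y ^ 2) ^ 9 := by ring
  rw [h, th_functional hy]
  field_simp

lemma EllK_eq_setIntegral (k : ℝ) :
    EllK k = ∫ x in Set.Ioo (0 : ℝ) 1, 1 / √((1 - x ^ 2) * (1 - k ^ 2 * x ^ 2)) := by
  rw [EllK, intervalIntegral.integral_of_le zero_le_one, integral_Ioc_eq_integral_Ioo]

lemma one_div_sqrt_eq {g d h q : ℝ} (hq : 0 < q) (hg : g = h * q ^ 2) (hd : d * (1 / q) = 1) :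
    d * (1 / √g) = 1 / √h := by
  rw [hg, Real.sqrt_mul' _ (by positivity), Real.sqrt_sq hq.le]
  rw [one_div, mul_inv, mul_comm (√h)⁻¹, ← mul_assoc, ← one_div q, hd, one_mul, one_div]

/-- Gauss's transformation of the complete elliptic integral of the first kind. -/
lemma EllK_gauss {k m : ℝ} (hk0 : 0 ≤ k) (hk1 : k < 1) (hm : m ^ 2 = 4 * k / (1 + k) ^ 2) :
    EllK m = (1 + k) * EllK k := by
  have hcont : ContinuousOn (fun x : ℝ => (1 + k) * x / (1 + k * x ^ 2)) (Set.Icc 0 1) :=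
    fun x hx => (ContinuousAt.div (by fun_prop) (by fun_prop) (by positivity)).continuousWithinAt
  have himg : (fun x : ℝ => (1 + k) * x / (1 + k * x ^ 2)) '' Set.Ioo 0 1 = Set.Ioo 0 1 := by
    refine Set.Subset.antisymm ?_ ?_
    · rintro _ ⟨x, ⟨h0, h1⟩, rfl⟩
      have hx : k * x < 1 := by nlinarith
      refine ⟨by positivity, ?_⟩
      rw [div_lt_one (by positivity)]
      nlinarith
    · have := intermediate_value_Ioo zero_le_one hcont
      have h1 : (1 + k) * 1 / (1 + k * 1 ^ 2) = 1 := by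
        rw [one_pow, mul_one, mul_one]; exact div_self (by positivity)
      simpa only [mul_zero, zero_div, h1] using this
  have hinj : Set.InjOn (fun x : ℝ => (1 + k) * x / (1 + k * x ^ 2)) (Set.Ioo 0 1) := by
    rintro x ⟨hx0, hx1⟩ y ⟨hy0, hy1⟩ h
    simp only at h
    rw [div_eq_div_iff (by positivity) (by positivity)] at h
    have h1 : (1 + k) * (1 - k * (x * y)) * (x - y) = 0 := by linear_combination h
    have h2 : x * y < 1 := by nlinarith
    have h3 : 0 < 1 - k * (x * y) := by nlinarith [mul_pos hx0 hy0]
    have h4 : (1 + k) * (1 - k * (x * y)) ≠ 0 := by positivity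
    linarith [(mul_eq_zero.1 h1).resolve_left h4]
  have hder : ∀ x ∈ Set.Ioo (0 : ℝ) 1, HasDerivWithinAt (fun x : ℝ => (1 + k) * x / (1 + k * x ^ 2))
      ((1 + k) * (1 - k * x ^ 2) / (1 + k * x ^ 2) ^ 2) (Set.Ioo 0 1) x := by
    intro x hx
    refine HasDerivAt.hasDerivWithinAt (HasDerivAt.congr_deriv (HasDerivAt.div
      ((hasDerivAt_id x).const_mul (1 + k)) ((((hasDerivAt_id x).pow 2).const_mul k).const_add 1)
      (show 1 + k * x ^ 2 ≠ 0 by positivity)) ?_)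
    simp only [id]
    congr 1
    norm_num
    ring
  rw [EllK_eq_setIntegral, EllK_eq_setIntegral, ← integral_const_mul]
  conv_lhs => rw [← himg]
  rw [integral_image_eq_integral_abs_deriv_smul measurableSet_Ioo hder hinj]
  refine setIntegral_congr_fun measurableSet_Ioo ?_
  rintro x ⟨h0, h1⟩
  have hx : k * x ^ 2 < 1 := by nlinarith
  have hx' : 0 < 1 - k * x ^ 2 := by linarith
  have e := one_div_sqrt_eq (g := (1 - ((1 + k) * x / (1 + k * x ^ 2)) ^ 2)
      * (1 - m ^ 2 * ((1 + k) * x / (1 + k * x ^ 2)) ^ 2))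
    (d := (1 - k * x ^ 2) / (1 + k * x ^ 2) ^ 2) (h := (1 - x ^ 2) * (1 - k ^ 2 * x ^ 2))
    (q := (1 - k * x ^ 2) / (1 + k * x ^ 2) ^ 2) (by positivity)
    (by rw [hm]; field_simp; ring) (by field_simp)
  simp only [smul_eq_mul]
  rw [abs_of_pos (by positivity), ← e]
  ring

lemma integrableOn_one_div_sqrt :
    IntegrableOn (fun x : ℝ => 1 / √(1 - x ^ 2)) (Set.Ioc 0 1) :=
  intervalIntegral.integrableOn_deriv_of_nonneg Real.continuous_arcsin.continuousOn
    (fun x hx => Real.hasDerivAt_arcsin (by linarith [hx.1]) hx.2.ne) fun x _ => by positivity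

lemma integral_one_div_sqrt : ∫ x in Set.Ioo (0 : ℝ) 1, 1 / √(1 - x ^ 2) = π / 2 := by
  rw [← integral_Ioc_eq_integral_Ioo, ← intervalIntegral.integral_of_le zero_le_one,
    intervalIntegral.integral_eq_sub_of_hasDerivAt_of_le zero_le_one
      Real.continuous_arcsin.continuousOn
      (fun x hx => Real.hasDerivAt_arcsin (by linarith [hx.1]) hx.2.ne)
      ((intervalIntegrable_iff_integrableOn_Ioc_of_le zero_le_one).2 integrableOn_one_div_sqrt)]
  simp

lemma EllK_mem_Icc {k : ℝ} (hk : k ^ 2 < 1) :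
    EllK k ∈ Set.Icc (π / 2) (1 / √(1 - k ^ 2) * (π / 2)) := by
  have hi : IntegrableOn (fun x : ℝ => 1 / √(1 - x ^ 2)) (Set.Ioo 0 1) :=
    integrableOn_one_div_sqrt.mono_set Set.Ioo_subset_Ioc_self
  have hk' : 0 < 1 - k ^ 2 := by linarith
  have hup : ∀ x ∈ Set.Ioo (0 : ℝ) 1, 1 / √((1 - x ^ 2) * (1 - k ^ 2 * x ^ 2))
      ≤ 1 / √(1 - k ^ 2) * (1 / √(1 - x ^ 2)) := by
    rintro x ⟨h0, h1⟩
    have h2 : 0 < 1 - x ^ 2 := by nlinarith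
    rw [one_div_mul_one_div, ← Real.sqrt_mul hk'.le]
    refine one_div_le_one_div_of_le (by positivity) (Real.sqrt_le_sqrt ?_)
    nlinarith [sq_nonneg k, mul_nonneg (sq_nonneg k) h2.le]
  have hlow : ∀ x ∈ Set.Ioo (0 : ℝ) 1, 1 / √(1 - x ^ 2)
      ≤ 1 / √((1 - x ^ 2) * (1 - k ^ 2 * x ^ 2)) := by
    rintro x ⟨h0, h1⟩
    have h2 : 0 < 1 - x ^ 2 := by nlinarith
    have h3 : x ^ 2 < 1 := by linarith
    have h4 : 0 < 1 - k ^ 2 * x ^ 2 := by nlinarith [sq_nonneg k, sq_nonneg x]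
    refine one_div_le_one_div_of_le (by positivity) (Real.sqrt_le_sqrt ?_)
    nlinarith [mul_nonneg (sq_nonneg k) (sq_nonneg x)]
  have hint : IntegrableOn (fun x : ℝ => 1 / √((1 - x ^ 2) * (1 - k ^ 2 * x ^ 2)))
      (Set.Ioo 0 1) := by
    refine Integrable.mono' (hi.const_mul (1 / √(1 - k ^ 2)))
      (Measurable.aestronglyMeasurable (by fun_prop)) ?_
    filter_upwards [ae_restrict_mem measurableSet_Ioo] with x hx
    rw [Real.norm_of_nonneg (by positivity)]
    exact hup x hx
  rw [EllK_eq_setIntegral, ← integral_one_div_sqrt, ← integral_const_mul]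
  exact ⟨setIntegral_mono_on hi hint measurableSet_Ioo hlow,
    setIntegral_mono_on hint (hi.const_mul _) measurableSet_Ioo hup⟩

lemma tendsto_kp : Tendsto kp atTop (𝓝 1) := by
  have h := (tendsto_ph.div tendsto_th one_ne_zero).pow 2
  rwa [div_one, one_pow] at h

lemma tendsto_EllK'_kp : Tendsto (fun y => EllK' (kp y)) atTop (𝓝 (π / 2)) := by
  have h1 : Tendsto (fun y => 1 / √(kp y ^ 2) * (π / 2)) atTop (𝓝 (π / 2)) := by
    have h := ((Real.continuous_sqrt.tendsto _).comp (tendsto_kp.pow 2)).inv₀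
      (by rw [one_pow, Real.sqrt_one]; exact one_ne_zero)
    have h := h.mul_const (π / 2)
    rw [one_pow, Real.sqrt_one, inv_one, one_mul] at h
    simpa only [one_div, Function.comp] using h
  have key : ∀ᶠ y in atTop, EllK' (kp y) ∈ Set.Icc (π / 2) (1 / √(kp y ^ 2) * (π / 2)) := by
    filter_upwards [eventually_gt_atTop 0] with y hy
    have p := kp_pos hy
    have q := kp_lt_one hy
    have hs : √(1 - kp y ^ 2) ^ 2 = 1 - kp y ^ 2 := Real.sq_sqrt (by nlinarith)
    have := EllK_mem_Icc (k := √(1 - kp y ^ 2)) (by rw [hs]; nlinarith)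
    rwa [hs, sub_sub_cancel] at this
  exact tendsto_of_tendsto_of_tendsto_of_le_of_le' tendsto_const_nhds h1
    (key.mono fun _ h => h.1) (key.mono fun _ h => h.2)

lemma kp_two_mul_sq {y : ℝ} (hy : 0 < y) : kp (2 * y) ^ 2 = 4 * kp y / (1 + kp y) ^ 2 := by
  rw [kp_two_mul_sq4 hy, kp, div_pow, mul_pow]
  norm_num

lemma EllK'_kp_two_mul {y : ℝ} (hy : 0 < y) :
    EllK' (kp y) = 2 / (1 + kp y) * EllK' (kp (2 * y)) := by
  have p := kp_pos hy
  have q := kp_lt_one hy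
  have hs : √(1 - kp (2 * y) ^ 2) = (1 - kp y) / (1 + kp y) := by
    have e : 1 - kp (2 * y) ^ 2 = ((1 - kp y) / (1 + kp y)) ^ 2 := by
      rw [kp_two_mul_sq hy]; field_simp; ring
    rw [e, Real.sqrt_sq (div_nonneg (by linarith) (by linarith))]
  rw [EllK', EllK', hs]
  have h : 1 + (1 - kp y) / (1 + kp y) = 2 / (1 + kp y) := by field_simp; ring
  rw [← h]
  refine EllK_gauss (div_nonneg (by linarith) (by linarith)) ?_ ?_
  · rw [div_lt_one (by linarith)]; linarith
  · rw [Real.sq_sqrt (by nlinarith), h]; field_simp; ring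

/-- Jacobi's evaluation `K = π / 2 * θ₃²`. -/
lemma EllK'_kp {y : ℝ} (hy : 0 < y) : EllK' (kp y) = π / 2 * th y ^ 2 := by
  have key : ∀ n : ℕ, EllK' (kp ((2 : ℝ) ^ n * y)) / th ((2 : ℝ) ^ n * y) ^ 2
      = EllK' (kp y) / th y ^ 2 := by
    intro n
    induction n with
    | zero => simp
    | succ n ih =>
      have hz : 0 < (2 : ℝ) ^ n * y := by positivity
      rw [← ih, show (2 : ℝ) ^ (n + 1) * y = 2 * ((2 : ℝ) ^ n * y) by ring,
        EllK'_kp_two_mul hz, th_two_mul_sq hz]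
      have p := kp_pos hz
      have q := th_pos hz
      field_simp
  have hlim := (tendsto_EllK'_kp.div (tendsto_th.pow 2) (by norm_num)).comp (tendsto_two_pow_mul hy)
  have h := tendsto_nhds_unique (tendsto_const_nhds.congr fun n => (key n).symm) hlim
  have p := th_pos hy
  rw [one_pow, div_one] at h
  rwa [div_eq_iff (by positivity)] at h

lemma strictMonoOn_kp : StrictMonoOn kp (Set.Ioi 0) := by
  refine strictMonoOn_of_deriv_pos (convex_Ioi 0)
    (fun y hy => (hasDerivAt_kp hy).continuousAt.continuousWithinAt) fun y hy => ?_
  rw [interior_Ioi] at hy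
  rw [(hasDerivAt_kp hy).deriv]
  have p := kp_pos hy
  have q := kp_lt_one hy
  have r := th_pos hy
  have : 0 < 1 - kp y ^ 2 := by nlinarith
  positivity

lemma exists_kp_lt {a : ℝ} (ha : 0 < a) : ∃ y, 0 < y ∧ kp y < a := by
  have step : ∀ {y : ℝ}, 0 < y → kp y ≤ kp (2 * y) ^ 2 := by
    intro y hy
    have p := kp_pos hy
    have q := kp_lt_one hy
    rw [kp_two_mul_sq hy, le_div_iff₀ (by positivity)]
    have : (1 + kp y) ^ 2 ≤ 4 := by nlinarith
    nlinarith
  have key : ∀ n : ℕ, kp ((2⁻¹ : ℝ) ^ n) ≤ kp 1 ^ (2 ^ n) := by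
    intro n
    induction n with
    | zero => simp
    | succ n ih =>
      have hz : 0 < (2⁻¹ : ℝ) ^ (n + 1) := by positivity
      refine (step hz).trans ?_
      rw [show 2 * (2⁻¹ : ℝ) ^ (n + 1) = 2⁻¹ ^ n by rw [pow_succ]; ring, pow_succ 2 n, pow_mul]
      exact pow_le_pow_left₀ (kp_pos (by positivity)).le ih 2
  have hlim := (tendsto_pow_atTop_nhds_zero_of_lt_one (kp_pos one_pos).le
    (kp_lt_one one_pos)).comp (tendsto_pow_atTop_atTop_of_one_lt (one_lt_two (α := ℕ)))
  obtain ⟨n, hn⟩ := (hlim.eventually_lt_const ha).exists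
  exact ⟨_, by positivity, (key n).trans_lt hn⟩

lemma kp_image : kp '' Set.Ioi 0 = Set.Ioo 0 1 := by
  refine Set.Subset.antisymm ?_ ?_
  · rintro _ ⟨y, hy, rfl⟩
    exact ⟨kp_pos hy, kp_lt_one hy⟩
  · rintro a ⟨h0, h1⟩
    obtain ⟨y, hy, hya⟩ := exists_kp_lt h0
    obtain ⟨z, hza, hz⟩ := ((tendsto_kp.eventually_const_lt h1).and
      (eventually_gt_atTop y)).exists
    have hc : ContinuousOn kp (Set.Icc y z) := fun x hx =>
      (hasDerivAt_kp (hy.trans_le hx.1)).continuousAt.continuousWithinAt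
    obtain ⟨x, hx, hxa⟩ := intermediate_value_Ioo hz.le hc ⟨hya, hza⟩
    exact ⟨x, hy.trans hx.1, hxa⟩

lemma integral_thBracket_eq_mul_pow :
    ∫ y in Set.Ioi 0, thBracket y = ∫ y in Set.Ioi 0, y ^ 7 * thBracket y := by
  have himg : (fun y : ℝ => y⁻¹) '' Set.Ioi 0 = Set.Ioi 0 := by
    ext a
    refine ⟨?_, fun ha => ⟨a⁻¹, Set.mem_Ioi.2 (inv_pos.2 ha), inv_inv a⟩⟩
    rintro ⟨y, hy, rfl⟩
    exact inv_pos.2 (Set.mem_Ioi.1 hy)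
  conv_lhs => rw [← himg]
  rw [integral_image_eq_integral_abs_deriv_smul measurableSet_Ioi
    (fun y hy => (hasDerivAt_inv (ne_of_gt hy)).hasDerivWithinAt) inv_injective.injOn]
  refine setIntegral_congr_fun measurableSet_Ioi fun y hy => ?_
  have hy' : 0 < y := hy
  simp only [smul_eq_mul]
  rw [abs_neg, abs_of_pos (by positivity), thBracket_inv hy']
  field_simp

lemma integral_EllK'_eq :
    ∫ k in (0 : ℝ)..(1 : ℝ), k * (4 + k ^ 2 - k ^ 4) * (EllK' k) ^ 7
      = π ^ 4 / 16 * ∫ y in Set.Ioi 0, y ^ 7 * thBracket y := by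
  rw [intervalIntegral.integral_of_le zero_le_one, integral_Ioc_eq_integral_Ioo, ← kp_image,
    integral_image_eq_integral_abs_deriv_smul measurableSet_Ioi
      (fun y hy => (hasDerivAt_kp hy).hasDerivWithinAt) strictMonoOn_kp.injOn,
    ← integral_thBracket_eq_mul_pow, ← integral_const_mul]
  refine setIntegral_congr_fun measurableSet_Ioi fun y hy => ?_
  have hy' : 0 < y := hy
  have p := kp_pos hy'
  have q := kp_lt_one hy'
  have r := th_pos hy'
  have : 0 < 1 - kp y ^ 2 := by nlinarith
  simp only [smul_eq_mul]
  rw [abs_of_pos (by positivity), EllK'_kp hy', thBracket_eq hy', xInv]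
  ring

lemma weierstrass_relation_eventuallyEq (L : PeriodPair) :
    (fun z => (L.derivWeierstrassPExcept 0 z * z ^ 3 - 2) ^ 2 - 4 *
      (L.weierstrassPExcept 0 z * z ^ 2 + 1) ^ 3 + L.g₂ *
      (L.weierstrassPExcept 0 z * z ^ 6 + z ^ 4) + L.g₃ * z ^ 6) =ᶠ[𝓝 0] fun _ => 0 := by
  filter_upwards [L.compl_lattice_sdiff_singleton_mem_nhds _] with z hz
  by_cases hz0 : z = 0
  · simp [hz0]; norm_num
  replace hz : z ∉ L.lattice := by simp_all
  have h := L.derivWeierstrassP_sq z hz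
  have h1 := L.derivWeierstrassPExcept_def 0 z
  have h2 := L.weierstrassPExcept_def 0 z
  simp only [ZeroMemClass.coe_zero, sub_zero] at h1 h2
  rw [h1, h2]
  field_simp
  simp only [ne_eq, OfNat.ofNat_ne_zero, not_false_eq_true, zero_pow, div_zero]
  linear_combination z ^ 6 * h

/-- The relation between the Eisenstein sums of weights eight and four. -/
lemma seven_mul_G_eight (L : PeriodPair) : 7 * L.G 8 = 3 * L.G 4 ^ 2 := by
  have hd (n : WithTop ℕ∞) : ContDiffAt ℂ n (L.weierstrassPExcept 0) 0 :=
    (L.analyticAt_weierstrassPExcept 0).contDiffAt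
  have hd' (n : WithTop ℕ∞) : ContDiffAt ℂ n (L.derivWeierstrassPExcept 0) 0 :=
    (L.analyticAt_derivWeierstrassPExcept 0).contDiffAt
  have h := (weierstrass_relation_eventuallyEq L).iteratedDeriv_eq 8
  simp_rw [pow_succ (_ + _), pow_succ (_ - _), pow_zero, one_mul] at h
  simp (discharger := fun_prop) only [iteratedDeriv_fun_add, iteratedDeriv_fun_sub,
    iteratedDeriv_fun_mul, iteratedDeriv_const, iteratedDeriv_fun_pow_zero,
    PeriodPair.iteratedDeriv_derivWeierstrassPExcept_self,
    PeriodPair.iteratedDeriv_weierstrassPExcept_self] at h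
  simp [Finset.sum_range_succ, L.G_eq_zero_of_odd 3 (by decide), L.G_eq_zero_of_odd 5 (by decide),
    L.G_eq_zero_of_odd 7 (by decide), PeriodPair.g₂, PeriodPair.g₃] at h
  norm_num [Nat.choose, Nat.factorial] at h
  linear_combination (-1 / 1451520) * h

/-- The period pair `(1, i)` of the Gaussian integers. -/
noncomputable def gaussPair : PeriodPair where
  ω₁ := 1
  ω₂ := Complex.I
  indep := by
    rw [LinearIndependent.pair_iff]
    intro s t h
    have h1 := congrArg Complex.re h
    have h2 := congrArg Complex.im h
    simp at h1 h2
    exact ⟨h1, h2⟩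

lemma gaussPair_symm_apply (p : ℤ × ℤ) :
    ((gaussPair.latticeEquivProd.symm p : gaussPair.lattice) : ℂ) = p.1 + p.2 * Complex.I := by
  rw [PeriodPair.latticeEquiv_symm_apply]
  simp [gaussPair]

lemma hasSum_gaussPair_G {n : ℕ} (hn : 2 < n) :
    HasSum (fun p : ℤ × ℤ => (((p.1 : ℂ) + p.2 * Complex.I) ^ n)⁻¹) (gaussPair.G n) := by
  have h := gaussPair.hasSum_sumInvPow 0 hn
  rw [PeriodPair.sumInvPow_zero, ← gaussPair.latticeEquivProd.symm.toEquiv.hasSum_iff] at h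
  refine h.congr_fun fun p => ?_
  simp only [Function.comp_apply, sub_zero]
  rw [LinearEquiv.coe_toEquiv, gaussPair_symm_apply]

lemma re_gauss_pow_eight (m n : ℝ) : (((m : ℂ) + n * Complex.I) ^ 8).re
    = m ^ 8 - 28 * m ^ 6 * n ^ 2 + 70 * m ^ 4 * n ^ 4 - 28 * m ^ 2 * n ^ 6 + n ^ 8 := by
  simp only [pow_succ, pow_zero, one_mul, Complex.mul_re, Complex.mul_im, Complex.add_re,
    Complex.add_im, Complex.ofReal_re, Complex.ofReal_im, Complex.I_re, Complex.I_im]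
  ring

lemma hasSum_thD_mul (i j : ℕ) {y : ℝ} (hy : 0 < y) : HasSum (fun p : ℤ × ℤ =>
    (-π * p.1 ^ 2) ^ i * (-π * p.2 ^ 2) ^ j * Real.exp (-π * y * ((p.1 : ℝ) ^ 2 + (p.2 : ℝ) ^ 2)))
    (thD i y * thD j y) := by
  rw [thD, thD, (thetaSummable_pow i).mul_eq (thetaSummable_pow j) hy]
  exact ((thetaSummable_pow i).summable_mul (thetaSummable_pow j) hy).hasSum

/-- The bracket of theta derivatives is a theta series with a harmonic polynomial. -/
lemma hasSum_thBracket {y : ℝ} (hy : 0 < y) : HasSum (fun p : ℤ × ℤ =>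
    π ^ 4 * (((p.1 : ℂ) + p.2 * Complex.I) ^ 8).re
      * Real.exp (-π * y * ((p.1 : ℝ) ^ 2 + (p.2 : ℝ) ^ 2))) (thBracket y) := by
  have h := (((hasSum_thD_mul 0 4 hy).add (hasSum_thD_mul 4 0 hy)).sub
    (((hasSum_thD_mul 1 3 hy).add (hasSum_thD_mul 3 1 hy)).mul_left 28)).add
    ((hasSum_thD_mul 2 2 hy).mul_left 70)
  have e : thBracket y = thD 0 y * thD 4 y + thD 4 y * thD 0 y
      - 28 * (thD 1 y * thD 3 y + thD 3 y * thD 1 y) + 70 * (thD 2 y * thD 2 y) := by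
    rw [thBracket, thD_zero]; ring
  rw [e]
  refine h.congr_fun fun p => ?_
  have := re_gauss_pow_eight p.1 p.2
  push_cast at this
  rw [this]
  ring

lemma integral_pow_seven_mul_exp {r : ℝ} (hr : 0 < r) :
    ∫ y in Set.Ioi 0, y ^ 7 * Real.exp (-π * y * r) = 5040 / (π * r) ^ 8 := by
  have h := Real.integral_rpow_mul_exp_neg_mul_Ioi (a := 8) (by norm_num) (mul_pos Real.pi_pos hr)
  have hG : Real.Gamma 8 = 5040 := by
    rw [show (8 : ℝ) = ((7 : ℕ) : ℝ) + 1 by norm_num, Real.Gamma_nat_eq_factorial]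
    norm_num [Nat.factorial]
  rw [hG, show (8 : ℝ) = ((8 : ℕ) : ℝ) by norm_num, Real.rpow_natCast, one_div, inv_pow,
    inv_mul_eq_div] at h
  rw [← h]
  refine setIntegral_congr_fun measurableSet_Ioi fun y _ => ?_
  rw [show ((8 : ℕ) : ℝ) - 1 = ((7 : ℕ) : ℝ) by norm_num, Real.rpow_natCast]
  ring_nf

/-- The Mellin transform of the bracket at the centre is an Eisenstein sum. -/
lemma integral_pow_mul_thBracket :
    ∫ y in Set.Ioi 0, y ^ 7 * thBracket y = 5040 / π ^ 4 * (gaussPair.G 8).re := by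
  have hπ := Real.pi_pos
  set z : ℤ × ℤ → ℂ := fun p => (p.1 : ℂ) + p.2 * Complex.I with hz
  set r : ℤ × ℤ → ℝ := fun p => (p.1 : ℝ) ^ 2 + (p.2 : ℝ) ^ 2 with hr
  set F : ℤ × ℤ → ℝ → ℝ := fun p y => y ^ 7 * (π ^ 4 * (z p ^ 8).re * Real.exp (-π * y * r p))
    with hF
  have hre : ∀ p, ((z p ^ 8)⁻¹).re = (z p ^ 8).re / r p ^ 8 := by
    intro p
    rw [Complex.inv_re, map_pow]
    congr 2
    simp [hz, hr, Complex.normSq_apply, sq]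
  have hrpos : ∀ p, p ≠ 0 → 0 < r p := by
    rintro ⟨m, n⟩ h
    have h2 : m ≠ 0 ∨ n ≠ 0 := by
      by_contra! hc
      exact h (Prod.ext hc.1 hc.2)
    rcases h2 with h2 | h2 <;> positivity
  have hzero : z 0 ^ 8 = 0 := by simp [hz]
  have hF0 : F 0 = 0 := by
    ext y
    simp [hF, hzero]
  have hint : ∀ p, ∫ y in Set.Ioi 0, F p y = 5040 / π ^ 4 * ((z p ^ 8)⁻¹).re := by
    intro p
    rcases eq_or_ne p 0 with rfl | hp
    · simp [hF0, hzero]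
    have : ∀ y, F p y = π ^ 4 * (z p ^ 8).re * (y ^ 7 * Real.exp (-π * y * r p)) := fun y => by
      simp only [hF]; ring
    simp_rw [this]
    rw [integral_const_mul, integral_pow_seven_mul_exp (hrpos p hp), hre]
    have := hrpos p hp
    field_simp
  have hnorm : ∀ p, ∫ y in Set.Ioi 0, ‖F p y‖ = |5040 / π ^ 4 * ((z p ^ 8)⁻¹).re| := by
    intro p
    rcases eq_or_ne p 0 with rfl | hp
    · simp [hF0, hzero]
    have h1 : ∫ y in Set.Ioi 0, ‖F p y‖ = ∫ y in Set.Ioi 0,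
        π ^ 4 * |(z p ^ 8).re| * (y ^ 7 * Real.exp (-π * y * r p)) := by
      refine setIntegral_congr_fun measurableSet_Ioi fun y (hy : 0 < y) => ?_
      simp only [hF, Real.norm_eq_abs, abs_mul, abs_pow, abs_of_pos hy, abs_of_pos hπ, Real.abs_exp]
      ring
    have := hrpos p hp
    rw [h1, integral_const_mul, integral_pow_seven_mul_exp this, hre, abs_mul, abs_div _ (r p ^ 8),
      abs_of_pos (show 5040 / π ^ 4 > 0 by positivity), abs_of_pos (pow_pos this 8)]
    field_simp
  have hFi : ∀ p, IntegrableOn (F p) (Set.Ioi 0) := by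
    intro p
    rcases eq_or_ne p 0 with rfl | hp
    · rw [hF0]; exact integrableOn_zero
    have h1 : IntegrableOn (fun y => y ^ 7 * Real.exp (-π * y * r p)) (Set.Ioi 0) := by
      refine Integrable.of_integral_ne_zero ?_
      rw [integral_pow_seven_mul_exp (hrpos p hp)]
      have := hrpos p hp
      positivity
    refine (h1.const_mul (π ^ 4 * (z p ^ 8).re)).congr (ae_of_all _ fun y => ?_)
    simp only [hF]
    ring
  have hG := hasSum_gaussPair_G (n := 8) (by norm_num)
  have hs : Summable fun p => ∫ y in Set.Ioi 0, ‖F p y‖ := by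
    refine Summable.of_nonneg_of_le (fun p => by rw [hnorm]; positivity) (fun p => ?_)
      (hG.summable.norm.mul_left (5040 / π ^ 4))
    rw [hnorm, abs_mul, abs_of_pos (by positivity)]
    exact mul_le_mul_of_nonneg_left (Complex.abs_re_le_norm _) (by positivity)
  have h := hasSum_integral_of_summable_integral_norm hFi hs
  simp_rw [hint] at h
  have h2 := h.unique ((Complex.hasSum_re hG).mul_left (5040 / π ^ 4))
  rw [← h2]
  refine setIntegral_congr_fun measurableSet_Ioi fun y hy => ?_
  exact ((hasSum_thBracket hy).mul_left (y ^ 7)).tsum_eq.symm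

lemma hasSum_gaussPair_iff {f : ℂ → ℂ} {a : ℂ} :
    HasSum (fun l : gaussPair.lattice => f l) a ↔
      HasSum (fun p : ℤ × ℤ => f (p.1 + p.2 * Complex.I)) a := by
  rw [← gaussPair.latticeEquivProd.symm.toEquiv.hasSum_iff]
  refine iff_of_eq (congrArg (HasSum · a) (funext fun p => ?_))
  simp only [Function.comp_apply]
  rw [LinearEquiv.coe_toEquiv, gaussPair_symm_apply]

/-- Sums over the Gaussian integers are invariant under complex conjugation. -/
lemma conj_eq_of_hasSum_gaussPair {f : ℂ → ℂ} {a : ℂ}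
    (hf : ∀ z, f (starRingEnd ℂ z) = starRingEnd ℂ (f z))
    (h : HasSum (fun l : gaussPair.lattice => f l) a) : starRingEnd ℂ a = a := by
  rw [hasSum_gaussPair_iff] at h
  let e : ℤ × ℤ ≃ ℤ × ℤ :=
    ⟨fun p => (p.1, -p.2), fun p => (p.1, -p.2), fun p => by simp, fun p => by simp⟩
  have h2 : HasSum (fun p : ℤ × ℤ => starRingEnd ℂ (f (p.1 + p.2 * Complex.I)))
    (starRingEnd ℂ a) := Complex.hasSum_conj'.2 h
  have h3 := e.hasSum_iff.2 h
  refine h2.unique (h3.congr_fun fun p => ?_)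
  rw [← hf]
  simp [e]

/-- Sums over the Gaussian integers are invariant under multiplication by `i`. -/
lemma eq_zero_of_hasSum_gaussPair {f : ℂ → ℂ} {a : ℂ} (hf : ∀ z, f (Complex.I * z) = - f z)
    (h : HasSum (fun l : gaussPair.lattice => f l) a) : a = 0 := by
  rw [hasSum_gaussPair_iff] at h
  let e : ℤ × ℤ ≃ ℤ × ℤ :=
    ⟨fun p => (-p.2, p.1), fun p => (p.2, -p.1), fun p => by simp, fun p => by simp⟩
  have h2 := h.neg
  have h3 := e.hasSum_iff.2 h
  have h4 := h2.unique (h3.congr_fun fun p => by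
    rw [← hf]
    simp only [Function.comp_apply, e, Equiv.coe_fn_mk]
    push_cast
    congr 1
    linear_combination (p.2 : ℂ) * Complex.I_sq)
  have : (2 : ℂ) * a = 0 := by linear_combination -h4
  simpa using this

lemma gaussPair_g₃ : gaussPair.g₃ = 0 := by
  have h := gaussPair.hasSum_sumInvPow 0 (r := 6) (by norm_num)
  rw [PeriodPair.sumInvPow_zero] at h
  simp only [sub_zero] at h
  rw [PeriodPair.g₃, eq_zero_of_hasSum_gaussPair (f := fun z => (z ^ 6)⁻¹) (fun z => ?_) h,
    mul_zero]
  have : Complex.I ^ 6 = -1 := by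
    rw [show 6 = 2 * 3 by rfl, pow_mul, Complex.I_sq]; norm_num
  rw [mul_pow, this, neg_one_mul, inv_neg]

lemma exists_gaussPair_G_four : ∃ r : ℝ, 0 < r ∧ gaussPair.G 4 = r := by
  have h := tsum_eisSummand_eq_tsum_sigma_mul_cexp_pow (k := 4) (by norm_num)
    (by decide) UpperHalfPlane.I
  have hG := hasSum_gaussPair_G (n := 4) (by norm_num)
  have h1 : gaussPair.G 4 = ∑' v : Fin 2 → ℤ, EisensteinSeries.eisSummand 4 v UpperHalfPlane.I := by
    rw [← hG.tsum_eq, ← (finTwoArrowEquiv ℤ).symm.tsum_eq, ← (Equiv.prodComm ℤ ℤ).tsum_eq]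
    refine tsum_congr fun p => ?_
    simp [EisensteinSeries.eisSummand, add_comm]
  set q : ℝ := Real.exp (-(2 * π)) with hq
  have h2 : Complex.exp (2 * π * Complex.I * (UpperHalfPlane.I : UpperHalfPlane)) = q := by
    rw [UpperHalfPlane.coe_I, hq]
    push_cast
    congr 1
    linear_combination (2 * π : ℂ) * Complex.I_sq
  refine ⟨2 * (π ^ 4 / 90) + 2 * ((2 * π) ^ 4 / 6) *
    ∑' n : ℕ+, (ArithmeticFunction.sigma 3 n : ℝ) * q ^ (n : ℕ), ?_, ?_⟩
  · have : 0 ≤ ∑' n : ℕ+, (ArithmeticFunction.sigma 3 n : ℝ) * q ^ (n : ℕ) :=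
      tsum_nonneg fun n => by positivity
    positivity
  rw [h1]
  have h3 : riemannZeta (4 : ℕ) = π ^ 4 / 90 := by
    rw [Nat.cast_ofNat, riemannZeta_four]
  refine h.trans ?_
  rw [h3, h2]
  have h4 : (-2 * π * Complex.I) ^ 4 = (2 * π : ℂ) ^ 4 := by
    rw [mul_pow, Complex.I_pow_four]; ring
  rw [h4]
  push_cast
  norm_num [Nat.factorial]

section WeierstrassODE

variable {P P' : ℝ → ℝ} {e : ℝ}

lemma weierstrass_ode_ge (he : 0 < e) (hP : ∀ x ∈ Set.Ioo (0 : ℝ) 1, HasDerivAt P (P' x) x)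
    (hode : ∀ x ∈ Set.Ioo (0 : ℝ) 1, P' x ^ 2 = 4 * P x * (P x ^ 2 - e ^ 2))
    (htop : Tendsto P (𝓝[>] 0) atTop) {x : ℝ} (hx : x ∈ Set.Ioo (0 : ℝ) 1) : e ≤ P x := by
  by_contra! hlt
  obtain ⟨y, hy1, hy2⟩ := ((htop.eventually_ge_atTop e).and
    (Ioo_mem_nhdsGT hx.1)).exists
  have hsub : Set.Icc y x ⊆ Set.Ioo (0 : ℝ) 1 := Set.Icc_subset_Ioo hy2.1 hx.2
  have hc : ContinuousOn P (Set.Icc y x) :=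
    fun z hz => (hP z (hsub hz)).continuousAt.continuousWithinAt
  obtain ⟨z, hz, hz2⟩ := intermediate_value_Icc' hy2.2.le hc
    (show max (P x) (e / 2) ∈ Set.Icc (P x) (P y) from
      ⟨le_max_left _ _, max_le (hlt.le.trans hy1) (by linarith)⟩)
  have h := hode z (hsub hz)
  have h1 : 0 < P z := by rw [hz2]; exact lt_max_of_lt_right (by positivity)
  have h2 : P z < e := by rw [hz2]; exact max_lt hlt (by linarith)
  nlinarith [sq_nonneg (P' z), mul_pos h1 (show 0 < e ^ 2 - P z ^ 2 by nlinarith)]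

lemma weierstrass_ode_eq_of_deriv_eq_zero (he : 0 < e)
    (hP : ∀ x ∈ Set.Ioo (0 : ℝ) 1, HasDerivAt P (P' x) x)
    (hode : ∀ x ∈ Set.Ioo (0 : ℝ) 1, P' x ^ 2 = 4 * P x * (P x ^ 2 - e ^ 2))
    (htop : Tendsto P (𝓝[>] 0) atTop) {x : ℝ} (hx : x ∈ Set.Ioo (0 : ℝ) 1) (h0 : P' x = 0) :
    P x = e := by
  have h := hode x hx
  have h1 := weierstrass_ode_ge he hP hode htop hx
  have hp := he.trans_le h1
  rw [h0] at h
  have h2 : P x * (P x + e) * (P x - e) = 0 := by linear_combination -h / 4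
  have h3 : P x * (P x + e) ≠ 0 := by positivity
  linarith [(mul_eq_zero.1 h2).resolve_left h3]

lemma weierstrass_ode_gt (he : 0 < e) (hP : ∀ x ∈ Set.Ioo (0 : ℝ) 1, HasDerivAt P (P' x) x)
    (hode : ∀ x ∈ Set.Ioo (0 : ℝ) 1, P' x ^ 2 = 4 * P x * (P x ^ 2 - e ^ 2))
    (htop : Tendsto P (𝓝[>] 0) atTop) (han : AnalyticOnNhd ℝ P (Set.Ioo 0 1))
    (hhalf : P' (1 / 2) = 0) {x : ℝ} (hx : x ∈ Set.Ioo (0 : ℝ) (1 / 2)) : e < P x := by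
  have hx1 : x ∈ Set.Ioo (0 : ℝ) 1 := ⟨hx.1, hx.2.trans (by norm_num)⟩
  refine (weierstrass_ode_ge he hP hode htop hx1).lt_of_ne' fun hxe => ?_
  have hsub : Set.Icc x (1 / 2) ⊆ Set.Ioo (0 : ℝ) 1 := Set.Icc_subset_Ioo hx.1 (by norm_num)
  have hc : ContinuousOn P (Set.Icc x (1 / 2)) :=
    fun z hz => (hP z (hsub hz)).continuousAt.continuousWithinAt
  have hhe := weierstrass_ode_eq_of_deriv_eq_zero he hP hode htop (hsub ⟨hx.2.le, le_rfl⟩) hhalf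
  have hconst : ∀ y ∈ Set.Ioo x (1 / 2), P y = e := by
    intro y hy
    refine le_antisymm ?_ (weierstrass_ode_ge he hP hode htop (hsub (Set.Ioo_subset_Icc_self hy)))
    obtain ⟨z, hz, hmax⟩ := isCompact_Icc.exists_isMaxOn (Set.nonempty_Icc.2 hx.2.le) hc
    refine (hmax (Set.Ioo_subset_Icc_self hy)).trans ?_
    rcases eq_or_ne z x with rfl | hzx
    · exact hxe.le
    rcases eq_or_ne z (1 / 2) with rfl | hzh
    · exact hhe.le
    have hloc : IsLocalMax P z :=
      hmax.isLocalMax (Icc_mem_nhds (hz.1.lt_of_ne' hzx) (hz.2.lt_of_ne hzh))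
    exact (weierstrass_ode_eq_of_deriv_eq_zero he hP hode htop (hsub hz)
      (hloc.hasDerivAt_eq_zero (hP z (hsub hz)))).le
  obtain ⟨y, hy⟩ := Set.nonempty_Ioo.2 hx.2
  have hEq := han.eqOn_of_preconnected_of_eventuallyEq (g := fun _ => e) analyticOnNhd_const
    isPreconnected_Ioo (hsub (Set.Ioo_subset_Icc_self hy))
    (mem_of_superset (Ioo_mem_nhds hy.1 hy.2) hconst)
  obtain ⟨w, hw1, hw2⟩ := ((htop.eventually_gt_atTop e).and
    (Ioo_mem_nhdsGT (zero_lt_one' ℝ))).exists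
  exact hw1.ne' (hEq hw2)

lemma weierstrass_ode_neg (he : 0 < e) (hP : ∀ x ∈ Set.Ioo (0 : ℝ) 1, HasDerivAt P (P' x) x)
    (hode : ∀ x ∈ Set.Ioo (0 : ℝ) 1, P' x ^ 2 = 4 * P x * (P x ^ 2 - e ^ 2))
    (htop : Tendsto P (𝓝[>] 0) atTop) (han : AnalyticOnNhd ℝ P (Set.Ioo 0 1))
    (hhalf : P' (1 / 2) = 0) {x : ℝ} (hx : x ∈ Set.Ioo (0 : ℝ) (1 / 2)) : P' x < 0 := by
  have hgt := fun y hy => weierstrass_ode_gt (x := y) he hP hode htop han hhalf hy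
  have hsub : Set.Ioo (0 : ℝ) (1 / 2) ⊆ Set.Ioo (0 : ℝ) 1 :=
    Set.Ioo_subset_Ioo_right (by norm_num)
  have hne : ∀ y ∈ Set.Ioo (0 : ℝ) (1 / 2), P' y ≠ 0 := fun y hy h0 =>
    (hgt y hy).ne' (weierstrass_ode_eq_of_deriv_eq_zero he hP hode htop (hsub hy) h0)
  rcases hasDerivWithinAt_forall_lt_or_forall_gt_of_forall_ne (convex_Ioo (0 : ℝ) (1 / 2))
    (fun y hy => (hP y (hsub hy)).hasDerivWithinAt) hne with h | h
  · exact h x hx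
  have hhe := weierstrass_ode_eq_of_deriv_eq_zero he hP hode htop (x := 1 / 2) (by norm_num) hhalf
  have hI : Set.Icc x (1 / 2) ⊆ Set.Ioo (0 : ℝ) 1 := Set.Icc_subset_Ioo hx.1 (by norm_num)
  have hmono : StrictMonoOn P (Set.Icc x (1 / 2)) := by
    refine strictMonoOn_of_deriv_pos (convex_Icc _ _)
      (fun z hz => (hP z (hI hz)).continuousAt.continuousWithinAt) fun z hz => ?_
    rw [interior_Icc] at hz
    have hz2 : z ∈ Set.Ioo (0 : ℝ) (1 / 2) := ⟨hx.1.trans hz.1, hz.2⟩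
    rw [(hP z (hsub hz2)).deriv]
    exact h z hz2
  have := hmono ⟨le_rfl, hx.2.le⟩ ⟨hx.2.le, le_rfl⟩ hx.2
  exact absurd (hgt x hx) (by linarith)

/-- The half period of a lemniscatic Weierstrass function as a beta integral. -/
lemma weierstrass_ode_integral (he : 0 < e)
    (hP : ∀ x ∈ Set.Ioo (0 : ℝ) 1, HasDerivAt P (P' x) x)
    (hode : ∀ x ∈ Set.Ioo (0 : ℝ) 1, P' x ^ 2 = 4 * P x * (P x ^ 2 - e ^ 2))
    (htop : Tendsto P (𝓝[>] 0) atTop) (han : AnalyticOnNhd ℝ P (Set.Ioo 0 1))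
    (hhalf : P' (1 / 2) = 0) :
    ∫ s in Set.Ioo (0 : ℝ) 1, s ^ (-(3 / 4) : ℝ) * (1 - s) ^ (-(1 / 2) : ℝ) = 2 * √e := by
  have hgt := fun y hy => weierstrass_ode_gt (x := y) he hP hode htop han hhalf hy
  have hneg := fun y hy => weierstrass_ode_neg (x := y) he hP hode htop han hhalf hy
  have hhe := weierstrass_ode_eq_of_deriv_eq_zero he hP hode htop (x := 1 / 2) (by norm_num) hhalf
  have hsub : Set.Ioo (0 : ℝ) (1 / 2) ⊆ Set.Ioo (0 : ℝ) 1 :=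
    Set.Ioo_subset_Ioo_right (by norm_num)
  set s : ℝ → ℝ := fun x => if x ≤ 0 then 0 else (e / P x) ^ 2 with hs
  have hs_pos : ∀ x, 0 < x → s x = (e / P x) ^ 2 := fun x hx => if_neg hx.not_ge
  have hs_ev : ∀ x, 0 < x → s =ᶠ[𝓝 x] fun x => (e / P x) ^ 2 := fun x hx =>
    mem_of_superset (Ioi_mem_nhds hx) hs_pos
  have hs0 : s 0 = 0 := if_pos le_rfl
  have hs1 : s (1 / 2) = 1 := by
    rw [hs_pos _ (by norm_num), hhe, div_self he.ne', one_pow]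
  have hderiv : ∀ x ∈ Set.Ioo (0 : ℝ) 1, HasDerivAt s (-2 * e ^ 2 * P' x / P x ^ 3) x := by
    intro x hx
    have h0 : P x ≠ 0 := (he.trans_le (weierstrass_ode_ge he hP hode htop hx)).ne'
    refine HasDerivAt.congr_of_eventuallyEq ?_ (hs_ev x hx.1)
    refine (((hasDerivAt_const x e).div (hP x hx) h0).pow 2).congr_deriv ?_
    simp only [Pi.div_apply, Nat.add_one_sub_one, pow_one, zero_mul, zero_sub]
    field_simp
    norm_num [mul_comm]
  have hcont : ContinuousOn s (Set.Icc 0 (1 / 2)) := by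
    intro x hx
    rcases hx.1.eq_or_lt with rfl | h0
    · refine ContinuousWithinAt.mono (t := Set.Ici 0) ?_ Set.Icc_subset_Ici_self
      rw [← continuousWithinAt_Ioi_iff_Ici, ContinuousWithinAt, hs0]
      have h1 : Tendsto (fun x => (e / P x) ^ 2) (𝓝[>] 0) (𝓝 0) := by
        simpa using (htop.const_div_atTop e).pow 2
      exact h1.congr' (by filter_upwards [self_mem_nhdsWithin] with y hy using (hs_pos y hy).symm)
    · exact (hderiv x ⟨h0, hx.2.trans_lt (by norm_num)⟩).continuousAt.continuousWithinAt
  have hmono : StrictMonoOn s (Set.Icc 0 (1 / 2)) := by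
    refine strictMonoOn_of_deriv_pos (convex_Icc _ _) hcont fun x hx => ?_
    rw [interior_Icc] at hx
    rw [(hderiv x (hsub hx)).deriv]
    have h1 := hneg x hx
    have h2 := he.trans (hgt x hx)
    have : 0 < 2 * e ^ 2 * (-P' x) / P x ^ 3 := by
      have : 0 < -P' x := by linarith
      positivity
    linarith [show -2 * e ^ 2 * P' x / P x ^ 3 = 2 * e ^ 2 * (-P' x) / P x ^ 3 by ring]
  have himage : s '' Set.Ioo 0 (1 / 2) = Set.Ioo 0 1 := by
    refine Set.Subset.antisymm ?_ ?_
    · rintro _ ⟨x, hx, rfl⟩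
      have h1 := hmono ⟨le_rfl, by norm_num⟩ (Set.Ioo_subset_Icc_self hx) hx.1
      have h2 := hmono (Set.Ioo_subset_Icc_self hx) ⟨by norm_num, le_rfl⟩ hx.2
      rw [hs0] at h1
      rw [hs1] at h2
      exact ⟨h1, h2⟩
    · have := intermediate_value_Ioo (by norm_num) hcont
      rwa [hs0, hs1] at this
  rw [← himage, integral_image_eq_integral_abs_deriv_smul measurableSet_Ioo
    (fun x hx => (hderiv x (hsub hx)).hasDerivWithinAt)
    (hmono.injOn.mono Set.Ioo_subset_Icc_self)]
  have hval : ∀ x ∈ Set.Ioo (0 : ℝ) (1 / 2), |-2 * e ^ 2 * P' x / P x ^ 3| •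
      (s x ^ (-(3 / 4) : ℝ) * (1 - s x) ^ (-(1 / 2) : ℝ)) = 4 * √e := by
    intro x hx
    have hpe := hgt x hx
    have hp := he.trans hpe
    have hd : 0 < P x ^ 2 - e ^ 2 := by nlinarith
    have hq : P' x = -(2 * √(P x) * √(P x ^ 2 - e ^ 2)) := by
      have h1 : (-P' x) ^ 2 = (2 * √(P x) * √(P x ^ 2 - e ^ 2)) ^ 2 := by
        rw [neg_sq, hode x (hsub hx), mul_pow, mul_pow, Real.sq_sqrt hp.le, Real.sq_sqrt hd.le]
        ring
      have h2 := (sq_eq_sq₀ (by linarith [hneg x hx]) (by positivity)).1 h1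
      linarith
    have ha : (1 - s x) ^ (-(1 / 2) : ℝ) = P x / √(P x ^ 2 - e ^ 2) := by
      rw [hs_pos x hx.1, Real.rpow_neg (by
        rw [div_pow, sub_nonneg, div_le_one (by positivity)]; linarith), ← Real.sqrt_eq_rpow,
        show 1 - (e / P x) ^ 2 = (P x ^ 2 - e ^ 2) / P x ^ 2 by field_simp,
        Real.sqrt_div hd.le, Real.sqrt_sq hp.le, inv_div]
    have hb : s x ^ (-(3 / 4) : ℝ) = P x * √(P x) / (e * √e) := by
      have hep : 0 < e / P x := by positivity
      rw [hs_pos x hx.1, ← Real.rpow_natCast, ← Real.rpow_mul hep.le,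
        show ((2 : ℕ) : ℝ) * -(3 / 4) = -(1 + 1 / 2) by norm_num, Real.rpow_neg hep.le,
        Real.rpow_add hep, Real.rpow_one, ← Real.sqrt_eq_rpow, Real.sqrt_div he.le]
      field_simp
    have hsp := Real.sqrt_pos.2 hp
    have hse := Real.sqrt_pos.2 he
    have hsd := Real.sqrt_pos.2 hd
    rw [ha, hb, hq, show -2 * e ^ 2 * -(2 * √(P x) * √(P x ^ 2 - e ^ 2)) / P x ^ 3
      = 4 * e ^ 2 * √(P x) * √(P x ^ 2 - e ^ 2) / P x ^ 3 by ring, abs_of_pos (by positivity),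
      smul_eq_mul]
    field_simp
    rw [Real.sq_sqrt hp.le, Real.sq_sqrt he.le]
    ring
  rw [setIntegral_congr_fun measurableSet_Ioo hval]
  simp
  ring

end WeierstrassODE

lemma ofReal_notMem_gaussPair_lattice {x : ℝ} (hx : x ∈ Set.Ioo (0 : ℝ) 1) :
    (x : ℂ) ∉ gaussPair.lattice := by
  rw [PeriodPair.mem_lattice]
  rintro ⟨m, n, h⟩
  have h1 := congrArg Complex.re h
  simp [gaussPair] at h1
  rw [← h1] at hx
  have h2 : (0 : ℤ) < m := by exact_mod_cast hx.1
  have h3 : m < (1 : ℤ) := by exact_mod_cast hx.2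
  omega

lemma gaussPair_weierstrassP_ofReal (x : ℝ) :
    ((gaussPair.weierstrassP x).re : ℂ) = gaussPair.weierstrassP x := by
  refine Complex.conj_eq_iff_re.1 (conj_eq_of_hasSum_gaussPair
    (f := fun l => 1 / ((x : ℂ) - l) ^ 2 - 1 / l ^ 2) (fun z => by simp) ?_)
  exact gaussPair.hasSum_weierstrassP x

lemma gaussPair_derivWeierstrassP_ofReal (x : ℝ) :
    ((gaussPair.derivWeierstrassP x).re : ℂ) = gaussPair.derivWeierstrassP x := by
  refine Complex.conj_eq_iff_re.1 (conj_eq_of_hasSum_gaussPair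
    (f := fun l => -2 / ((x : ℂ) - l) ^ 3) (fun z => by simp [map_ofNat]) ?_)
  exact gaussPair.hasSum_derivWeierstrassP x

lemma tendsto_re_gaussPair_weierstrassP :
    Tendsto (fun x : ℝ => (gaussPair.weierstrassP x).re) (𝓝[>] 0) atTop := by
  have h1 : Tendsto (fun x : ℝ => (gaussPair.weierstrassPExcept 0 x).re) (𝓝[>] 0)
      (𝓝 (gaussPair.weierstrassPExcept 0 0).re) := by
    have h := (gaussPair.analyticAt_weierstrassPExcept 0).continuousAt.tendsto
    have h2 : Tendsto (fun x : ℝ => (x : ℂ)) (𝓝[>] 0) (𝓝 0) :=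
      (Complex.continuous_ofReal.tendsto 0).mono_left nhdsWithin_le_nhds
    exact (Complex.continuous_re.tendsto _).comp (h.comp h2)
  have h2 : Tendsto (fun x : ℝ => (x ^ 2)⁻¹) (𝓝[>] 0) atTop :=
    tendsto_inv_nhdsGT_zero.comp (tendsto_nhdsWithin_iff.2
      ⟨by simpa using ((continuous_pow 2).tendsto (0 : ℝ)).mono_left nhdsWithin_le_nhds,
        by filter_upwards [self_mem_nhdsWithin] with x (hx : 0 < x) using pow_pos hx 2⟩)
  refine (h1.add_atTop h2).congr fun x => ?_
  have := gaussPair.weierstrassPExcept_def 0 x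
  simp only [ZeroMemClass.coe_zero, sub_zero] at this
  rw [this]
  simp [← Complex.ofReal_pow, ← Complex.ofReal_inv, -Complex.inv_re]

lemma integral_rpow_mul_one_sub_rpow :
    ∫ s in Set.Ioo (0 : ℝ) 1, s ^ (-(3 / 4) : ℝ) * (1 - s) ^ (-(1 / 2) : ℝ)
      = Real.Gamma (1 / 4) ^ 2 / √(2 * π) := by
  have h := ProbabilityTheory.beta_eq_betaIntegralReal (1 / 4) (1 / 2) (by norm_num) (by norm_num)
  have hB : ((∫ s in Set.Ioo (0 : ℝ) 1, s ^ (-(3 / 4) : ℝ) * (1 - s) ^ (-(1 / 2) : ℝ) : ℝ) : ℂ)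
      = Complex.betaIntegral ((1 / 4 : ℝ) : ℂ) ((1 / 2 : ℝ) : ℂ) := by
    rw [Complex.betaIntegral, intervalIntegral.integral_of_le zero_le_one,
      integral_Ioc_eq_integral_Ioo, ← integral_complex_ofReal]
    refine setIntegral_congr_fun measurableSet_Ioo fun s hs => ?_
    have h1 : 0 ≤ 1 - s := by linarith [hs.2]
    push_cast [Complex.ofReal_cpow hs.1.le, Complex.ofReal_cpow h1]
    norm_num
  rw [← hB, Complex.ofReal_re] at h
  rw [← h, ProbabilityTheory.beta, Real.Gamma_one_half_eq]
  have h3 := Real.Gamma_mul_Gamma_one_sub (1 / 4)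
  rw [show π * (1 / 4) = π / 4 by ring, Real.sin_pi_div_four,
    show (1 : ℝ) - 1 / 4 = 1 / 4 + 1 / 2 by norm_num] at h3
  have h4 : 0 < Real.Gamma (1 / 4 + 1 / 2) := Real.Gamma_pos_of_pos (by norm_num)
  have h5 := Real.sq_sqrt Real.pi_pos.le
  have h6 := Real.sq_sqrt zero_le_two
  rw [Real.sqrt_mul zero_le_two]
  set g := Real.Gamma (1 / 4 + 1 / 2)
  rw [div_eq_div_iff h4.ne' (by positivity)]
  have h7 : Real.Gamma (1 / 4) * g * √2 = 2 * π := by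
    rw [h3]; field_simp
  linear_combination Real.Gamma (1 / 4) * √2 * h5 - Real.Gamma (1 / 4) * (√2 / 2) * h7
    + Real.Gamma (1 / 4) ^ 2 * g / 2 * h6

lemma gaussPair_G_four :
    gaussPair.G 4 = (Real.Gamma (1 / 4) ^ 8 / (960 * π ^ 2) : ℝ) := by
  obtain ⟨r, hr, hG⟩ := exists_gaussPair_G_four
  have he : 0 < √(15 * r) := by positivity
  have hesq : √(15 * r) ^ 2 = 15 * r := Real.sq_sqrt (by positivity)
  have h := weierstrass_ode_integral (P := fun x : ℝ => (gaussPair.weierstrassP x).re)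
    (P' := fun x : ℝ => (gaussPair.derivWeierstrassP x).re) he ?_ ?_
    tendsto_re_gaussPair_weierstrassP ?_ ?_
  · rw [integral_rpow_mul_one_sub_rpow] at h
    have h1 : (Real.Gamma (1 / 4) ^ 2 / √(2 * π)) ^ 4 = 16 * (15 * r) := by
      rw [h, mul_pow, show √√(15 * r) ^ 4 = (√√(15 * r) ^ 2) ^ 2 by ring, Real.sq_sqrt he.le, hesq]
      norm_num
    rw [div_pow, show √(2 * π) ^ 4 = (√(2 * π) ^ 2) ^ 2 by ring,
      Real.sq_sqrt (by positivity)] at h1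
    rw [hG]
    congr 1
    field_simp at h1 ⊢
    linear_combination -h1
  · intro x hx
    have h1 := (gaussPair.differentiableOn_weierstrassP).differentiableAt
      (gaussPair.isClosed_lattice.isOpen_compl.mem_nhds (ofReal_notMem_gaussPair_lattice hx))
    have h2 := h1.hasDerivAt
    rw [PeriodPair.deriv_weierstrassP] at h2
    exact h2.real_of_complex
  · intro x hx
    have h1 := gaussPair.derivWeierstrassP_sq x (ofReal_notMem_gaussPair_lattice hx)
    rw [gaussPair_g₃, PeriodPair.g₂, hG, ← gaussPair_weierstrassP_ofReal,
      ← gaussPair_derivWeierstrassP_ofReal] at h1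
    rw [hesq]
    have h2 : (gaussPair.derivWeierstrassP x).re ^ 2 = 4 * (gaussPair.weierstrassP x).re ^ 3
      - 60 * r * (gaussPair.weierstrassP x).re := by
      exact_mod_cast h1.trans (sub_zero _)
    rw [h2]
    ring
  · intro x hx
    have h1 := (gaussPair.analyticOnNhd_weierstrassP x
      (ofReal_notMem_gaussPair_lattice hx)).restrictScalars (𝕜 := ℝ)
    exact (Complex.reCLM.analyticAt _).comp (h1.comp (Complex.ofRealCLM.analyticAt x))
  · have h1 := gaussPair.derivWeierstrassP_add_coe (-(1 / 2))
      ⟨gaussPair.ω₁, gaussPair.ω₁_mem_lattice⟩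
    rw [PeriodPair.derivWeierstrassP_neg] at h1
    have h2 : (-(1 / 2) : ℂ) + gaussPair.ω₁ = ((1 / 2 : ℝ) : ℂ) := by
      simp [gaussPair]; norm_num
    have h3 : (1 / 2 : ℂ) = ((1 / 2 : ℝ) : ℂ) := by norm_num
    simp only [h2] at h1
    rw [h3] at h1
    have h4 := congrArg Complex.re h1
    rw [Complex.neg_re] at h4
    linarith

theorem stmt_18 :
    ∫ k in (0:ℝ)..(1:ℝ), k * (4 + k^2 - k^4) * (EllK' k)^7
      = 3 * Real.Gamma (1/4) ^ 16 / (2^12 * 5 * π^4) := by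
  have h := seven_mul_G_eight gaussPair
  rw [gaussPair_G_four] at h
  have h8 : (gaussPair.G 8).re = 3 / 7 * (Real.Gamma (1 / 4) ^ 8 / (960 * π ^ 2)) ^ 2 := by
    have h1 : gaussPair.G 8 =
        ((3 / 7 * (Real.Gamma (1 / 4) ^ 8 / (960 * π ^ 2)) ^ 2 : ℝ) : ℂ) := by
      push_cast at h ⊢
      linear_combination h / 7
    rw [h1, Complex.ofReal_re]
  rw [integral_EllK'_eq, integral_pow_mul_thBracket, h8]
  field_simp
  norm_num
end
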